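/- arXiv:0811.2251 — 2 statements merged into one kernel-verified Lean document; each statement's English description precedes it below -/
import Mathlib

section
/- Let n ≥ 2. For each j = 1, …, n let T_{j,1}, …, T_{j,A(j)} be finitely many unit cylinders in ℝ^n, and let v_{j,a} be a unit vector parallel to the core of T_{j,a}. Assume the families are quantitatively transverse: for every choice of indices a_1, …, a_n, the determinant of the matrix with columns v_{1,a_1}, v_{2,a_2}, …, v_{n,a_n} has absolute value at least θ, where θ > 0. Then ∫_{ℝ^n} [ ∏_{j=1}^n ( ∑_{a=1}^{A(j)} χ_{T_{j,a}}(x) ) ]^{1/(n-1)} dx ≤ C(n) θ^{-1/(n-1)} ∏_{j=1}^n A(j)^{1/(n-1)}, where C(n) is a constant depending only on n and the integral is with respect to Lebesgue measure. -/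
open MeasureTheory
open scoped ENNReal

/-- The cylinder of radius `r` around the line through `p` with direction `v`. -/
noncomputable def cylinder {n : ℕ} (p v : EuclideanSpace ℝ (Fin n)) (r : ℝ) :
    Set (EuclideanSpace ℝ (Fin n)) :=
  {x | Metric.infDist x {y | ∃ t : ℝ, y = p + t • v} ≤ r}

/-!
Weight each cell of side comparable to one by the integrand `w`. Composing the map of all monomials
of degree at most `R` in each variable with a linear automorphism of its target `ℝ^N`,
`N = (R + 1)^n`, and normalizing gives a map `Φ` to the unit sphere whose image of the weighted
cells is nearly isotropic: every unit vector `b` has `∫ ⟪b, Φ⟫² ≲ (∑ w) / N`. By Crofton's formula,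
the length of the `Φ`-image of a line is at most a constant times `n R`, since a nonzero polynomial
of degree at most `n R` on the line has at most that many roots.

In a cell, give each direction `v` the weight `W v`, the mean length of the `Φ`-image of segments
parallel to `v`. On a positive proportion of the cell `Φ` is almost constant on the parallelepiped
with sides `(ε / W (v j)) • v j`. Isotropy with `b = Φ x` then bounds `w` times the volume of that
parallelepiped, which gives `w |det v| ≲ (∑ w) / N * ∏ W (v j)` in that cell. Summing along a
tube, the weights `W (v j)` add up to at most a constant times `R`, so Hölder's inequality over
the cells, with the factors of `R` cancelling against `N ≥ R^n`, bounds `(∑ w)^(n - 1)`.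
-/

namespace MultilinearKakeya

open Set
open scoped Finset RealInnerProductSpace

section Crofton

open ProbabilityTheory

lemma ofReal_mul_le_gaussianReal_Icc {μ r a b : ℝ} {v : NNReal} (hv : v ≠ 0)
    (h : ∀ x ∈ Icc a b, |x - μ| ≤ r) :
    ENNReal.ofReal (gaussianPDFReal μ v (μ + r) * (b - a)) ≤ gaussianReal μ v (Icc a b) := by
  rw [gaussianReal_apply _ hv, ENNReal.ofReal_mul (gaussianPDFReal_nonneg _ _ _),
    ← Real.volume_Icc, ← setLIntegral_const]
  refine setLIntegral_mono' measurableSet_Icc fun x hx ↦ ENNReal.ofReal_le_ofReal ?_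
  have : (x - μ) ^ 2 ≤ (μ + r - μ) ^ 2 := sq_le_sq.2 (by simpa using (h x hx).trans (le_abs_self r))
  unfold gaussianPDFReal
  gcongr

variable {F : Type*} [NormedAddCommGroup F] [InnerProductSpace ℝ F]

lemma inner_mul_inner_neg_of_abs_inner_add_lt {a u v : F} (h : |⟪u + v, a⟫| < |⟪u - v, a⟫|) :
    ⟪a, u⟫ * ⟪a, v⟫ < 0 := by
  have := sq_lt_sq.2 h
  rw [inner_add_left, inner_sub_left, real_inner_comm a u, real_inner_comm a v] at this
  linarith

variable [FiniteDimensional ℝ F] [MeasurableSpace F] [BorelSpace F]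

lemma map_inner_stdGaussian (u : F) :
    (stdGaussian F).map (⟪u, ·⟫) = (gaussianReal 0 1).map (‖u‖ * ·) := by
  have h := IsGaussian.map_eq_gaussianReal (μ := stdGaussian F) (innerSL ℝ u)
  rw [variance_dual_stdGaussian, integral_strongDual_stdGaussian, innerSL_apply_norm] at h
  rw [gaussianReal_map_const_mul, mul_zero, mul_one]
  exact h.trans (congrArg _ (NNReal.eq (by simp)))

lemma indepFun_inner_stdGaussian {u v : F} (h : ⟪u, v⟫ = 0) :
    IndepFun (⟪u, ·⟫) (⟪v, ·⟫) (stdGaussian F) := by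
  apply HasGaussianLaw.indepFun_of_covariance_eq_zero
  · simpa using (IsGaussian.hasGaussianLaw_id (μ := stdGaussian F)).map_fun
      ((innerSL ℝ u).prod (innerSL ℝ v))
  · rwa [← covarianceBilin_apply_eq_cov IsGaussian.memLp_two_id, covarianceBilin_stdGaussian]

/-- The constant with which the Gaussian probability that a random hyperplane separates two unit
vectors dominates their distance. -/
noncomputable def croftonConst : ℝ := gaussianPDFReal 0 1 2 ^ 2 / 4

lemma croftonConst_pos : 0 < croftonConst := by
  have := gaussianPDFReal_pos 0 1 2 one_ne_zero
  unfold croftonConst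
  positivity

lemma ofReal_le_stdGaussian_abs_inner_lt {w : F} {d : ℝ} (hw : ‖w‖ ≤ 2) (hd₀ : 0 < d) (hd : d ≤ 2) :
    ENNReal.ofReal (gaussianPDFReal 0 1 2 * (d / 4)) ≤ stdGaussian F {a | |⟪w, a⟫| < d} := by
  have hm : MeasurableSet {x : ℝ | |x| < d} := measurableSet_lt (by fun_prop) (by fun_prop)
  calc ENNReal.ofReal (gaussianPDFReal 0 1 2 * (d / 4))
      ≤ gaussianReal 0 1 (Icc 0 (d / 4)) := by
        simpa using ofReal_mul_le_gaussianReal_Icc (μ := 0) (r := 2) (a := 0) (b := d / 4)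
          one_ne_zero fun x hx ↦ by rw [sub_zero, abs_of_nonneg hx.1]; linarith [hx.2]
    _ ≤ gaussianReal 0 1 ((‖w‖ * ·) ⁻¹' {x | |x| < d}) := by
        refine measure_mono fun x ⟨hx₀, hx⟩ ↦ ?_
        simp only [mem_preimage, mem_ofPred_eq, abs_mul, abs_norm, abs_of_nonneg hx₀]
        nlinarith
    _ = stdGaussian F {a | |⟪w, a⟫| < d} := by
        rw [← Measure.map_apply (by fun_prop) hm, ← map_inner_stdGaussian,
          Measure.map_apply (by fun_prop) hm]
        rfl

lemma ofReal_le_stdGaussian_norm_le_abs_inner (w : F) :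
    ENNReal.ofReal (gaussianPDFReal 0 1 2) ≤ stdGaussian F {a | ‖w‖ ≤ |⟪w, a⟫|} := by
  have hm : MeasurableSet {x : ℝ | ‖w‖ ≤ |x|} := measurableSet_le (by fun_prop) (by fun_prop)
  calc ENNReal.ofReal (gaussianPDFReal 0 1 2)
      ≤ gaussianReal 0 1 (Icc 1 2) := by
        refine le_trans (le_of_eq (by norm_num)) (ofReal_mul_le_gaussianReal_Icc (μ := 0) (r := 2)
          (a := 1) (b := 2) one_ne_zero fun x hx ↦ ?_)
        rw [sub_zero, abs_of_nonneg (zero_le_one.trans hx.1)]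
        exact hx.2
    _ ≤ gaussianReal 0 1 ((‖w‖ * ·) ⁻¹' {x | ‖w‖ ≤ |x|}) := by
        refine measure_mono fun x hx ↦ ?_
        simp only [mem_preimage, mem_ofPred_eq, abs_mul, abs_norm]
        exact le_mul_of_one_le_right (norm_nonneg w) (hx.1.trans (le_abs_self x))
    _ = stdGaussian F {a | ‖w‖ ≤ |⟪w, a⟫|} := by
        rw [← Measure.map_apply (by fun_prop) hm, ← map_inner_stdGaussian,
          Measure.map_apply (by fun_prop) hm]
        rfl

/- For unit vectors `u + v ⊥ u - v`, so `⟪u + v, a⟫` and `⟪u - v, a⟫` are independent; the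
hyperplane `aᗮ` separates `u` from `v` as soon as the first is the smaller in absolute value. -/
lemma ofReal_mul_norm_sub_le_stdGaussian {u v : F} (hu : ‖u‖ = 1) (hv : ‖v‖ = 1) :
    ENNReal.ofReal (croftonConst * ‖u - v‖) ≤ stdGaussian F {a | ⟪a, u⟫ * ⟪a, v⟫ < 0} := by
  obtain rfl | huv := eq_or_ne u v
  · simp
  have hpos : 0 < ‖u - v‖ := norm_pos_iff.2 (sub_ne_zero.2 huv)
  have hsub : ‖u - v‖ ≤ 2 := (norm_sub_le u v).trans (by linarith)
  have hadd : ‖u + v‖ ≤ 2 := (norm_add_le u v).trans (by linarith)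
  have hind : IndepFun (⟪u + v, ·⟫) (⟪u - v, ·⟫) (stdGaussian F) :=
    indepFun_inner_stdGaussian (by rw [real_inner_add_sub_eq_zero_iff, hu, hv])
  have hφ := gaussianPDFReal_nonneg 0 1 2
  calc ENNReal.ofReal (croftonConst * ‖u - v‖)
      = ENNReal.ofReal (gaussianPDFReal 0 1 2 * (‖u - v‖ / 4)) *
          ENNReal.ofReal (gaussianPDFReal 0 1 2) := by
        rw [← ENNReal.ofReal_mul (by positivity), croftonConst]
        ring_nf
    _ ≤ stdGaussian F {a | |⟪u + v, a⟫| < ‖u - v‖} *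
          stdGaussian F {a | ‖u - v‖ ≤ |⟪u - v, a⟫|} :=
        mul_le_mul' (ofReal_le_stdGaussian_abs_inner_lt hadd hpos hsub)
          (ofReal_le_stdGaussian_norm_le_abs_inner _)
    _ = stdGaussian F ({a | |⟪u + v, a⟫| < ‖u - v‖} ∩ {a | ‖u - v‖ ≤ |⟪u - v, a⟫|}) :=
        (hind.measure_inter_preimage_eq_mul {x | |x| < ‖u - v‖} {x | ‖u - v‖ ≤ |x|}
          (measurableSet_lt (by fun_prop) (by fun_prop))
          (measurableSet_le (by fun_prop) (by fun_prop))).symm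
    _ ≤ stdGaussian F {a | ⟪a, u⟫ * ⟪a, v⟫ < 0} :=
        measure_mono fun _ h ↦ inner_mul_inner_neg_of_abs_inner_add_lt (h.1.trans_le h.2)

end Crofton

section SignChanges

open ProbabilityTheory Polynomial

/-- `g` changes sign at most `K` times: along every monotone sequence, at most `K` consecutive pairs
of values of `g` have opposite signs. -/
def SignChangesLE (g : ℝ → ℝ) (K : ℕ) : Prop :=
  ∀ (m : ℕ) (u : ℕ → ℝ), Monotone u → #{i ∈ Finset.range m | g (u i) * g (u (i + 1)) < 0} ≤ K

variable {g c : ℝ → ℝ} {K L : ℕ}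

lemma SignChangesLE.mono (hg : SignChangesLE g K) (hKL : K ≤ L) : SignChangesLE g L :=
  fun m u hu ↦ (hg m u hu).trans hKL

lemma SignChangesLE.pos_mul (hg : SignChangesLE g K) (hc : ∀ t, 0 < c t) :
    SignChangesLE (fun t ↦ c t * g t) K := fun m u hu ↦ by
  have hsign (s t : ℝ) : c s * g s * (c t * g t) < 0 ↔ g s * g t < 0 := by
    rw [mul_mul_mul_comm, ← smul_eq_mul, smul_neg_iff_of_pos_left (mul_pos (hc s) (hc t))]
  simpa only [hsign] using hg m u hu

/- Every sign change traps a root, and the roots trapped by different sign changes are distinct. -/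
lemma signChangesLE_eval (p : ℝ[X]) : SignChangesLE (fun t ↦ p.eval t) p.natDegree := by
  intro m u hu
  obtain rfl | hp := eq_or_ne p 0
  · simp
  have hroot (i : ℕ) (hi : p.eval (u i) * p.eval (u (i + 1)) < 0) :
      ∃ x ∈ Ioo (u i) (u (i + 1)), p.eval x = 0 := by
    have hcont := p.continuous.continuousOn (s := Icc (u i) (u (i + 1)))
    obtain ⟨h₁, h₂⟩ | ⟨h₁, h₂⟩ := mul_neg_iff.1 hi
    · exact intermediate_value_Ioo' (hu i.le_succ) hcont ⟨h₂, h₁⟩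
    · exact intermediate_value_Ioo (hu i.le_succ) hcont ⟨h₁, h₂⟩
  choose! x hx hx₀ using hroot
  have hlt {i j : ℕ} (hij : i < j) (hi : p.eval (u i) * p.eval (u (i + 1)) < 0)
      (hj : p.eval (u j) * p.eval (u (j + 1)) < 0) : x i < x j :=
    (hx i hi).2.trans_le ((hu hij).trans (hx j hj).1.le)
  refine (Finset.card_le_card_of_injOn x (t := p.roots.toFinset) (fun i hi ↦ ?_)
    fun i hi j hj hij ↦ ?_).trans ((Multiset.toFinset_card_le _).trans p.card_roots')
  · simpa [hp] using hx₀ i (Finset.mem_filter.1 hi).2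
  · replace hi := (Finset.mem_filter.1 hi).2
    replace hj := (Finset.mem_filter.1 hj).2
    obtain h | h | h := lt_trichotomy i j
    exacts [absurd hij (hlt h hi hj).ne, h, absurd hij (hlt h hj hi).ne']

/- Crofton's argument: the length of an inscribed polygon is at most a constant times the Gaussian
average over `a` of the number of its edges crossing `aᗮ`. -/
lemma eVariationOn_le_of_signChangesLE {F : Type*} [NormedAddCommGroup F] [InnerProductSpace ℝ F]
    [FiniteDimensional ℝ F] {γ : ℝ → F} (hγ : ∀ t, ‖γ t‖ = 1)
    (h : ∀ a, SignChangesLE (fun t ↦ ⟪a, γ t⟫) K) (s : Set ℝ) :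
    eVariationOn γ s ≤ K / ENNReal.ofReal croftonConst := by
  borelize F
  refine iSup_le fun ⟨m, u, hu, _⟩ ↦ ?_
  rw [ENNReal.le_div_iff_mul_le (.inl (by simpa using croftonConst_pos)) (.inl (by simp)),
    Finset.sum_mul]
  have hmeas (i : ℕ) : MeasurableSet {a | ⟪a, γ (u i)⟫ * ⟪a, γ (u (i + 1))⟫ < 0} :=
    measurableSet_lt (by fun_prop) (by fun_prop)
  calc ∑ i ∈ Finset.range m, edist (γ (u (i + 1))) (γ (u i)) * ENNReal.ofReal croftonConst
      ≤ ∑ i ∈ Finset.range m, stdGaussian F {a | ⟪a, γ (u i)⟫ * ⟪a, γ (u (i + 1))⟫ < 0} := by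
        refine Finset.sum_le_sum fun i _ ↦ ?_
        rw [edist_comm, edist_dist, dist_eq_norm, mul_comm,
          ← ENNReal.ofReal_mul croftonConst_pos.le]
        exact ofReal_mul_norm_sub_le_stdGaussian (hγ _) (hγ _)
    _ = ∫⁻ a, #{i ∈ Finset.range m | ⟪a, γ (u i)⟫ * ⟪a, γ (u (i + 1))⟫ < 0} ∂stdGaussian F := by
        simp_rw [← lintegral_indicator_one (hmeas _)]
        rw [← lintegral_finsetSum _ fun i _ ↦ measurable_one.indicator (hmeas i)]
        simp [indicator_apply]
    _ ≤ ∫⁻ _, K ∂stdGaussian F := lintegral_mono fun a ↦ Nat.cast_le.2 (h a m u hu)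
    _ = K := by simp

end SignChanges

section IsotropicPosition

open Filter Module Metric
open scoped Topology InnerProduct

variable {V : Type*} [NormedAddCommGroup V] [InnerProductSpace ℝ V]

section Sphere

variable [MeasurableSpace V] [BorelSpace V] {μ : Measure (sphere (0 : V) 1)} [IsFiniteMeasure μ]

lemma tendsto_measure_abs_inner_le (b : V) :
    Tendsto (fun k : ℕ ↦ μ {x | |⟪b, x⟫| ≤ 1 / ((k : ℝ) + 1)}) atTop (𝓝 (μ {x | ⟪b, x⟫ = 0})) := by
  have hset : {x : sphere (0 : V) 1 | ⟪b, x⟫ = 0} =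
      ⋂ k : ℕ, {x : sphere (0 : V) 1 | |⟪b, x⟫| ≤ 1 / ((k : ℝ) + 1)} := by
    ext x
    simp only [mem_iInter, mem_ofPred_eq]
    refine ⟨fun h k ↦ by rw [h, abs_zero]; positivity, fun h ↦ ?_⟩
    by_contra hne
    obtain ⟨k, hk⟩ := exists_nat_one_div_lt (abs_pos.2 hne)
    exact (h k).not_gt hk
  rw [hset]
  refine tendsto_measure_iInter_atTop
    (fun k ↦ (isClosed_le (by fun_prop) (by fun_prop)).measurableSet.nullMeasurableSet)
    (fun k l hkl x (hx : |⟪b, (x : V)⟫| ≤ _) ↦ hx.trans (Nat.one_div_le_one_div hkl))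
    ⟨0, measure_ne_top _ _⟩

lemma exists_forall_measure_abs_inner_le (hμ : ∀ b : V, b ≠ 0 → μ {x | ⟪b, x⟫ = 0} = 0) {K : Set V}
    (hK : IsCompact K) (h₀ : 0 ∉ K) {ε : ℝ≥0∞} (hε : 0 < ε) :
    ∃ δ > 0, ∀ b ∈ K, μ {x | |⟪b, x⟫| ≤ δ} ≤ ε := by
  refine hK.induction_on (p := fun s ↦ ∃ δ > 0, ∀ b ∈ s, μ {x | |⟪b, x⟫| ≤ δ} ≤ ε)
    ⟨1, one_pos, by simp⟩ (fun s t hst ⟨δ, hδ, h⟩ ↦ ⟨δ, hδ, fun b hb ↦ h b (hst hb)⟩)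
    (fun s t ⟨δ, hδ, h⟩ ⟨δ', hδ', h'⟩ ↦ ⟨min δ δ', lt_min hδ hδ', fun b hb ↦ ?_⟩) fun b hb ↦ ?_
  · obtain hb | hb := hb
    · exact le_trans (measure_mono fun x hx ↦ le_trans (mem_ofPred.1 hx) (min_le_left _ _))
        (h b hb)
    · exact le_trans (measure_mono fun x hx ↦ le_trans (mem_ofPred.1 hx) (min_le_right _ _))
        (h' b hb)
  · have hlim := tendsto_measure_abs_inner_le (μ := μ) b
    rw [hμ b fun h ↦ h₀ (h ▸ hb)] at hlim
    obtain ⟨k, hk⟩ := (hlim.eventually (gt_mem_nhds hε)).exists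
    have hr : 0 < 1 / ((k : ℝ) + 1) / 2 := by positivity
    refine ⟨ball b (1 / ((k : ℝ) + 1) / 2), mem_nhdsWithin_of_mem_nhds (ball_mem_nhds _ hr), _, hr,
      fun b' hb' ↦ (measure_mono fun x hx ↦ ?_).trans hk.le⟩
    have hdiff : |⟪b - b', (x : V)⟫| ≤ ‖b - b'‖ := by
      simpa using abs_real_inner_le_norm (b - b') (x : V)
    rw [mem_ball, dist_comm, dist_eq_norm] at hb'
    rw [mem_ofPred_eq] at hx
    calc |⟪b, (x : V)⟫| = |⟪b - b', (x : V)⟫ + ⟪b', (x : V)⟫| := by rw [inner_sub_left]; ring_nf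
      _ ≤ |⟪b - b', (x : V)⟫| + |⟪b', (x : V)⟫| := abs_add_le _ _
      _ ≤ 1 / ((k : ℝ) + 1) := by linarith

end Sphere

lemma abs_det_le_prod_norm {ι : Type*} [Fintype ι] (b : OrthonormalBasis ι ℝ V) (T : V →ₗ[ℝ] V) :
    |T.det| ≤ ∏ i, ‖T (b i)‖ := by
  classical
  have : Fact (finrank ℝ V = Fintype.card ι) := ⟨finrank_eq_card_basis b.toBasis⟩
  let b' := b.reindex (Fintype.equivFin ι)
  have hle := b'.toBasis.orientation.abs_volumeForm_apply_le (T ∘ b')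
  rw [Orientation.volumeForm_robust' _ b', ← b'.coe_toBasis, Basis.det_comp, Basis.det_self,
    mul_one] at hle
  refine hle.trans_eq ?_
  rw [← (Fintype.equivFin ι).prod_comp]
  simp [b']

variable [FiniteDimensional ℝ V]

lemma abs_det_le_norm_apply {T : V →L[ℝ] V} (hT : ‖T‖ ≤ 1) {w : V} (hw : ‖w‖ = 1) :
    |T.det| ≤ ‖T w‖ := by
  have hon : Orthonormal ℝ ((↑) : ({w} : Set V) → V) := by
    simpa [orthonormal_subsingleton_iff] using hw
  obtain ⟨u, b, hu, hb⟩ := hon.exists_orthonormalBasis_extension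
  have hbw : b ⟨w, hu rfl⟩ = w := by rw [hb]
  refine (abs_det_le_prod_norm b T.toLinearMap).trans ?_
  classical
  rw [Fintype.prod_eq_mul_prod_compl ⟨w, hu rfl⟩]
  refine (mul_le_of_le_one_right (norm_nonneg _) (Finset.prod_le_one (fun _ _ ↦ norm_nonneg _)
    fun i _ ↦ ?_)).trans_eq (by rw [hbw]; rfl)
  exact (T.le_opNorm _).trans (by simpa using hT)

lemma apply_ne_zero_of_det_ne_zero {T : V →L[ℝ] V} (hT : T.det ≠ 0) {x : V} (hx : x ≠ 0) :
    T x ≠ 0 :=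
  (map_ne_zero_iff T (LinearMap.equivOfDetNeZero T.toLinearMap hT).injective).2 hx

lemma det_smul (c : ℝ) (T : V →L[ℝ] V) : (c • T).det = c ^ finrank ℝ V * T.det :=
  LinearMap.det_smul c T.toLinearMap

/-- The contraction by the factor `1 / 2` in the direction of the unit vector `e`. -/
noncomputable def halfContraction (e : V) : V →L[ℝ] V :=
  (LinearMap.transvection ((-1 / 2 : ℝ) • (innerSL ℝ e).toLinearMap) e).toContinuousLinearMap

lemma halfContraction_apply (e w : V) : halfContraction e w = w - (⟪e, w⟫ / 2) • e := by
  simp only [halfContraction, LinearMap.coe_toContinuousLinearMap', LinearMap.transvection.apply]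
  simp only [LinearMap.smul_apply, ContinuousLinearMap.coe_coe, innerSL_apply_apply, smul_eq_mul]
  module

lemma det_halfContraction {e : V} (he : ‖e‖ = 1) : (halfContraction e).det = 1 / 2 := by
  rw [halfContraction, ContinuousLinearMap.det, LinearMap.coe_toContinuousLinearMap,
    LinearMap.transvection.det, LinearMap.smul_apply, ContinuousLinearMap.coe_coe,
    innerSL_apply_apply, real_inner_self_eq_norm_sq, he]
  norm_num

lemma det_halfContraction_comp {e : V} (he : ‖e‖ = 1) (T : V →L[ℝ] V) :
    (halfContraction e ∘L T).det = 1 / 2 * T.det := by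
  rw [← det_halfContraction he]
  exact LinearMap.det_comp _ _

lemma norm_sq_halfContraction {e : V} (he : ‖e‖ = 1) (w : V) :
    ‖halfContraction e w‖ ^ 2 = ‖w‖ ^ 2 - 3 / 4 * ⟪e, w⟫ ^ 2 := by
  rw [halfContraction_apply, norm_sub_sq_real, real_inner_smul_right, norm_smul, he, mul_one,
    real_inner_comm, Real.norm_eq_abs, sq_abs]
  ring

lemma log_norm_halfContraction_le {e w : V} (he : ‖e‖ = 1) (hw : w ≠ 0) :
    Real.log ‖halfContraction e w‖ ≤ Real.log ‖w‖ - 3 / 8 * (⟪e, w⟫ ^ 2 / ‖w‖ ^ 2) := by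
  have hne : halfContraction e w ≠ 0 :=
    apply_ne_zero_of_det_ne_zero (by rw [det_halfContraction he]; norm_num) hw
  have h := Real.log_le_sub_one_of_pos (x := ‖halfContraction e w‖ ^ 2 / ‖w‖ ^ 2)
    (by positivity)
  rw [Real.log_div (by simpa) (by simpa), Real.log_pow, Real.log_pow,
    norm_sq_halfContraction he, sub_div, div_self (by simpa), mul_div_assoc] at h
  push_cast at h
  linarith

lemma continuous_log_norm_apply {T : V →L[ℝ] V} (hT : T.det ≠ 0) :
    Continuous fun x : sphere (0 : V) 1 ↦ Real.log ‖T x‖ :=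
  Continuous.log (by fun_prop) fun x ↦
    norm_ne_zero_iff.2 (apply_ne_zero_of_det_ne_zero hT (ne_zero_of_mem_unit_sphere x))

variable [MeasurableSpace V] [BorelSpace V]

/-- The functional whose near-minimisers put the measure `μ` on the unit sphere in nearly isotropic
position. -/
noncomputable def isotropyDefect (μ : Measure (sphere (0 : V) 1)) (T : V →L[ℝ] V) : ℝ :=
  ∫ x, Real.log ‖T x‖ ∂μ - μ.real univ / finrank ℝ V * Real.log |T.det|

variable {μ : Measure (sphere (0 : V) 1)} [IsFiniteMeasure μ]

lemma integrable_of_continuous_sphere {g : sphere (0 : V) 1 → ℝ} (hg : Continuous g) :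
    Integrable g μ :=
  have := FiniteDimensional.proper_real V
  hg.integrable_of_hasCompactSupport (HasCompactSupport.of_compactSpace g)

lemma isotropyDefect_smul [Nontrivial V] {T : V →L[ℝ] V} (hT : T.det ≠ 0) {c : ℝ} (hc : c ≠ 0) :
    isotropyDefect μ (c • T) = isotropyDefect μ T := by
  have hlog (x : sphere (0 : V) 1) : Real.log ‖(c • T) x‖ = Real.log |c| + Real.log ‖T x‖ := by
    rw [smul_apply, norm_smul, Real.norm_eq_abs, Real.log_mul (by simpa)
      (norm_ne_zero_iff.2 (apply_ne_zero_of_det_ne_zero hT (ne_zero_of_mem_unit_sphere x)))]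
  simp only [isotropyDefect, hlog, det_smul]
  rw [integral_add (integrable_const _) (integrable_of_continuous_sphere
    (continuous_log_norm_apply hT)), integral_const, abs_mul, abs_pow,
    Real.log_mul (by simp [hc]) (by simpa), Real.log_pow, smul_eq_mul]
  have := finrank_pos (R := ℝ) (M := V)
  field_simp
  ring

lemma mul_log_le_isotropyDefect [Nontrivial V] {δ : ℝ} (hδ : 0 < δ) (hδ₁ : δ ≤ 1)
    (hbad : ∀ b ∈ closedBall (0 : V) 1 \ ball 0 (1 / 2),
      μ.real {x | |⟪b, x⟫| ≤ δ} ≤ μ.real univ / finrank ℝ V)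
    {T : V →L[ℝ] V} (hdet : T.det ≠ 0) (hT : ‖T‖ = 1) :
    μ.real univ * Real.log δ ≤ isotropyDefect μ T := by
  obtain ⟨e, he, he'⟩ := (T†).exists_lt_apply_of_lt_opNorm (r := 1 / 2) (by
    rw [LinearIsometryEquiv.norm_map, hT]; norm_num)
  set S : Set (sphere (0 : V) 1) := {x | |⟪(T†) e, x⟫| ≤ δ}
  have hS : MeasurableSet S := (isClosed_le (by fun_prop) (by fun_prop)).measurableSet
  have hTe : ‖(T†) e‖ ≤ 1 := by
    simpa [hT] using (T†).le_of_opNorm_le_of_le (LinearIsometryEquiv.norm_map _ T).le he.le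
  have hμS : μ.real S ≤ μ.real univ / finrank ℝ V :=
    hbad _ ⟨by simpa using hTe, by simpa using he'.le⟩
  have hlogdet : Real.log |T.det| ≤ 0 := by
    obtain ⟨w, hw⟩ := exists_norm_eq V zero_le_one
    refine Real.log_nonpos (abs_nonneg _) ((abs_det_le_norm_apply hT.le hw).trans ?_)
    simpa [hT, hw] using T.le_opNorm w
  have hpoint (x : sphere (0 : V) 1) :
      Real.log δ + S.indicator (fun _ ↦ Real.log |T.det|) x ≤ Real.log ‖T x‖ := by
    by_cases hx : x ∈ S
    · rw [indicator_of_mem hx]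
      have := Real.log_le_log (abs_pos.2 hdet)
        (abs_det_le_norm_apply hT.le (norm_eq_of_mem_sphere x))
      linarith [Real.log_nonpos hδ.le hδ₁]
    · rw [indicator_of_notMem hx, add_zero]
      refine Real.log_le_log hδ ((not_le.1 hx).le.trans ?_)
      rw [ContinuousLinearMap.adjoint_inner_left]
      exact (abs_real_inner_le_norm _ _).trans (mul_le_of_le_one_left (norm_nonneg _) he.le)
  have hint := integral_mono ((integrable_const (Real.log δ)).add
    ((integrable_const (Real.log |T.det|)).indicator hS)) (integrable_of_continuous_sphere (μ := μ)
      (continuous_log_norm_apply hdet)) hpoint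
  rw [integral_add' (integrable_const _) ((integrable_const _).indicator hS), integral_const,
    integral_indicator_const _ hS, smul_eq_mul, smul_eq_mul] at hint
  rw [isotropyDefect]
  linarith [mul_le_mul_of_nonpos_right hμS hlogdet]

lemma exists_forall_le_isotropyDefect [Nontrivial V]
    (hμ : ∀ b : V, b ≠ 0 → μ {x | ⟪b, x⟫ = 0} = 0) :
    ∃ c, ∀ T : V →L[ℝ] V, T.det ≠ 0 → c ≤ isotropyDefect μ T := by
  have := FiniteDimensional.proper_real V
  obtain rfl | _ := eq_zero_or_neZero μ
  · exact ⟨0, fun T _ ↦ by simp [isotropyDefect]⟩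
  have hpos : 0 < μ.real univ / finrank ℝ V :=
    div_pos (measureReal_univ_pos) (mod_cast finrank_pos)
  obtain ⟨δ, hδ, hbad⟩ := exists_forall_measure_abs_inner_le hμ
    ((isCompact_closedBall (0 : V) 1).diff (isOpen_ball (x := 0) (ε := 1 / 2))) (by simp)
    (ENNReal.ofReal_pos.2 hpos)
  refine ⟨μ.real univ * Real.log (min δ 1), fun T hT ↦ ?_⟩
  obtain ⟨w, hw⟩ := exists_ne (0 : V)
  have hT₀ : ‖T‖ ≠ 0 := norm_ne_zero_iff.2 <| by
    rintro rfl
    exact apply_ne_zero_of_det_ne_zero hT hw rfl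
  rw [← isotropyDefect_smul hT (inv_ne_zero hT₀)]
  refine mul_log_le_isotropyDefect (lt_min hδ one_pos) (min_le_right _ _) (fun b hb ↦ ?_) ?_ ?_
  · refine ENNReal.toReal_le_of_le_ofReal hpos.le ((measure_mono ?_).trans (hbad b hb))
    exact fun x (hx : |⟪b, (x : V)⟫| ≤ _) ↦ hx.trans (min_le_left _ _)
  · rw [det_smul]
    exact mul_ne_zero (pow_ne_zero _ (inv_ne_zero hT₀)) hT
  · rw [norm_smul, norm_inv, norm_norm, inv_mul_cancel₀ hT₀]

lemma integral_log_norm_halfContraction_comp_le {T : V →L[ℝ] V} (hT : T.det ≠ 0) {e : V}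
    (he : ‖e‖ = 1) :
    ∫ x, Real.log ‖(halfContraction e ∘L T) x‖ ∂μ ≤
      ∫ x, Real.log ‖T x‖ ∂μ - 3 / 8 * ∫ x, ⟪e, T x⟫ ^ 2 / ‖T x‖ ^ 2 ∂μ := by
  have hTx (x : sphere (0 : V) 1) : T x ≠ 0 :=
    apply_ne_zero_of_det_ne_zero hT (ne_zero_of_mem_unit_sphere x)
  have hcont : Continuous fun x : sphere (0 : V) 1 ↦ ⟪e, T x⟫ ^ 2 / ‖T x‖ ^ 2 :=
    Continuous.div (by fun_prop) (by fun_prop) fun x ↦ pow_ne_zero _ (norm_ne_zero_iff.2 (hTx x))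
  have hintT := integrable_of_continuous_sphere (μ := μ) (continuous_log_norm_apply hT)
  have hintq := (integrable_of_continuous_sphere (μ := μ) hcont).const_mul (3 / 8)
  have hdet : (halfContraction e ∘L T).det ≠ 0 := by simpa [det_halfContraction_comp he] using hT
  rw [← integral_const_mul, ← integral_sub hintT hintq]
  exact integral_mono (integrable_of_continuous_sphere (continuous_log_norm_apply hdet))
    (hintT.sub hintq) fun x ↦ log_norm_halfContraction_le he (hTx x)

/- A near-minimiser `T` of the isotropy defect does the job: composing it with the half contraction
along `e` cannot decrease the defect by much. -/
theorem exists_isotropic_position [Nontrivial V] (hμ : ∀ b : V, b ≠ 0 → μ {x | ⟪b, x⟫ = 0} = 0) :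
    ∃ T : V →L[ℝ] V, T.det ≠ 0 ∧ ∀ e : V, ‖e‖ = 1 →
      ∫ x, ⟪e, T x⟫ ^ 2 / ‖T x‖ ^ 2 ∂μ ≤ 3 * (μ.real univ / finrank ℝ V) := by
  obtain rfl | _ := eq_zero_or_neZero μ
  · exact ⟨1, by simp [ContinuousLinearMap.det], by simp⟩
  have hpos : 0 < μ.real univ / finrank ℝ V :=
    div_pos (measureReal_univ_pos) (mod_cast finrank_pos)
  obtain ⟨c, hc⟩ := exists_forall_le_isotropyDefect hμ
  obtain ⟨_, ⟨T, hT, rfl⟩, hmin⟩ := Real.lt_sInf_add_pos (s := isotropyDefect μ '' {T | T.det ≠ 0})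
    ⟨_, 1, by simp [ContinuousLinearMap.det], rfl⟩ (div_pos hpos four_pos)
  refine ⟨T, hT, fun e he ↦ ?_⟩
  have hdet := det_halfContraction_comp he T
  have hdet₀ : (halfContraction e ∘L T).det ≠ 0 := by simpa [hdet] using hT
  have hle : sInf (isotropyDefect μ '' {T | T.det ≠ 0}) ≤
      isotropyDefect μ (halfContraction e ∘L T) :=
    csInf_le ⟨c, forall_mem_image.2 hc⟩ (mem_image_of_mem _ hdet₀)
  have hlog := integral_log_norm_halfContraction_comp_le (μ := μ) hT he
  rw [isotropyDefect, hdet, abs_mul, Real.log_mul (by simp) (by simpa), abs_of_pos one_half_pos,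
    one_div, Real.log_inv] at hle
  rw [isotropyDefect] at hmin
  nlinarith [Real.log_two_lt_d9]

end IsotropicPosition

section PolynomialMap

open Metric Module Polynomial
open NormedSpace (normalize)

lemma measure_eq_zero_of_forall_line {V : Type*} [NormedAddCommGroup V] [NormedSpace ℝ V]
    [FiniteDimensional ℝ V] [MeasurableSpace V] [BorelSpace V] {μ : Measure V} [μ.IsAddHaarMeasure]
    {Z : Set V} (hZ : MeasurableSet Z) {x : V} (h : ∀ v, ∀ᵐ t : ℝ, x + t • v ∉ Z) : μ Z = 0 := by
  have := FiniteDimensional.proper_real V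
  have hmeas : MeasurableSet {q : V × ℝ | x + q.2 • q.1 ∉ Z} :=
    hZ.compl.preimage (f := fun q : V × ℝ ↦ x + q.2 • q.1) (by fun_prop)
  have hswap : ∀ᵐ t : ℝ, ∀ᵐ v ∂μ, x + t • v ∉ Z := (Measure.ae_ae_comm hmeas).1 (ae_of_all _ h)
  obtain ⟨t, ht, ht0⟩ := (hswap.and (Measure.ae_ne volume 0)).exists
  have hpre : μ ((t • ·) ⁻¹' ((x + ·) ⁻¹' Z)) = 0 := measure_eq_zero_iff_ae_notMem.2 ht
  rw [Measure.addHaar_preimage_smul μ ht0, measure_preimage_add] at hpre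
  simpa [ht0] using hpre

lemma continuous_normalize {X V : Type*} [TopologicalSpace X] [NormedAddCommGroup V]
    [NormedSpace ℝ V] {f : X → V} (hf : Continuous f) (hf0 : ∀ x, f x ≠ 0) :
    Continuous fun x ↦ normalize (f x) :=
  (hf.norm.inv₀ fun x ↦ norm_ne_zero_iff.2 (hf0 x)).smul hf

lemma inner_normalize {V : Type*} [NormedAddCommGroup V] [InnerProductSpace ℝ V] (x y : V) :
    ⟪x, normalize y⟫ = ‖y‖⁻¹ * ⟪x, y⟫ :=
  real_inner_smul_right ..

lemma lintegral_enorm_inner_sq {X V : Type*} [TopologicalSpace X] [MeasurableSpace X]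
    [OpensMeasurableSpace X] [NormedAddCommGroup V] [InnerProductSpace ℝ V] {ν : Measure X}
    [IsFiniteMeasure ν] (e : V) {g : X → V} (hg : Continuous g) (hg1 : ∀ x, ‖g x‖ = 1) :
    ∫⁻ x, ‖⟪e, g x⟫‖ₑ ^ 2 ∂ν = ENNReal.ofReal (∫ x, ⟪e, g x⟫ ^ 2 ∂ν) := by
  have hint : Integrable (fun x ↦ ⟪e, g x⟫ ^ 2) ν := by
    refine .of_bound (Continuous.aestronglyMeasurable (by fun_prop)) (‖e‖ ^ 2) <|
      ae_of_all _ fun x ↦ ?_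
    simpa [hg1] using pow_le_pow_left₀ (norm_nonneg _) (norm_inner_le_norm (𝕜 := ℝ) e (g x)) 2
  rw [ofReal_integral_eq_lintegral_ofReal hint (ae_of_all _ fun x ↦ sq_nonneg _)]
  simp [← enorm_pow, ← Real.enorm_of_nonneg, sq_nonneg]

lemma exists_isotropic_normalize {X V : Type*} [TopologicalSpace X] [MeasurableSpace X]
    [BorelSpace X] [NormedAddCommGroup V] [InnerProductSpace ℝ V] [FiniteDimensional ℝ V]
    [Nontrivial V] {ν : Measure X} [IsFiniteMeasure ν] {f : X → V} (hf : Continuous f)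
    (hf0 : ∀ x, f x ≠ 0) (hν : ∀ b : V, b ≠ 0 → ν {x | ⟪b, f x⟫ = 0} = 0) :
    ∃ T : V →L[ℝ] V, T.det ≠ 0 ∧ ∀ e : V, ‖e‖ = 1 →
      ∫⁻ x, ‖⟪e, normalize (T (f x))⟫‖ₑ ^ 2 ∂ν ≤ 3 * (ν univ / finrank ℝ V) := by
  borelize V
  let u (x : X) : sphere (0 : V) 1 := ⟨normalize (f x), by simp [hf0]⟩
  have hu : Measurable u := ((continuous_normalize hf hf0).subtype_mk _).measurable
  have hnull (b : V) (hb : b ≠ 0) : ν.map u {y | ⟪b, y⟫ = 0} = 0 := by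
    rw [Measure.map_apply hu (isClosed_eq (by fun_prop) (by fun_prop)).measurableSet]
    refine measure_mono_null (fun x hx ↦ ?_) (hν b hb)
    simpa [u, inner_normalize, hf0] using hx
  obtain ⟨T, hT, hiso⟩ := exists_isotropic_position hnull
  have hTf (x) : T (f x) ≠ 0 := apply_ne_zero_of_det_ne_zero hT (hf0 x)
  refine ⟨T, hT, fun e he ↦ ?_⟩
  have hTu (x) : ⟪e, T (u x)⟫ ^ 2 / ‖T (u x)‖ ^ 2 = ⟪e, normalize (T (f x))⟫ ^ 2 := by
    have hpos : 0 < ‖f x‖ := norm_pos_iff.2 (hf0 x)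
    simp only [u, NormedSpace.normalize, map_smul, real_inner_smul_right, norm_smul, norm_inv,
      norm_norm]
    field_simp
  have hmeas : Measurable fun y : sphere (0 : V) 1 ↦ ⟪e, T y⟫ ^ 2 / ‖T y‖ ^ 2 :=
    .div (Continuous.measurable (by fun_prop)) (Continuous.measurable (by fun_prop))
  have hle := hiso e he
  rw [integral_map hu.aemeasurable hmeas.aestronglyMeasurable] at hle
  simp only [hTu, measureReal_def, Measure.map_apply hu .univ, preimage_univ] at hle
  have hcont : Continuous fun x ↦ normalize (T (f x)) := continuous_normalize (by fun_prop) hTf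
  rw [lintegral_enorm_inner_sq e hcont fun x ↦ NormedSpace.norm_normalize_eq_one_iff.2 (hTf x)]
  refine (ENNReal.ofReal_le_ofReal hle).trans_eq ?_
  rw [ENNReal.ofReal_mul (by simp), ENNReal.ofReal_div_of_pos (mod_cast finrank_pos)]
  simp

variable {ι : Type*} [Fintype ι]

/-- The vector of all monomials of degree at most `D` in each variable, evaluated at `x`: a
Veronese-type map, whose components span the polynomials of degree at most `D` in each variable. -/
noncomputable def monomialVector (D : ℕ) (x : EuclideanSpace ℝ ι) :
    EuclideanSpace ℝ (ι → Fin (D + 1)) :=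
  WithLp.toLp 2 fun α ↦ ∏ i, x i ^ (α i : ℕ)

variable {D : ℕ}

lemma continuous_monomialVector : Continuous (monomialVector D : EuclideanSpace ℝ ι → _) := by
  unfold monomialVector
  fun_prop

lemma monomialVector_ne_zero (x : EuclideanSpace ℝ ι) : monomialVector D x ≠ 0 := fun h ↦ by
  simpa [monomialVector] using congrArg (fun b ↦ b 0) h

variable [DecidableEq ι]

lemma inner_monomialVector (b : EuclideanSpace ℝ (ι → Fin (D + 1))) (x : EuclideanSpace ℝ ι) :
    ⟪b, monomialVector D x⟫ = ∑ α, b α * ∏ i, x i ^ (α i : ℕ) := by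
  simp [PiLp.inner_apply, monomialVector, mul_comm]

lemma exists_polynomial_eval_eq_inner_monomialVector (b : EuclideanSpace ℝ (ι → Fin (D + 1)))
    (x v : EuclideanSpace ℝ ι) :
    ∃ p : ℝ[X], p.natDegree ≤ Fintype.card ι * D ∧
      ∀ t : ℝ, p.eval t = ⟪b, monomialVector D (x + t • v)⟫ := by
  refine ⟨∑ α, C (b α) * ∏ i, (C (v i) * X + C (x i)) ^ (α i : ℕ),
    natDegree_sum_le_of_forall_le _ _ fun α _ ↦ ?_, fun t ↦ ?_⟩
  · calc (C (b α) * ∏ i, (C (v i) * X + C (x i)) ^ (α i : ℕ)).natDegree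
        ≤ ∑ i, ((C (v i) * X + C (x i)) ^ (α i : ℕ)).natDegree :=
          (natDegree_C_mul_le _ _).trans (natDegree_prod_le _ _)
      _ ≤ ∑ _i : ι, D := by
          gcongr with i
          exact natDegree_pow_le.trans <|
            (Nat.mul_le_mul (Fin.is_le (α i)) natDegree_linear_le).trans_eq (mul_one D)
      _ = Fintype.card ι * D := by simp
  · simp [inner_monomialVector, eval_finsetSum, eval_prod, mul_comm t, add_comm]

lemma exists_inner_monomialVector_ne_zero {b : EuclideanSpace ℝ (ι → Fin (D + 1))} (hb : b ≠ 0) :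
    ∃ x, ⟪b, monomialVector D x⟫ ≠ 0 := by
  contrapose! hb
  let exponent (α : ι → Fin (D + 1)) : ι →₀ ℕ := Finsupp.equivFunOnFinite.symm fun i ↦ α i
  have hexponent : Function.Injective exponent := fun α β h ↦ funext fun i ↦
    Fin.ext (congrFun (Finsupp.equivFunOnFinite.symm.injective h) i)
  have hzero : (∑ α, MvPolynomial.monomial (exponent α) (b α)) = (0 : MvPolynomial ι ℝ) := by
    refine MvPolynomial.funext fun x ↦ ?_
    have hx := hb (WithLp.toLp 2 x)
    simpa [inner_monomialVector, MvPolynomial.eval_monomial, Finsupp.prod_fintype, exponent]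
      using hx
  ext α
  simpa [MvPolynomial.coeff_sum, MvPolynomial.coeff_monomial, hexponent.eq_iff]
    using congrArg (MvPolynomial.coeff (exponent α)) hzero

lemma volume_inner_monomialVector_eq_zero {b : EuclideanSpace ℝ (ι → Fin (D + 1))} (hb : b ≠ 0) :
    volume {x | ⟪b, monomialVector D x⟫ = 0} = 0 := by
  obtain ⟨x, hx⟩ := exists_inner_monomialVector_ne_zero hb
  refine measure_eq_zero_of_forall_line (x := x) (isClosed_eq
    (continuous_const.inner continuous_monomialVector) continuous_const).measurableSet fun v ↦ ?_
  obtain ⟨p, -, hp⟩ := exists_polynomial_eval_eq_inner_monomialVector b x v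
  have hp0 : p ≠ 0 := by
    rintro rfl
    exact hx (by simpa using (hp 0).symm)
  refine measure_mono_null (fun t ht ↦ ?_) (p.roots.toFinset.finite_toSet.measure_zero volume)
  simpa [hp0, hp] using ht

theorem exists_unit_map_of_absolutelyContinuous (D : ℕ) (ν : Measure (EuclideanSpace ℝ ι))
    [IsFiniteMeasure ν] (hν : ν ≪ volume) :
    ∃ Φ : EuclideanSpace ℝ ι → EuclideanSpace ℝ (ι → Fin (D + 1)),
      Continuous Φ ∧ (∀ x, ‖Φ x‖ = 1) ∧
      (∀ a x v, SignChangesLE (fun t ↦ ⟪a, Φ (x + t • v)⟫) (Fintype.card ι * D)) ∧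
      ∀ e, ‖e‖ = 1 → ∫⁻ x, ‖⟪e, Φ x⟫‖ₑ ^ 2 ∂ν ≤ 3 * (ν univ / (D + 1) ^ Fintype.card ι) := by
  obtain ⟨T, hT, hiso⟩ := exists_isotropic_normalize continuous_monomialVector
    monomialVector_ne_zero fun b hb ↦ hν (volume_inner_monomialVector_eq_zero (D := D) hb)
  have hTne (x) : T (monomialVector D x) ≠ 0 :=
    apply_ne_zero_of_det_ne_zero hT (monomialVector_ne_zero x)
  refine ⟨_, continuous_normalize (T.continuous.comp continuous_monomialVector) hTne,
    fun x ↦ by simp [hTne], fun a x v ↦ ?_, by simpa using hiso⟩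
  obtain ⟨p, hdeg, hp⟩ := exists_polynomial_eval_eq_inner_monomialVector (T.adjoint a) x v
  convert! ((signChangesLE_eval p).mono hdeg).pos_mul (c := fun t ↦
    ‖T (monomialVector D (x + t • v))‖⁻¹) (fun t ↦ by simp [hTne]) using 2 with t
  simp [inner_normalize, hp, ContinuousLinearMap.adjoint_inner_left]

end PolynomialMap

section SegmentVariation

open Metric

lemma natCast_mul_setLIntegral_le_of_sum_translate_le {E : Type*} [AddGroup E]
    [MeasurableSpace E] [MeasurableAdd E] {μ : Measure E} [μ.IsAddRightInvariant]
    {g G : E → ℝ≥0∞} (hg : Measurable g) {S T : Set E} (hS : MeasurableSet S)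
    (hT : MeasurableSet T) {m : ℕ} {w : E}
    (hST : ∀ i < m, ∀ x, x + i • w ∈ S → x ∈ T)
    (hgG : ∀ x, ∑ i ∈ Finset.range m, g (x + i • w) ≤ G x) :
    m * ∫⁻ x in S, g x ∂μ ≤ ∫⁻ x in T, G x ∂μ := by
  calc m * ∫⁻ x in S, g x ∂μ
      = ∑ i ∈ Finset.range m, ∫⁻ x, S.indicator g (x + i • w) ∂μ := by
        simp_rw [lintegral_add_right_eq_self, lintegral_indicator hS]
        simp
    _ = ∫⁻ x, ∑ i ∈ Finset.range m, S.indicator g (x + i • w) ∂μ :=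
        (lintegral_finsetSum _ fun i _ ↦
          (hg.indicator hS).comp (measurable_add_const _)).symm
    _ ≤ ∫⁻ x, T.indicator G x ∂μ := by
        refine lintegral_mono fun x ↦ ?_
        by_cases hx : x ∈ T
        · rw [indicator_of_mem hx]
          exact (Finset.sum_le_sum fun i _ ↦ indicator_le_self S g (x + i • w)).trans (hgG x)
        · rw [indicator_of_notMem hx, Finset.sum_eq_zero fun i hi ↦ indicator_of_notMem
            (fun h ↦ hx (hST i (Finset.mem_range.1 hi) x h)) g]
    _ = ∫⁻ x in T, G x ∂μ := lintegral_indicator hT G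

variable {E F : Type*} [NormedAddCommGroup E] [NormedSpace ℝ E] [PseudoEMetricSpace F]

/-- The variation of `Φ` along the segment from `y` to `y + v`. -/
noncomputable def segmentVariation (Φ : E → F) (v y : E) : ℝ≥0∞ :=
  eVariationOn (fun t : ℝ ↦ Φ (y + t • v)) (Icc 0 1)

variable {Φ : E → F} {v : E}

lemma sum_range_segmentVariation (Φ : E → F) (v y : E) (m : ℕ) :
    ∑ i ∈ Finset.range m, segmentVariation Φ v (y + i • v) =
      eVariationOn (fun t : ℝ ↦ Φ (y + t • v)) (Icc 0 m) := by
  have hshift (i : ℕ) : segmentVariation Φ v (y + i • v) =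
      eVariationOn (fun t : ℝ ↦ Φ (y + t • v)) (Icc i (i + 1 : ℕ)) := by
    have hcomp := eVariationOn.comp_eq_of_monotoneOn (fun t : ℝ ↦ Φ (y + t • v))
      (fun t : ℝ ↦ (i : ℝ) + t) (t := Icc 0 1) fun _ _ _ _ h ↦ add_le_add_right h _
    rw [image_const_add_Icc] at hcomp
    simpa [segmentVariation, Function.comp_def, add_smul, add_assoc, Nat.cast_smul_eq_nsmul]
      using hcomp
  simp_rw [hshift]
  simpa using eVariationOn.sum' (fun t : ℝ ↦ Φ (y + t • v)) (I := fun i : ℕ ↦ (i : ℝ))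
    Nat.mono_cast (n := m)

lemma sum_range_edist_le_segmentVariation {τ : ℝ} (hτ : 0 ≤ τ) {m : ℕ} (hm : m * τ ≤ 1) (y : E) :
    ∑ i ∈ Finset.range m, edist (Φ (y + i • (τ • v) + τ • v)) (Φ (y + i • (τ • v))) ≤
      segmentVariation Φ v y := by
  have hle := eVariationOn.sum_le_of_monotoneOn_Iic (f := fun t : ℝ ↦ Φ (y + t • v)) (n := m)
    (s := Icc 0 1) (u := fun i ↦ i * τ) (fun i _ j _ h ↦ by dsimp only; gcongr)
    fun i hi ↦ ⟨by positivity, le_trans (by gcongr) hm⟩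
  simpa [segmentVariation, add_mul, add_smul, mul_smul, add_assoc, Nat.cast_smul_eq_nsmul] using hle

variable [MeasurableSpace E] [BorelSpace E] {μ : Measure E} [μ.IsAddRightInvariant]

lemma measurable_segmentVariation (hΦ : Continuous Φ) : Measurable (segmentVariation Φ v) :=
  LowerSemicontinuous.measurable fun y _ hlt ↦ eVariationOn.lowerSemicontinuous_aux
    (F := fun z (t : ℝ) ↦ Φ (z + t • v))
    (fun t _ ↦ Continuous.tendsto (by fun_prop : Continuous fun z ↦ Φ (z + t • v)) y) hlt

lemma natCast_mul_setLIntegral_segmentVariation_le (hΦ : Continuous Φ) {B : ℝ≥0∞}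
    (hB : ∀ y, eVariationOn (fun t : ℝ ↦ Φ (y + t • v)) univ ≤ B) {S T : Set E}
    (hS : MeasurableSet S) (hT : MeasurableSet T) {m : ℕ}
    (hST : ∀ i < m, ∀ x, x + i • v ∈ S → x ∈ T) :
    m * ∫⁻ y in S, segmentVariation Φ v y ∂μ ≤ B * μ T := by
  rw [← setLIntegral_const]
  refine natCast_mul_setLIntegral_le_of_sum_translate_le (measurable_segmentVariation hΦ) hS hT hST
    fun y ↦ ?_
  rw [sum_range_segmentVariation]
  exact (eVariationOn.mono _ (subset_univ _)).trans (hB y)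

lemma setLIntegral_edist_translate_le (hΦ : Continuous Φ) (hv : ‖v‖ ≤ 1) {τ : ℝ} (hτ0 : 0 ≤ τ)
    (hτ1 : τ ≤ 1) (x : E) (r : ℝ) :
    ∫⁻ y in closedBall x r, edist (Φ (y + τ • v)) (Φ y) ∂μ ≤
      ENNReal.ofReal (2 * τ) * ∫⁻ y in closedBall x (r + 1), segmentVariation Φ v y ∂μ := by
  obtain rfl | hτ := hτ0.eq_or_lt
  · simp
  set m := ⌊τ⁻¹⌋₊
  have hm : m * τ ≤ 1 := by
    simpa [hτ.ne'] using mul_le_mul_of_nonneg_right (Nat.floor_le (inv_nonneg.2 hτ0)) hτ0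
  have hm' : 1 ≤ 2 * τ * m := by
    have hlt := Nat.lt_floor_add_one τ⁻¹
    have hone : (1 : ℝ) ≤ m := mod_cast Nat.one_le_floor_iff _ |>.2 (one_le_inv₀ hτ |>.2 hτ1)
    rw [inv_lt_iff_one_lt_mul₀ hτ] at hlt
    nlinarith
  have hST (i : ℕ) (hi : i < m) (y : E) (hy : y + i • (τ • v) ∈ closedBall x r) :
      y ∈ closedBall x (r + 1) := by
    have hnorm : ‖i • (τ • v)‖ ≤ 1 := by
      rw [← Nat.cast_smul_eq_nsmul ℝ, smul_smul, norm_smul, Real.norm_of_nonneg (by positivity)]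
      refine mul_le_one₀ (le_trans ?_ hm) (norm_nonneg v) hv
      gcongr
    have := dist_triangle_left y x (y + i • (τ • v))
    rw [dist_comm (y + _), dist_self_add_right] at this
    exact this.trans (by linarith [mem_closedBall.1 hy])
  calc ∫⁻ y in closedBall x r, edist (Φ (y + τ • v)) (Φ y) ∂μ
      ≤ ENNReal.ofReal (2 * τ * m) * ∫⁻ y in closedBall x r, edist (Φ (y + τ • v)) (Φ y) ∂μ :=
        le_mul_of_one_le_left' (by simpa using hm')
    _ = ENNReal.ofReal (2 * τ) *
          (m * ∫⁻ y in closedBall x r, edist (Φ (y + τ • v)) (Φ y) ∂μ) := by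
        rw [ENNReal.ofReal_mul (by positivity), ENNReal.ofReal_natCast, mul_assoc]
    _ ≤ ENNReal.ofReal (2 * τ) * ∫⁻ y in closedBall x (r + 1), segmentVariation Φ v y ∂μ := by
        gcongr
        exact natCast_mul_setLIntegral_le_of_sum_translate_le
          (Continuous.measurable (by fun_prop)) measurableSet_closedBall measurableSet_closedBall
          hST (sum_range_edist_le_segmentVariation hτ0 hm)

end SegmentVariation

section Cylinder

open Metric

variable {n : ℕ} {p v x y : EuclideanSpace ℝ (Fin n)} {c d : ℝ}

lemma mem_cylinder_iff : x ∈ cylinder p v c ↔ ∃ t : ℝ, dist x (p + t • v) ≤ c := by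
  set L := {y | ∃ t : ℝ, y = p + t • v} with hL
  have hLne : L.Nonempty := ⟨p, 0, by simp⟩
  have hLclosed : IsClosed L := by
    have himage : L = (p + ·) '' (ℝ ∙ v : Submodule ℝ (EuclideanSpace ℝ (Fin n))) := by
      ext y
      simp [hL, Submodule.mem_span_singleton, eq_neg_add_iff_add_eq, eq_comm (a := y)]
    rw [himage]
    exact (Homeomorph.addLeft p).isClosedMap _ (Submodule.closed_of_finiteDimensional _)
  constructor
  · intro hx
    obtain ⟨_, ⟨t, rfl⟩, ht⟩ := hLclosed.exists_infDist_eq_dist hLne x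
    exact ⟨t, ht.symm.trans_le hx⟩
  · rintro ⟨t, ht⟩
    exact (infDist_le_dist_of_mem (s := L) ⟨t, rfl⟩).trans ht

lemma measurableSet_cylinder : MeasurableSet (cylinder p v c) :=
  (isClosed_le (continuous_infDist_pt _) continuous_const).measurableSet

lemma mem_cylinder_of_dist_le (hx : x ∈ cylinder p v c) (hyx : dist y x ≤ d) :
    y ∈ cylinder p v (c + d) := by
  obtain ⟨t, ht⟩ := mem_cylinder_iff.1 hx
  exact mem_cylinder_iff.2 ⟨t, (dist_triangle y x _).trans (by linarith)⟩

lemma mem_cylinder_of_add_smul_mem {s : ℝ} (hx : x + s • v ∈ cylinder p v c) :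
    x ∈ cylinder p v c := by
  obtain ⟨t, ht⟩ := mem_cylinder_iff.1 hx
  refine mem_cylinder_iff.2 ⟨t - s, ?_⟩
  rwa [← dist_add_right x _ (s • v), add_assoc, ← add_smul, sub_add_cancel]

lemma cylinder_inter_closedBall_subset {m c : ℕ} (hv : ‖v‖ = 1) :
    cylinder p v c ∩ closedBall 0 m ⊆
      ⋃ i ∈ Finset.Icc (-(m + c : ℤ)) (m + c), closedBall (p + (i - ⟪p, v⟫) • v) (c + 1) := by
  rintro x ⟨hx, hxm⟩
  obtain ⟨t, ht⟩ := mem_cylinder_iff.1 hx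
  set u := t + ⟪p, v⟫
  have hu : |u| ≤ m + c := by
    have hinner : ⟪p + t • v, v⟫ = u := by
      simp [u, inner_add_left, real_inner_smul_left, hv, add_comm]
    rw [← hinner]
    calc |⟪p + t • v, v⟫| ≤ ‖p + t • v‖ := by
          simpa [hv] using abs_real_inner_le_norm (p + t • v) v
      _ ≤ ‖x‖ + dist x (p + t • v) := by
          rw [dist_eq_norm]; exact norm_le_insert x _
      _ ≤ m + c := add_le_add (by simpa using hxm) ht
  have hu' := abs_le.1 hu
  simp only [mem_iUnion, exists_prop, mem_closedBall, Finset.mem_Icc]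
  refine ⟨⌊u⌋, ⟨Int.le_floor.2 (by push_cast; exact hu'.1),
    Int.floor_le_iff.2 (by push_cast; linarith)⟩, ?_⟩
  have hfract : dist (p + t • v) (p + (⌊u⌋ - ⟪p, v⟫) • v) ≤ 1 := by
    rw [dist_add_left, dist_eq_norm, ← sub_smul, norm_smul, hv, mul_one, Real.norm_eq_abs, abs_le]
    constructor <;> linarith [Int.floor_le u, Int.lt_floor_add_one u]
  exact (dist_triangle _ _ _).trans (add_le_add ht hfract)

lemma volume_cylinder_inter_closedBall_le {m c : ℕ} (hv : ‖v‖ = 1) :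
    volume (cylinder p v c ∩ closedBall 0 m) ≤
      (2 * (m + c) + 1) * volume (closedBall (0 : EuclideanSpace ℝ (Fin n)) (c + 1)) := by
  refine (measure_mono (cylinder_inter_closedBall_subset hv)).trans
    ((measure_biUnion_finset_le _ _).trans_eq ?_)
  have hcard : #(Finset.Icc (-(m + c : ℤ)) (m + c)) = 2 * (m + c) + 1 := by
    rw [Int.card_Icc]
    omega
  simp_rw [Measure.addHaar_closedBall_center, Finset.sum_const, hcard, nsmul_eq_mul]
  push_cast
  rfl

theorem setLIntegral_cylinder_one_add_segmentVariation_le {F : Type*} [PseudoEMetricSpace F]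
    {Φ : EuclideanSpace ℝ (Fin n) → F} (hΦ : Continuous Φ) (hv : ‖v‖ = 1) {B : ℝ≥0∞}
    (hB : ∀ y, eVariationOn (fun t : ℝ ↦ Φ (y + t • v)) univ ≤ B) {m c : ℕ} (hm : 1 ≤ m) :
    ∫⁻ y in cylinder p v c ∩ closedBall 0 m, (1 + segmentVariation Φ v y) ≤
      (2 * c + 5) * volume (closedBall (0 : EuclideanSpace ℝ (Fin n)) (c + 1)) * (m + B) := by
  set b := volume (closedBall (0 : EuclideanSpace ℝ (Fin n)) (c + 1))
  have hS (r : ℝ) : MeasurableSet (cylinder p v c ∩ closedBall 0 r) :=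
    measurableSet_cylinder.inter measurableSet_closedBall
  have hcount (j : ℕ) (hj : j ≤ 2) :
      volume (cylinder p v c ∩ closedBall 0 (j * m : ℕ)) ≤ m * ((2 * c + 5) * b) := by
    refine (volume_cylinder_inter_closedBall_le hv).trans ?_
    rw [← mul_assoc]
    gcongr
    norm_cast
    nlinarith
  have hvar : ∫⁻ y in cylinder p v c ∩ closedBall 0 m, segmentVariation Φ v y ≤
      B * ((2 * c + 5) * b) := by
    have htranslate := natCast_mul_setLIntegral_segmentVariation_le (μ := volume) (m := m) hΦ hB
      (hS m) (hS (2 * m : ℕ)) fun i hi x hx ↦ ⟨?_, ?_⟩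
    · refine (ENNReal.mul_le_mul_iff_right (by positivity) (ENNReal.natCast_ne_top m)).1
        (htranslate.trans ?_)
      rw [mul_left_comm]
      gcongr
      exact hcount 2 le_rfl
    · rw [← Nat.cast_smul_eq_nsmul ℝ] at hx
      exact mem_cylinder_of_add_smul_mem hx.1
    · have hnorm : ‖i • v‖ ≤ m := by
        simpa [← Nat.cast_smul_eq_nsmul ℝ, norm_smul, hv] using hi.le
      simpa [two_mul] using (norm_le_add_norm_add x (i • v)).trans
        (add_le_add (mem_closedBall_zero_iff.1 hx.2) hnorm)
  rw [lintegral_add_left measurable_const, setLIntegral_one, mul_add]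
  refine add_le_add ?_ (hvar.trans_eq (mul_comm _ _))
  simpa [mul_comm] using hcount 1 (by simp)

end Cylinder

section Cell

open Metric

lemma setLIntegral_comp_add_right_le_of_mapsTo {G : Type*} [AddGroup G] [MeasurableSpace G]
    [MeasurableAdd G] {μ : Measure G} [μ.IsAddRightInvariant] {w : G} {S T : Set G}
    (h : MapsTo (· + w) S T) (g : G → ℝ≥0∞) :
    ∫⁻ y in S, g (y + w) ∂μ ≤ ∫⁻ y in T, g y ∂μ :=
  calc ∫⁻ y in S, g (y + w) ∂μ ≤ ∫⁻ y in (· + w) ⁻¹' T, g (y + w) ∂μ := lintegral_mono_set h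
    _ = ∫⁻ y in T, g y ∂μ := (measurePreserving_add_right μ w).setLIntegral_comp_preimage_emb
        (measurableEmbedding_addRight w) g T

lemma add_mem_closedBall_of_add_norm_le {G : Type*} [SeminormedAddCommGroup G] {x y w : G}
    {r R : ℝ} (hy : y ∈ closedBall x r) (hw : r + ‖w‖ ≤ R) : y + w ∈ closedBall x R := by
  have hdist := dist_triangle (y + w) y x
  rw [dist_self_add_left] at hdist
  exact mem_closedBall.2 (by linarith [mem_closedBall.1 hy])

variable {E F : Type*} [NormedAddCommGroup E] [MeasurableSpace E] [BorelSpace E]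
  {μ : Measure E} {x : E} {r R : ℝ} {ι : Type*}

lemma setLIntegral_edist_translate_sum_le [PseudoEMetricSpace F] {Φ : E → F}
    [μ.IsAddRightInvariant] (hΦ : Continuous Φ) (s : Finset ι) (w : ι → E)
    (hw : r + ∑ i ∈ s, ‖w i‖ ≤ R) :
    ∫⁻ y in closedBall x r, edist (Φ (y + ∑ i ∈ s, w i)) (Φ y) ∂μ ≤
      ∑ i ∈ s, ∫⁻ y in closedBall x R, edist (Φ (y + w i)) (Φ y) ∂μ := by
  induction s using Finset.cons_induction with
  | empty => simp
  | cons i s hi ih =>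
    rw [Finset.sum_cons] at hw
    have hsum := norm_sum_le s w
    have hnorm := norm_nonneg (w i)
    calc ∫⁻ y in closedBall x r, edist (Φ (y + ∑ j ∈ s.cons i hi, w j)) (Φ y) ∂μ
        ≤ ∫⁻ y in closedBall x r, (edist (Φ (y + ∑ j ∈ s, w j + w i)) (Φ (y + ∑ j ∈ s, w j)) +
            edist (Φ (y + ∑ j ∈ s, w j)) (Φ y)) ∂μ := by
          refine lintegral_mono fun y ↦ ?_
          rw [Finset.sum_cons, add_comm (w i), ← add_assoc]
          exact edist_triangle _ _ _
      _ = ∫⁻ y in closedBall x r, edist (Φ (y + ∑ j ∈ s, w j + w i)) (Φ (y + ∑ j ∈ s, w j)) ∂μ +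
            ∫⁻ y in closedBall x r, edist (Φ (y + ∑ j ∈ s, w j)) (Φ y) ∂μ :=
          lintegral_add_left (Continuous.measurable (by fun_prop)) _
      _ ≤ _ := by
          rw [Finset.sum_cons]
          exact add_le_add (setLIntegral_comp_add_right_le_of_mapsTo
            (fun y hy ↦ add_mem_closedBall_of_add_norm_le hy (by linarith))
            fun y ↦ edist (Φ (y + w i)) (Φ y))
            (ih (by linarith))

variable [NormedSpace ℝ E]

lemma setLIntegral_edist_translate_sum_smul_le [PseudoEMetricSpace F] {Φ : E → F}
    [μ.IsAddRightInvariant] (hΦ : Continuous Φ) (s : Finset ι) {v : ι → E}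
    (hv : ∀ i ∈ s, ‖v i‖ ≤ 1) {τ : ι → ℝ} (hτ0 : ∀ i ∈ s, 0 ≤ τ i) (hτ : r + ∑ i ∈ s, τ i ≤ R)
    (hτ1 : ∀ i ∈ s, τ i ≤ 1) :
    ∫⁻ y in closedBall x r, edist (Φ (y + ∑ i ∈ s, τ i • v i)) (Φ y) ∂μ ≤
      ∑ i ∈ s, ENNReal.ofReal (2 * τ i) *
        ∫⁻ y in closedBall x (R + 1), segmentVariation Φ (v i) y ∂μ := by
  have hnorm : ∑ i ∈ s, ‖τ i • v i‖ ≤ ∑ i ∈ s, τ i := Finset.sum_le_sum fun i hi ↦ by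
    rw [norm_smul, Real.norm_of_nonneg (hτ0 i hi)]
    exact mul_le_of_le_one_right (hτ0 i hi) (hv i hi)
  exact (setLIntegral_edist_translate_sum_le hΦ s _ (by linarith)).trans <| Finset.sum_le_sum
    fun i hi ↦ setLIntegral_edist_translate_le hΦ (hv i hi) (hτ0 i hi) (hτ1 i hi) x R

section InnerProduct

variable [NormedAddCommGroup F] [InnerProductSpace ℝ F] {Φ : E → F}

lemma one_le_enorm_inner_sq_add_edist {u v : F} (hu : ‖u‖ = 1) (hv : ‖v‖ = 1) :
    1 ≤ ‖⟪u, v⟫‖ₑ ^ 2 + 2 * edist v u := by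
  have hsub : 1 - ⟪u, v⟫ ≤ dist v u := by
    have := real_inner_le_norm u (u - v)
    rwa [inner_sub_right, real_inner_self_eq_norm_sq, hu, one_pow, one_mul, ← dist_eq_norm,
      dist_comm] at this
  have hle : ⟪u, v⟫ ≤ 1 := by simpa [hu, hv] using real_inner_le_norm u v
  have hreal : 1 ≤ ‖⟪u, v⟫‖ ^ 2 + 2 * dist v u := by
    rw [Real.norm_eq_abs, sq_abs]
    nlinarith
  rw [← ofReal_norm, edist_dist, ← ENNReal.ofReal_pow (norm_nonneg _),
    ← ENNReal.ofReal_ofNat, ← ENNReal.ofReal_mul zero_le_two,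
    ← ENNReal.ofReal_add (by positivity) (by positivity)]
  simpa using hreal

lemma le_two_mul_of_mul_le_mul_add {β t B : ℝ≥0∞} (hβ₀ : β ≠ 0) (hβ : β ≠ ⊤) (ht : t ≠ ⊤)
    (h : β * t ≤ B * β + 2 * (β / 4 * t)) : t ≤ 2 * B := by
  have hquarter : (4 : ℝ≥0∞)⁻¹ * 2 = 2⁻¹ := by
    rw [show (4 : ℝ≥0∞) = 2 * 2 by norm_num, ENNReal.mul_inv (by simp) (by simp), mul_assoc,
      ENNReal.inv_mul_cancel two_ne_zero ENNReal.ofNat_ne_top, mul_one]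
  have hfactor : B * β + 2 * (β / 4 * t) = β * (B + t / 2) := by
    rw [mul_add, div_eq_mul_inv, div_eq_mul_inv, ← hquarter]
    ring
  have hhalf : t / 2 + t / 2 ≤ B + t / 2 := by
    rw [ENNReal.add_halves]
    exact (ENNReal.mul_le_mul_iff_right hβ₀ hβ).1 (h.trans_eq hfactor)
  rw [mul_comm, ← ENNReal.div_le_iff two_ne_zero ENNReal.ofNat_ne_top]
  exact ENNReal.le_of_add_le_add_right (ENNReal.div_ne_top ht two_ne_zero) hhalf

/- Compare `Φ y` with `Φ (y + w)`: on average over `y` in the ball and `w ∈ P` the two unit vectors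
are close, so `⟪Φ y, Φ (y + w)⟫ ^ 2` has average at least `1 / 2`, whereas for fixed `y` its
integral over `w` is at most `B`. -/
lemma measure_le_two_mul_of_setLIntegral_edist_le [FiniteDimensional ℝ E] [μ.IsAddHaarMeasure]
    (hΦ : Continuous Φ) (hΦ1 : ∀ y, ‖Φ y‖ = 1) {P : Set E}
    (hPr : P ⊆ closedBall 0 r) (hr : 0 < r)
    (hedist : ∀ w ∈ P, ∫⁻ y in closedBall x r, edist (Φ (y + w)) (Φ y) ∂μ ≤
      μ (closedBall x r) / 4) {B : ℝ≥0∞}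
    (hB : ∀ e, ‖e‖ = 1 → ∫⁻ y in closedBall x (r + r), ‖⟪e, Φ y⟫‖ₑ ^ 2 ∂μ ≤ B) :
    μ P ≤ 2 * B := by
  have := FiniteDimensional.proper_real E
  set β := μ (closedBall x r) with hβ
  have hβ0 : β ≠ 0 := (measure_closedBall_pos μ x hr).ne'
  have hPtop : μ P ≠ ⊤ := ((measure_mono hPr).trans_lt measure_closedBall_lt_top).ne
  have hinner (y) (hy : y ∈ closedBall x r) : ∫⁻ w in P, ‖⟪Φ y, Φ (y + w)⟫‖ₑ ^ 2 ∂μ ≤ B := by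
    refine le_trans ?_ (hB (Φ y) (hΦ1 y))
    simpa only [add_comm y] using setLIntegral_comp_add_right_le_of_mapsTo (fun w hw ↦ by
      simpa only [add_comm] using add_mem_closedBall_of_add_norm_le hy
        (add_le_add_right (mem_closedBall_zero_iff.1 (hPr hw)) r))
      fun z ↦ ‖⟪Φ y, Φ z⟫‖ₑ ^ 2
  have hdisp : ∫⁻ y in closedBall x r, ∫⁻ w in P, edist (Φ (y + w)) (Φ y) ∂μ ∂μ ≤ β / 4 * μ P := by
    rw [lintegral_lintegral_swap (Continuous.aemeasurable (by fun_prop)), ← setLIntegral_const]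
    exact setLIntegral_mono measurable_const hedist
  refine le_two_mul_of_mul_le_mul_add hβ0 measure_closedBall_lt_top.ne hPtop ?_
  calc β * μ P = ∫⁻ _ in closedBall x r, ∫⁻ _ in P, 1 ∂μ ∂μ := by simp [hβ, mul_comm]
    _ ≤ ∫⁻ y in closedBall x r, ∫⁻ w in P,
          (‖⟪Φ y, Φ (y + w)⟫‖ₑ ^ 2 + 2 * edist (Φ (y + w)) (Φ y)) ∂μ ∂μ := by
        gcongr with y w
        exact one_le_enorm_inner_sq_add_edist (hΦ1 y) (hΦ1 _)
    _ ≤ ∫⁻ y in closedBall x r, (B + 2 * ∫⁻ w in P, edist (Φ (y + w)) (Φ y) ∂μ) ∂μ := by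
        refine setLIntegral_mono' measurableSet_closedBall fun y hy ↦ ?_
        rw [lintegral_add_left (Continuous.measurable (by fun_prop)),
          lintegral_const_mul _ (Continuous.measurable (by fun_prop))]
        gcongr
        exact hinner y hy
    _ = B * β + 2 * ∫⁻ y in closedBall x r, ∫⁻ w in P, edist (Φ (y + w)) (Φ y) ∂μ ∂μ := by
        rw [lintegral_add_left measurable_const, setLIntegral_const, lintegral_const_mul']
        simp
    _ ≤ B * β + 2 * (β / 4 * μ P) := by gcongr

end InnerProduct

variable [Fintype ι] {v : ι → EuclideanSpace ℝ ι} {x : EuclideanSpace ℝ ι} {ε : ℝ≥0∞}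

lemma parallelepiped_smul_subset_closedBall {E : Type*} [SeminormedAddCommGroup E]
    [NormedSpace ℝ E] {v : ι → E} (hv : ∀ j, ‖v j‖ ≤ 1) {l : ι → ℝ} (hl : ∀ j, 0 ≤ l j) :
    (parallelepiped fun j ↦ l j • v j) ⊆ closedBall 0 (∑ j, l j) := by
  intro w hw
  obtain ⟨t, ht, rfl⟩ := (mem_parallelepiped_iff _ _).1 hw
  rw [mem_closedBall_zero_iff]
  refine (norm_sum_le _ _).trans (Finset.sum_le_sum fun j _ ↦ ?_)
  rw [norm_smul, norm_smul, Real.norm_of_nonneg (ht.1 j), Real.norm_of_nonneg (hl j)]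
  exact (mul_le_of_le_one_left (by have := hl j; positivity) (ht.2 j)).trans
    (mul_le_of_le_one_right (hl j) (hv j))

lemma volume_parallelepiped_smul [DecidableEq ι] {l : ι → ℝ} (hl : ∀ j, 0 ≤ l j)
    (v : ι → EuclideanSpace ℝ ι) :
    volume (parallelepiped fun j ↦ l j • v j) =
      (∏ j, ENNReal.ofReal (l j)) * ENNReal.ofReal |Matrix.det (Matrix.of fun i j ↦ v j i)| := by
  rw [← (EuclideanSpace.basisFun ι ℝ).addHaar_eq_volume, Measure.addHaar_parallelepiped,
    AlternatingMap.map_smul_univ, smul_eq_mul, abs_mul, Finset.abs_prod,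
    ENNReal.ofReal_mul (by positivity), ENNReal.ofReal_prod_of_nonneg fun _ _ ↦ abs_nonneg _]
  congr 1
  simp_rw [abs_of_nonneg (hl _)]

section PseudoEMetric

variable [PseudoEMetricSpace F]

/-- The size, on the ball of radius `2` about `x`, of the variation of `Φ` in direction `v`. The
summand `1` keeps it bounded below. -/
noncomputable def cellWeight (Φ : EuclideanSpace ℝ ι → F) (v x : EuclideanSpace ℝ ι) : ℝ≥0∞ :=
  ∫⁻ y in closedBall x 2, (1 + segmentVariation Φ v y)

lemma volume_closedBall_le_cellWeight (Φ : EuclideanSpace ℝ ι → F) (v x : EuclideanSpace ℝ ι) :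
    volume (closedBall x (1 / 2)) ≤ cellWeight Φ v x :=
  calc volume (closedBall x (1 / 2)) ≤ volume (closedBall x 2) := by gcongr; norm_num
    _ = ∫⁻ _ in closedBall x 2, 1 := (setLIntegral_one _).symm
    _ ≤ cellWeight Φ v x := lintegral_mono fun _ ↦ le_self_add

lemma cellWeight_ne_zero (Φ : EuclideanSpace ℝ ι → F) (v x : EuclideanSpace ℝ ι) :
    cellWeight Φ v x ≠ 0 :=
  ((measure_closedBall_pos volume x one_half_pos).trans_le
    (volume_closedBall_le_cellWeight Φ v x)).ne'

lemma sum_div_cellWeight_le (Φ : EuclideanSpace ℝ ι → F) (v : ι → EuclideanSpace ℝ ι)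
    (hε : 8 * Fintype.card ι * ε ≤ volume (closedBall x (1 / 2))) :
    ∑ j, ε / cellWeight Φ (v j) x ≤ 2⁻¹ := by
  set β := volume (closedBall x (1 / 2))
  calc ∑ j, ε / cellWeight Φ (v j) x ≤ ∑ _ : ι, ε / β := by
        gcongr
        exact volume_closedBall_le_cellWeight Φ _ x
    _ = Fintype.card ι * ε / β := by simp [mul_div_assoc]
    _ ≤ 2⁻¹ := by
      refine ENNReal.div_le_of_le_mul ?_
      rw [mul_comm (2⁻¹ : ℝ≥0∞), ← div_eq_mul_inv, ENNReal.le_div_iff_mul_le (by simp) (by simp)]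
      calc Fintype.card ι * ε * 2 ≤ Fintype.card ι * ε * 8 := by gcongr; norm_num
        _ = 8 * Fintype.card ι * ε := by ring
        _ ≤ β := hε

lemma setLIntegral_edist_parallelepiped_le {Φ : EuclideanSpace ℝ ι → F} (hΦ : Continuous Φ)
    (hv : ∀ j, ‖v j‖ ≤ 1) {l : ι → ℝ} (hl : ∀ j, 0 ≤ l j) (hl1 : ∑ j, l j ≤ 1 / 2)
    (hlε : ∀ j, ENNReal.ofReal (l j) * cellWeight Φ (v j) x ≤ ε) {w : EuclideanSpace ℝ ι}
    (hw : w ∈ parallelepiped fun j ↦ l j • v j) :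
    ∫⁻ y in closedBall x (1 / 2), edist (Φ (y + w)) (Φ y) ≤ 2 * Fintype.card ι * ε := by
  obtain ⟨t, ht, rfl⟩ := (mem_parallelepiped_iff _ _).1 hw
  have htl (j) : t j * l j ≤ l j := mul_le_of_le_one_left (hl j) (ht.2 j)
  have hsum : ∑ j, t j * l j ≤ 1 / 2 := (Finset.sum_le_sum fun j _ ↦ htl j).trans hl1
  have hpos (j) : 0 ≤ t j * l j := mul_nonneg (ht.1 j) (hl j)
  simp_rw [smul_smul]
  calc ∫⁻ y in closedBall x (1 / 2), edist (Φ (y + ∑ j, (t j * l j) • v j)) (Φ y)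
      ≤ ∑ j, ENNReal.ofReal (2 * (t j * l j)) *
          ∫⁻ y in closedBall x (1 + 1), segmentVariation Φ (v j) y :=
        setLIntegral_edist_translate_sum_smul_le hΦ _ (fun j _ ↦ hv j) (fun j _ ↦ hpos j)
          (by linarith) fun j hj ↦ by
            linarith [Finset.single_le_sum (fun i _ ↦ hpos i) hj]
    _ ≤ ∑ j : ι, 2 * ε := by
        refine Finset.sum_le_sum fun j _ ↦ ?_
        rw [ENNReal.ofReal_mul zero_le_two, ENNReal.ofReal_ofNat, mul_assoc, one_add_one_eq_two]
        gcongr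
        refine le_trans ?_ (hlε j)
        gcongr
        · exact htl j
        · exact lintegral_mono fun _ ↦ le_add_self
    _ = 2 * Fintype.card ι * ε := by simp; ring

end PseudoEMetric

section InnerProduct

variable [NormedAddCommGroup F] [InnerProductSpace ℝ F] {Φ : EuclideanSpace ℝ ι → F}

lemma volume_parallelepiped_le_two_mul (hΦ : Continuous Φ) (hΦ1 : ∀ y, ‖Φ y‖ = 1)
    (hv : ∀ j, ‖v j‖ ≤ 1) (hε : 8 * Fintype.card ι * ε ≤ volume (closedBall x (1 / 2))) {l : ι → ℝ}
    (hl : ∀ j, 0 ≤ l j) (hl1 : ∑ j, l j ≤ 1 / 2)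
    (hlε : ∀ j, ENNReal.ofReal (l j) * cellWeight Φ (v j) x ≤ ε) {B : ℝ≥0∞}
    (hB : ∀ e, ‖e‖ = 1 → ∫⁻ y in closedBall x 1, ‖⟪e, Φ y⟫‖ₑ ^ 2 ≤ B) :
    volume (parallelepiped fun j ↦ l j • v j) ≤ 2 * B := by
  refine measure_le_two_mul_of_setLIntegral_edist_le (x := x) hΦ hΦ1
    ((parallelepiped_smul_subset_closedBall hv hl).trans (closedBall_subset_closedBall hl1))
    one_half_pos (fun w hw ↦ ?_) (by rwa [add_halves])
  refine (setLIntegral_edist_parallelepiped_le hΦ hv hl hl1 hlε hw).trans ?_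
  rw [ENNReal.le_div_iff_mul_le (by simp) (by simp)]
  exact le_of_eq_of_le (by ring) hε

/- The sides `ε / cellWeight Φ (v j) x` are short enough for `Φ` hardly to move along the
parallelepiped they span. -/
lemma ofReal_abs_det_mul_pow_le [DecidableEq ι] (hΦ : Continuous Φ) (hΦ1 : ∀ y, ‖Φ y‖ = 1)
    (hv : ∀ j, ‖v j‖ ≤ 1) (hε : 8 * Fintype.card ι * ε ≤ volume (closedBall x (1 / 2)))
    (hW : ∀ j, cellWeight Φ (v j) x ≠ ⊤) {B : ℝ≥0∞}
    (hB : ∀ e, ‖e‖ = 1 → ∫⁻ y in closedBall x 1, ‖⟪e, Φ y⟫‖ₑ ^ 2 ≤ B) :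
    ENNReal.ofReal |Matrix.det (Matrix.of fun i j ↦ v j i)| * ε ^ Fintype.card ι ≤
      2 * B * ∏ j, cellWeight Φ (v j) x := by
  set W := fun j ↦ cellWeight Φ (v j) x
  have hW0 (j) : W j ≠ 0 := cellWeight_ne_zero Φ (v j) x
  have hsum : ∑ j, ε / W j ≤ 2⁻¹ := sum_div_cellWeight_le Φ v hε
  have htop (j) : ε / W j ≠ ⊤ :=
    ENNReal.sum_ne_top.1 (ne_top_of_le_ne_top (by simp) hsum) j (Finset.mem_univ j)
  have hsum' : ∑ j, (ε / W j).toReal ≤ 1 / 2 := by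
    rw [← ENNReal.toReal_sum fun j _ ↦ htop j]
    simpa using ENNReal.toReal_mono (by simp) hsum
  have hP := volume_parallelepiped_le_two_mul (l := fun j ↦ (ε / W j).toReal) hΦ hΦ1 hv hε
    (fun j ↦ ENNReal.toReal_nonneg) hsum'
    (fun j ↦ by rw [ENNReal.ofReal_toReal (htop j)]; exact mul_comm (ε / W j) (W j) ▸
      ENNReal.mul_div_le) hB
  rw [volume_parallelepiped_smul fun j ↦ ENNReal.toReal_nonneg] at hP
  simp_rw [ENNReal.ofReal_toReal (htop _)] at hP
  calc ENNReal.ofReal |Matrix.det (Matrix.of fun i j ↦ v j i)| * ε ^ Fintype.card ι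
      = (∏ j, ε / W j) * ENNReal.ofReal |Matrix.det (Matrix.of fun i j ↦ v j i)| * ∏ j, W j := by
        rw [mul_right_comm, ← Finset.prod_mul_distrib]
        simp_rw [ENNReal.div_mul_cancel (hW0 _) (hW _)]
        simp [mul_comm]
    _ ≤ 2 * B * ∏ j, W j := by gcongr

end InnerProduct

end Cell

section SeparatedNet

open Metric
open scoped NNReal

theorem exists_finset_isSeparated_isCover {X : Type*} [PseudoEMetricSpace X] {A : Set X}
    (hA : IsCompact A) {ε : ℝ≥0} (hε : ε ≠ 0) :
    ∃ s : Finset X, ↑s ⊆ A ∧ IsSeparated ε (s : Set X) ∧ IsCover ε A (s : Set X) := by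
  obtain ⟨N, -, hNfin, hN⟩ := exists_finite_isCover_of_isCompact (div_ne_zero hε two_ne_zero) hA
  have hpack : packingNumber ε A ≠ ⊤ := by
    have hle := (packingNumber_two_mul_le_externalCoveringNumber (ε / 2) A).trans
      hN.externalCoveringNumber_le_encard
    rw [mul_div_cancel₀ _ two_ne_zero] at hle
    exact (hle.trans_lt hNfin.encard_lt_top).ne
  have hfin : (maximalSeparatedSet ε A).Finite := by
    rwa [← encard_ne_top_iff, encard_maximalSeparatedSet hpack]
  refine ⟨hfin.toFinset, ?_⟩
  rw [hfin.coe_toFinset]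
  exact ⟨maximalSeparatedSet_subset, isSeparated_maximalSeparatedSet,
    isCover_maximalSeparatedSet hpack⟩

variable {E : Type*} [NormedAddCommGroup E] [NormedSpace ℝ E] [FiniteDimensional ℝ E]
  {s : Finset E}

lemma card_filter_dist_le_two_le (hs : IsSeparated 1 (s : Set E)) (y : E) :
    #{k ∈ s | dist y k ≤ 2} ≤ 5 ^ Module.finrank ℝ E := by
  rw [← Finset.card_map (addRightEmbedding (-y))]
  refine Besicovitch.card_le_of_separated _ ?_ ?_
  · intro c hc
    obtain ⟨k, hk, rfl⟩ := Finset.mem_map.1 hc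
    simpa [← sub_eq_add_neg, dist_comm, ← dist_eq_norm] using (Finset.mem_filter.1 hk).2
  · intro c hc d hd hcd
    obtain ⟨k, hk, rfl⟩ := Finset.mem_map.1 hc
    obtain ⟨l, hl, rfl⟩ := Finset.mem_map.1 hd
    have hkl : 1 < edist k l := hs (Finset.filter_subset _ _ hk) (Finset.filter_subset _ _ hl)
      (by rintro rfl; exact hcd rfl)
    rw [edist_dist, ENNReal.one_lt_ofReal] at hkl
    simpa [dist_eq_norm] using hkl.le

theorem sum_setLIntegral_closedBall_two_le [MeasurableSpace E] [BorelSpace E] {μ : Measure E}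
    {g : E → ℝ≥0∞} (hg : Measurable g) (hs : IsSeparated 1 (s : Set E)) {T : Set E}
    (hT : ∀ k ∈ s, closedBall k 2 ⊆ T) :
    ∑ k ∈ s, ∫⁻ y in closedBall k 2, g y ∂μ ≤ 5 ^ Module.finrank ℝ E * ∫⁻ y in T, g y ∂μ := by
  calc ∑ k ∈ s, ∫⁻ y in closedBall k 2, g y ∂μ
      = ∑ k ∈ s, ∫⁻ y in T, (closedBall k 2).indicator g y ∂μ := by
        refine Finset.sum_congr rfl fun k hk ↦ ?_
        rw [setLIntegral_indicator measurableSet_closedBall, inter_eq_left.2 (hT k hk)]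
    _ = ∫⁻ y in T, #{k ∈ s | dist y k ≤ 2} * g y ∂μ := by
        rw [← lintegral_finsetSum _ fun k _ ↦ hg.indicator measurableSet_closedBall]
        congr! 2 with y
        rw [Finset.card_filter, Nat.cast_sum, Finset.sum_mul]
        exact Finset.sum_congr rfl fun k _ ↦ by by_cases h : dist y k ≤ 2 <;> simp [h]
    _ ≤ ∫⁻ y in T, 5 ^ Module.finrank ℝ E * g y ∂μ := by
        gcongr with y
        exact_mod_cast card_filter_dist_le_two_le hs y
    _ = _ := lintegral_const_mul _ hg

end SeparatedNet

section Holder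

variable {κ ι : Type*} [Fintype ι] [Nonempty ι]

theorem sum_prod_rpow_inv_card_le (s : Finset κ) (g : ι → κ → ℝ≥0∞) :
    ∑ k ∈ s, ∏ j, g j k ^ (Fintype.card ι : ℝ)⁻¹ ≤
      ∏ j, (∑ k ∈ s, g j k) ^ (Fintype.card ι : ℝ)⁻¹ := by
  let _ : MeasurableSpace κ := ⊤
  simpa [lintegral_finsetSum_measure] using
    ENNReal.lintegral_prod_norm_pow_le (μ := ∑ k ∈ s, Measure.dirac k) Finset.univ
      (fun j _ ↦ (measurable_from_top (f := g j)).aemeasurable)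
      (p := fun _ ↦ (Fintype.card ι : ℝ)⁻¹) (by simp) (by simp)

theorem pow_card_sum_le_mul_prod_sum {s : Finset κ} {f : κ → ℝ≥0∞} {g : ι → κ → ℝ≥0∞}
    {H : ℝ≥0∞} (h : ∀ k ∈ s, f k ^ Fintype.card ι ≤ H * ∏ j, g j k) :
    (∑ k ∈ s, f k) ^ Fintype.card ι ≤ H * ∏ j, ∑ k ∈ s, g j k := by
  set q : ℝ := (Fintype.card ι : ℝ)⁻¹
  have hq : 0 < q := by positivity
  have hroot (x y : ℝ≥0∞) : x ≤ y ^ q ↔ x ^ Fintype.card ι ≤ y := by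
    rw [ENNReal.le_rpow_inv_iff (by positivity), ENNReal.rpow_natCast]
  rw [← hroot, ENNReal.mul_rpow_of_nonneg _ _ hq.le, ← ENNReal.prod_rpow_of_nonneg hq.le]
  calc ∑ k ∈ s, f k ≤ ∑ k ∈ s, H ^ q * ∏ j, g j k ^ q := by
        gcongr with k hk
        rw [ENNReal.prod_rpow_of_nonneg hq.le, ← ENNReal.mul_rpow_of_nonneg _ _ hq.le, hroot]
        exact h k hk
    _ ≤ H ^ q * ∏ j, (∑ k ∈ s, g j k) ^ q := by
        rw [← Finset.mul_sum]
        gcongr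
        exact sum_prod_rpow_inv_card_le s g

end Holder

section CellWeightAlongTube

open Metric

variable {n : ℕ} {F : Type*} [PseudoEMetricSpace F] {Φ : EuclideanSpace ℝ (Fin n) → F}
  {p v : EuclideanSpace ℝ (Fin n)} {B : ℝ≥0∞}

lemma cellWeight_ne_top (hΦ : Continuous Φ) (hv : ‖v‖ = 1)
    (hB : ∀ y, eVariationOn (fun t : ℝ ↦ Φ (y + t • v)) univ ≤ B) (hBtop : B ≠ ⊤)
    (x : EuclideanSpace ℝ (Fin n)) : cellWeight Φ v x ≠ ⊤ := by
  set m := ⌈‖x‖ + 2⌉₊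
  have hsub : closedBall x 2 ⊆ cylinder x v (2 : ℕ) ∩ closedBall 0 m := fun y hy ↦
    ⟨mem_cylinder_iff.2 ⟨0, by simpa using hy⟩, mem_closedBall_zero_iff.2 <|
      (norm_le_norm_add_norm_sub x y).trans <| by
        rw [← dist_eq_norm, dist_comm]
        exact (add_le_add_right hy _).trans (Nat.le_ceil _)⟩
  refine ne_top_of_le_ne_top ?_ ((lintegral_mono_set hsub).trans
    (setLIntegral_cylinder_one_add_segmentVariation_le hΦ hv hB (Nat.ceil_pos.2 (by positivity))))
  have hball := (measure_closedBall_lt_top (μ := volume)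
    (x := (0 : EuclideanSpace ℝ (Fin n))) (r := (2 : ℕ) + 1)).ne
  finiteness

theorem sum_indicator_cylinder_cellWeight_le (hΦ : Continuous Φ) (hv : ‖v‖ = 1)
    (hB : ∀ y, eVariationOn (fun t : ℝ ↦ Φ (y + t • v)) univ ≤ B)
    {s : Finset (EuclideanSpace ℝ (Fin n))}
    (hs : IsSeparated 1 (s : Set (EuclideanSpace ℝ (Fin n)))) {m : ℕ} (hsm : ∀ k ∈ s, ‖k‖ ≤ m) :
    ∑ k ∈ s, (cylinder p v 2).indicator (cellWeight Φ v) k ≤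
      5 ^ n * (13 * volume (closedBall (0 : EuclideanSpace ℝ (Fin n)) 5) * (m + 2 + B)) := by
  classical
  set s' := {k ∈ s | k ∈ cylinder p v 2}
  have hs' : IsSeparated 1 (s' : Set (EuclideanSpace ℝ (Fin n))) :=
    hs.subset (Finset.coe_subset.2 (Finset.filter_subset _ s))
  have hsub (k) (hk : k ∈ s') :
      closedBall k 2 ⊆ cylinder p v (4 : ℕ) ∩ closedBall 0 (m + 2 : ℕ) := by
    obtain ⟨hk, hkp⟩ := Finset.mem_filter.1 hk
    refine fun y hy ↦ ⟨?_, ?_⟩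
    · convert! mem_cylinder_of_dist_le hkp hy using 2
      norm_num
    · rw [Nat.cast_add, Nat.cast_two]
      exact closedBall_subset_closedBall' (by simpa [add_comm (2 : ℝ)] using hsm k hk) hy
  simp_rw [indicator_apply]
  rw [← Finset.sum_filter]
  calc ∑ k ∈ s', cellWeight Φ v k
      ≤ 5 ^ n * ∫⁻ y in cylinder p v (4 : ℕ) ∩ closedBall 0 (m + 2 : ℕ),
          (1 + segmentVariation Φ v y) := by
        simpa only [finrank_euclideanSpace_fin] using! sum_setLIntegral_closedBall_two_le
          (measurable_const.add (measurable_segmentVariation hΦ)) hs' hsub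
    _ ≤ 5 ^ n * ((2 * (4 : ℕ) + 5) *
          volume (closedBall (0 : EuclideanSpace ℝ (Fin n)) ((4 : ℕ) + 1)) *
          ((m + 2 : ℕ) + B)) := by
        gcongr
        exact setLIntegral_cylinder_one_add_segmentVariation_le hΦ hv hB (by simp)
    _ = _ := by norm_num

end CellWeightAlongTube

section TubeDensity

variable {n : ℕ} {ι : Fin n → Type*} [∀ j, Fintype (ι j)]
  {p v : ∀ j, ι j → EuclideanSpace ℝ (Fin n)} {r d : ℝ} {x y : EuclideanSpace ℝ (Fin n)}

/-- The number of transverse intersections at `x`: the product over the families `j` of the number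
of cylinders of radius `r` in the family `j` that contain `x`. -/
noncomputable def tubeMultiplicity (p v : ∀ j, ι j → EuclideanSpace ℝ (Fin n)) (r : ℝ)
    (x : EuclideanSpace ℝ (Fin n)) : ℝ≥0∞ :=
  ∏ j, ∑ a, (cylinder (p j a) (v j a) r).indicator 1 x

/-- The integrand of the multilinear Kakeya inequality for cylinders of radius `r`, with values in
`ℝ≥0∞`. -/
noncomputable def tubeDensity (p v : ∀ j, ι j → EuclideanSpace ℝ (Fin n)) (r : ℝ)
    (x : EuclideanSpace ℝ (Fin n)) : ℝ≥0∞ :=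
  tubeMultiplicity p v r x ^ ((1 : ℝ) / (n - 1))

lemma tubeMultiplicity_ne_top : tubeMultiplicity p v r x ≠ ⊤ :=
  ENNReal.prod_ne_top fun _ _ ↦ ENNReal.sum_ne_top.2 fun _ _ ↦
    ne_top_of_le_ne_top ENNReal.one_ne_top (indicator_le_self _ _ x)

lemma tubeMultiplicity_le_of_dist_le (hyx : dist y x ≤ d) :
    tubeMultiplicity p v r x ≤ tubeMultiplicity p v (r + d) y := by
  unfold tubeMultiplicity
  gcongr with j _ a
  refine indicator_apply_le' (fun hx ↦ ?_) fun _ ↦ zero_le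
  rw [indicator_of_mem (mem_cylinder_of_dist_le hx hyx), Pi.one_apply, Pi.one_apply]

lemma measurable_tubeDensity : Measurable (tubeDensity p v r) :=
  (Finset.measurable_fun_prod _ fun _ _ ↦ Finset.measurable_fun_sum _ fun _ _ ↦
    measurable_one.indicator measurableSet_cylinder).pow_const _

lemma tubeDensity_ne_top (hn : 1 ≤ n) : tubeDensity p v r x ≠ ⊤ :=
  ENNReal.rpow_ne_top_of_nonneg (by simpa using hn) tubeMultiplicity_ne_top

lemma tubeDensity_le_of_dist_le (hn : 1 ≤ n) (hyx : dist y x ≤ d) :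
    tubeDensity p v r x ≤ tubeDensity p v (r + d) y :=
  ENNReal.rpow_le_rpow (tubeMultiplicity_le_of_dist_le hyx) (by simpa using hn)

lemma tubeDensity_pow (hn : 2 ≤ n) :
    tubeDensity p v r x ^ n = tubeDensity p v r x * tubeMultiplicity p v r x := by
  have hroot : tubeDensity p v r x ^ (n - 1) = tubeMultiplicity p v r x := by
    have hn1 : (n : ℝ) - 1 ≠ 0 := by
      rw [sub_ne_zero]
      exact_mod_cast (by omega : n ≠ 1)
    rw [tubeDensity, ← ENNReal.rpow_natCast, ← ENNReal.rpow_mul, Nat.cast_pred (by omega),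
      one_div_mul_cancel hn1, ENNReal.rpow_one]
  rw [← hroot, mul_pow_sub_one (by omega)]

end TubeDensity

section WeightedCells

open Metric

variable {n : ℕ}

theorem exists_unit_map_of_weights (s : Finset (EuclideanSpace ℝ (Fin n)))
    {w : EuclideanSpace ℝ (Fin n) → ℝ≥0∞} (hw : ∀ k ∈ s, w k ≠ ⊤) (m : ℕ) :
    ∃ Φ : EuclideanSpace ℝ (Fin n) → EuclideanSpace ℝ (Fin n → Fin (m + 1)),
      Continuous Φ ∧ (∀ x, ‖Φ x‖ = 1) ∧
      (∀ v y, eVariationOn (fun t : ℝ ↦ Φ (y + t • v)) univ ≤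
        n * m / ENNReal.ofReal croftonConst) ∧
      ∀ k ∈ s, ∀ e, ‖e‖ = 1 → w k * ∫⁻ y in closedBall k 1, ‖⟪e, Φ y⟫‖ₑ ^ 2 ≤
        3 * (volume (closedBall (0 : EuclideanSpace ℝ (Fin n)) 1) * (∑ l ∈ s, w l) /
          (m + 1) ^ n) := by
  set ν : Measure (EuclideanSpace ℝ (Fin n)) :=
    ∑ k ∈ s, w k • volume.restrict (closedBall k 1) with hν
  have hνuniv : ν univ =
      volume (closedBall (0 : EuclideanSpace ℝ (Fin n)) 1) * ∑ l ∈ s, w l := by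
    simp [hν, Measure.addHaar_closedBall_center, mul_comm, Finset.sum_mul]
  have hνfin : IsFiniteMeasure ν := ⟨by
    rw [hνuniv]
    exact ENNReal.mul_lt_top measure_closedBall_lt_top (ENNReal.sum_lt_top.2 fun k hk ↦
      (hw k hk).lt_top)⟩
  have hνac : ν ≪ volume := by
    refine Measure.AbsolutelyContinuous.mk fun t _ ht ↦ ?_
    simp only [hν, Measure.coe_finsetSum, Finset.sum_apply, Measure.smul_apply, smul_eq_mul]
    exact Finset.sum_eq_zero fun k _ ↦ by rw [Measure.absolutelyContinuous_restrict ht, mul_zero]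
  obtain ⟨Φ, hΦ, hΦ1, hsign, hiso⟩ := exists_unit_map_of_absolutelyContinuous m ν hνac
  refine ⟨Φ, hΦ, hΦ1, fun v y ↦ ?_, fun k hk e he ↦ ?_⟩
  · simpa using eVariationOn_le_of_signChangesLE (fun t ↦ hΦ1 (y + t • v))
      (fun a ↦ hsign a y v) univ
  · rw [← hνuniv]
    refine le_trans ?_ ((hiso e he).trans_eq (by rw [Fintype.card_fin]))
    rw [hν, lintegral_finsetSum_measure]
    simp_rw [lintegral_smul_measure, smul_eq_mul]
    exact Finset.single_le_sum (f := fun l ↦ w l * ∫⁻ y in closedBall l 1, ‖⟪e, Φ y⟫‖ₑ ^ 2)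
      (fun _ _ ↦ zero_le) hk

variable {F : Type*} [NormedAddCommGroup F] [InnerProductSpace ℝ F]
  {Φ : EuclideanSpace ℝ (Fin n) → F} {x : EuclideanSpace ℝ (Fin n)} {ε M : ℝ≥0∞}

lemma mul_det_mul_pow_le {v : Fin n → EuclideanSpace ℝ (Fin n)} (hΦ : Continuous Φ)
    (hΦ1 : ∀ y, ‖Φ y‖ = 1) (hv : ∀ j, ‖v j‖ ≤ 1)
    (hε : 8 * n * ε ≤ volume (closedBall x (1 / 2))) (hW : ∀ j, cellWeight Φ (v j) x ≠ ⊤)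
    {w : ℝ≥0∞} (hw : w ≠ ⊤)
    (hM : ∀ e, ‖e‖ = 1 → w * ∫⁻ y in closedBall x 1, ‖⟪e, Φ y⟫‖ₑ ^ 2 ≤ M) :
    w * (ENNReal.ofReal |Matrix.det (Matrix.of fun i j ↦ v j i)| * ε ^ n) ≤
      2 * M * ∏ j, cellWeight Φ (v j) x := by
  obtain rfl | hw0 := eq_or_ne w 0
  · simp
  have hkey := ofReal_abs_det_mul_pow_le hΦ hΦ1 hv (by simpa using hε) hW (B := M / w)
    fun e he ↦ (ENNReal.le_div_iff_mul_le (.inl hw0) (.inl hw)).2 (by rw [mul_comm]; exact hM e he)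
  rw [Fintype.card_fin] at hkey
  calc w * (ENNReal.ofReal |Matrix.det (Matrix.of fun i j ↦ v j i)| * ε ^ n)
      ≤ w * (2 * (M / w) * ∏ j, cellWeight Φ (v j) x) := by gcongr
    _ = 2 * (w * (M / w)) * ∏ j, cellWeight Φ (v j) x := by ring
    _ = 2 * M * ∏ j, cellWeight Φ (v j) x := by rw [ENNReal.mul_div_cancel hw0 hw]

theorem tubeDensity_pow_mul_le {ι : Fin n → Type*} [∀ j, Fintype (ι j)]
    {p v : ∀ j, ι j → EuclideanSpace ℝ (Fin n)} (hn : 2 ≤ n) (hΦ : Continuous Φ)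
    (hΦ1 : ∀ y, ‖Φ y‖ = 1) (hv : ∀ j a, ‖v j a‖ ≤ 1) {θ : ℝ}
    (hdet : ∀ a : ∀ j, ι j, θ ≤ |Matrix.det (Matrix.of fun i j ↦ v j (a j) i)|)
    (hε : 8 * n * ε ≤ volume (closedBall x (1 / 2)))
    (hW : ∀ j a, cellWeight Φ (v j a) x ≠ ⊤) {r : ℝ}
    (hM : ∀ e, ‖e‖ = 1 → tubeDensity p v r x * ∫⁻ y in closedBall x 1, ‖⟪e, Φ y⟫‖ₑ ^ 2 ≤ M) :
    tubeDensity p v r x ^ n * (ENNReal.ofReal θ * ε ^ n) ≤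
      2 * M * ∏ j, ∑ a, (cylinder (p j a) (v j a) r).indicator (cellWeight Φ (v j a)) x := by
  set w := tubeDensity p v r x
  have hw : w ≠ ⊤ := tubeDensity_ne_top (by omega)
  rw [tubeDensity_pow hn]
  calc w * tubeMultiplicity p v r x * (ENNReal.ofReal θ * ε ^ n)
      = ∑ a : ∀ j, ι j, (∏ j, (cylinder (p j (a j)) (v j (a j)) r).indicator 1 x) *
          (w * (ENNReal.ofReal θ * ε ^ n)) := by
        rw [tubeMultiplicity, Fintype.prod_sum, ← Finset.sum_mul]
        ring
    _ ≤ ∑ a : ∀ j, ι j, (∏ j, (cylinder (p j (a j)) (v j (a j)) r).indicator 1 x) *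
          (2 * M * ∏ j, cellWeight Φ (v j (a j)) x) := by
        refine Finset.sum_le_sum fun a _ ↦ mul_le_mul' le_rfl (le_trans ?_
          (mul_det_mul_pow_le hΦ hΦ1 (fun j ↦ hv j (a j)) hε (fun j ↦ hW j (a j)) hw hM))
        gcongr
        exact hdet a
    _ = 2 * M * ∏ j, ∑ a, (cylinder (p j a) (v j a) r).indicator (cellWeight Φ (v j a)) x := by
        rw [Fintype.prod_sum, Finset.mul_sum]
        refine Finset.sum_congr rfl fun a _ ↦ ?_
        rw [mul_left_comm, ← Finset.prod_mul_distrib]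
        congr! 3 with j
        by_cases hx : x ∈ cylinder (p j (a j)) (v j (a j)) r <;> simp [hx]

end WeightedCells

section Kakeya

open Metric

/-- Bounds the sum of the cell weights along a tube of radius `2`, per unit of length. -/
noncomputable def tubeConst (n : ℕ) : ℝ≥0∞ :=
  5 ^ n * (13 * volume (closedBall (0 : EuclideanSpace ℝ (Fin n)) 5)) *
    (2 + n / ENNReal.ofReal croftonConst)

/-- The scale `ε` of the parallelepipeds with sides `(ε / cellWeight) • v j` on which the
polynomial map is almost constant. -/
noncomputable def cellScale (n : ℕ) : ℝ≥0∞ :=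
  volume (closedBall (0 : EuclideanSpace ℝ (Fin n)) (1 / 2)) / (8 * n)

/-- The dimensional constant of the multilinear Kakeya inequality under the `(n - 1)`-st root. -/
noncomputable def kakeyaConst (n : ℕ) : ℝ≥0∞ :=
  6 * volume (closedBall (0 : EuclideanSpace ℝ (Fin n)) 1) * (tubeConst n / cellScale n) ^ n

variable {n : ℕ}

lemma cellScale_ne_zero : cellScale n ≠ 0 :=
  ENNReal.div_ne_zero.2 ⟨(measure_closedBall_pos volume _ one_half_pos).ne', by finiteness⟩

lemma cellScale_ne_top (hn : n ≠ 0) : cellScale n ≠ ⊤ :=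
  ENNReal.div_ne_top measure_closedBall_lt_top.ne (by simpa using hn)

lemma eight_mul_cellScale_le (x : EuclideanSpace ℝ (Fin n)) :
    8 * n * cellScale n ≤ volume (closedBall x (1 / 2)) := by
  rw [Measure.addHaar_closedBall_center]
  exact ENNReal.mul_div_le

lemma tubeConst_ne_zero : tubeConst n ≠ 0 := by
  have hball := (measure_closedBall_pos volume (0 : EuclideanSpace ℝ (Fin n))
    (by norm_num : (0 : ℝ) < 5)).ne'
  simp [tubeConst, hball]

lemma tubeConst_ne_top : tubeConst n ≠ ⊤ := by
  have hball := (measure_closedBall_lt_top (μ := volume)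
    (x := (0 : EuclideanSpace ℝ (Fin n))) (r := 5)).ne
  have hdiv : n / ENNReal.ofReal croftonConst ≠ ⊤ :=
    ENNReal.div_ne_top (ENNReal.natCast_ne_top n) (by simpa using croftonConst_pos)
  unfold tubeConst
  finiteness

lemma kakeyaConst_ne_zero (hn : n ≠ 0) : kakeyaConst n ≠ 0 := by
  have hball := (measure_closedBall_pos volume (0 : EuclideanSpace ℝ (Fin n)) one_pos).ne'
  simp [kakeyaConst, hball, tubeConst_ne_zero, cellScale_ne_top hn]

lemma kakeyaConst_ne_top : kakeyaConst n ≠ ⊤ := by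
  have hball := (measure_closedBall_lt_top (μ := volume)
    (x := (0 : EuclideanSpace ℝ (Fin n))) (r := 1)).ne
  have hdiv : tubeConst n / cellScale n ≠ ⊤ := ENNReal.div_ne_top tubeConst_ne_top cellScale_ne_zero
  unfold kakeyaConst
  finiteness

lemma le_rpow_of_pow_le_mul {a b : ℝ≥0∞} (hn : 2 ≤ n) (ha : a ≠ ⊤) (h : a ^ n ≤ a * b) :
    a ≤ b ^ ((1 : ℝ) / (n - 1)) := by
  obtain rfl | ha0 := eq_or_ne a 0
  · exact zero_le
  have hpos : (0 : ℝ) < (n - 1 : ℕ) := by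
    exact_mod_cast (by omega : 0 < n - 1)
  rw [← Nat.cast_pred (by omega), one_div, ENNReal.le_rpow_inv_iff hpos, ENNReal.rpow_natCast]
  rw [← mul_pow_sub_one (by omega)] at h
  exact (ENNReal.mul_le_mul_iff_right ha0 ha).1 h

variable {ι : Fin n → Type*} [∀ j, Fintype (ι j)]
  {p v : ∀ j, ι j → EuclideanSpace ℝ (Fin n)} {θ : ℝ}

lemma sum_sum_indicator_cellWeight_le {F : Type*} [PseudoEMetricSpace F]
    {Φ : EuclideanSpace ℝ (Fin n) → F} (hΦ : Continuous Φ) {j : Fin n} (hv : ∀ a, ‖v j a‖ = 1)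
    {s : Finset (EuclideanSpace ℝ (Fin n))}
    (hs : IsSeparated 1 (s : Set (EuclideanSpace ℝ (Fin n)))) {m : ℕ} (hsm : ∀ k ∈ s, ‖k‖ ≤ m)
    (hB : ∀ v y, eVariationOn (fun t : ℝ ↦ Φ (y + t • v)) univ ≤
      n * m / ENNReal.ofReal croftonConst) :
    ∑ k ∈ s, ∑ a, (cylinder (p j a) (v j a) 2).indicator (cellWeight Φ (v j a)) k ≤
      Fintype.card (ι j) * (tubeConst n * (m + 1)) := by
  rw [Finset.sum_comm, ← nsmul_eq_mul]
  refine Finset.sum_le_card_nsmul _ _ _ fun a _ ↦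
    (sum_indicator_cylinder_cellWeight_le hΦ (hv a) (hB (v j a)) hs hsm).trans ?_
  rw [tubeConst, mul_assoc (5 ^ n), mul_assoc (5 ^ n), mul_assoc (13 * _)]
  gcongr
  calc (m + 2 + n * m / ENNReal.ofReal croftonConst : ℝ≥0∞)
      ≤ m + 2 + n * m / ENNReal.ofReal croftonConst + (m + n / ENNReal.ofReal croftonConst) :=
        le_self_add
    _ = (2 + n / ENNReal.ofReal croftonConst) * (m + 1) := by
        simp only [div_eq_mul_inv]
        ring

theorem pow_sum_tubeDensity_le (hn : 2 ≤ n) (hv : ∀ j a, ‖v j a‖ = 1) (hθ : 0 < θ)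
    (hdet : ∀ a : ∀ j, ι j, θ ≤ |Matrix.det (Matrix.of fun i j ↦ v j (a j) i)|)
    {s : Finset (EuclideanSpace ℝ (Fin n))}
    (hs : IsSeparated 1 (s : Set (EuclideanSpace ℝ (Fin n)))) {m : ℕ}
    (hsm : ∀ k ∈ s, ‖k‖ ≤ m) :
    (∑ k ∈ s, tubeDensity p v 2 k) ^ n ≤
      2 * (3 * (volume (closedBall (0 : EuclideanSpace ℝ (Fin n)) 1) *
        (∑ k ∈ s, tubeDensity p v 2 k) / (m + 1) ^ n)) / (ENNReal.ofReal θ * cellScale n ^ n) *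
          ∏ j, (Fintype.card (ι j) * (tubeConst n * (m + 1))) := by
  have : Nonempty (Fin n) := ⟨⟨0, by omega⟩⟩
  obtain ⟨Φ, hΦ, hΦ1, hB, hM⟩ :=
    exists_unit_map_of_weights s (w := tubeDensity p v 2)
      (fun k _ ↦ tubeDensity_ne_top (by omega)) m
  have hBtop : n * m / ENNReal.ofReal croftonConst ≠ ⊤ :=
    ENNReal.div_ne_top (by finiteness) (by simpa using croftonConst_pos)
  have hε := cellScale_ne_top (n := n) (by omega)
  have hθε : ENNReal.ofReal θ * cellScale n ^ n ≠ 0 := by simp [hθ, cellScale_ne_zero]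
  set H := 2 * (3 * (volume (closedBall (0 : EuclideanSpace ℝ (Fin n)) 1) *
    (∑ k ∈ s, tubeDensity p v 2 k) / (m + 1) ^ n)) / (ENNReal.ofReal θ * cellScale n ^ n)
  have hcell (k) (hk : k ∈ s) : tubeDensity p v 2 k ^ Fintype.card (Fin n) ≤
      H * ∏ j, ∑ a, (cylinder (p j a) (v j a) 2).indicator (cellWeight Φ (v j a)) k := by
    rw [Fintype.card_fin, ← ENNReal.mul_div_right_comm,
      ENNReal.le_div_iff_mul_le (.inl hθε) (.inl (by finiteness))]
    exact tubeDensity_pow_mul_le hn hΦ hΦ1 (fun j a ↦ (hv j a).le) hdet (eight_mul_cellScale_le k)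
      (fun j a ↦ cellWeight_ne_top hΦ (hv j a) (hB _) hBtop k) (hM k hk)
  have hholder := pow_card_sum_le_mul_prod_sum hcell
  rw [Fintype.card_fin] at hholder
  refine hholder.trans ?_
  gcongr with j
  exact sum_sum_indicator_cellWeight_le hΦ (hv j) hs hsm hB

theorem sum_tubeDensity_le (hn : 2 ≤ n) (hv : ∀ j a, ‖v j a‖ = 1) (hθ : 0 < θ)
    (hdet : ∀ a : ∀ j, ι j, θ ≤ |Matrix.det (Matrix.of fun i j ↦ v j (a j) i)|)
    {s : Finset (EuclideanSpace ℝ (Fin n))}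
    (hs : IsSeparated 1 (s : Set (EuclideanSpace ℝ (Fin n)))) {m : ℕ}
    (hsm : ∀ k ∈ s, ‖k‖ ≤ m) :
    ∑ k ∈ s, tubeDensity p v 2 k ≤
      (kakeyaConst n * (ENNReal.ofReal θ)⁻¹ * ∏ j, (Fintype.card (ι j) : ℝ≥0∞)) ^
        ((1 : ℝ) / (n - 1)) := by
  refine le_rpow_of_pow_le_mul hn
    (ENNReal.sum_ne_top.2 fun k _ ↦ tubeDensity_ne_top (by omega))
    ((pow_sum_tubeDensity_le hn hv hθ hdet hs hsm).trans_eq ?_)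
  have hcancel : ((m : ℝ≥0∞) + 1) ^ n * (((m : ℝ≥0∞) + 1) ^ n)⁻¹ = 1 :=
    ENNReal.mul_inv_cancel (by positivity) (ENNReal.pow_ne_top (by finiteness))
  have hinv : (ENNReal.ofReal θ * cellScale n ^ n)⁻¹ =
      (ENNReal.ofReal θ)⁻¹ * (cellScale n)⁻¹ ^ n := by
    rw [ENNReal.mul_inv (.inl (by simpa using hθ)) (.inl ENNReal.ofReal_ne_top), ENNReal.inv_pow]
  rw [Finset.prod_mul_distrib, Finset.prod_const, Finset.card_univ, Fintype.card_fin, kakeyaConst]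
  conv_rhs => rw [← mul_one ((∑ k ∈ s, tubeDensity p v 2 k) * _), ← hcancel]
  simp only [div_eq_mul_inv, hinv, mul_pow]
  ring

lemma setLIntegral_closedBall_tubeDensity_le (hn : 1 ≤ n) (x : EuclideanSpace ℝ (Fin n)) :
    ∫⁻ y in closedBall x 1, tubeDensity p v 1 y ≤
      volume (closedBall (0 : EuclideanSpace ℝ (Fin n)) 1) * tubeDensity p v 2 x := by
  rw [mul_comm, ← Measure.addHaar_closedBall_center volume x, ← setLIntegral_const]
  refine setLIntegral_mono measurable_const fun y hy ↦ ?_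
  rw [← one_add_one_eq_two]
  exact tubeDensity_le_of_dist_le hn (dist_comm x y ▸ hy)

/-- The `ℝ≥0∞`-valued right-hand side of the multilinear Kakeya inequality for families of
cylinders indexed by the types `ι j`. -/
noncomputable def kakeyaBound (ι : Fin n → Type*) [∀ j, Fintype (ι j)] (θ : ℝ) : ℝ≥0∞ :=
  volume (closedBall (0 : EuclideanSpace ℝ (Fin n)) 1) *
    (kakeyaConst n * (ENNReal.ofReal θ)⁻¹ * ∏ j, (Fintype.card (ι j) : ℝ≥0∞)) ^
      ((1 : ℝ) / (n - 1))

theorem lintegral_tubeDensity_le (hn : 2 ≤ n) (hv : ∀ j a, ‖v j a‖ = 1) (hθ : 0 < θ)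
    (hdet : ∀ a : ∀ j, ι j, θ ≤ |Matrix.det (Matrix.of fun i j ↦ v j (a j) i)|) :
    ∫⁻ x, tubeDensity p v 1 x ≤ kakeyaBound ι θ := by
  rw [kakeyaBound, ← setLIntegral_univ,
    ← iUnion_closedBall_nat (0 : EuclideanSpace ℝ (Fin n)),
    setLIntegral_iUnion_of_directed _ (Monotone.directed_le fun _ _ h ↦
      closedBall_subset_closedBall (by exact_mod_cast h))]
  refine iSup_le fun m ↦ ?_
  obtain ⟨s, hsm, hs, hcover⟩ := exists_finset_isSeparated_isCover
    (isCompact_closedBall (0 : EuclideanSpace ℝ (Fin n)) m) one_ne_zero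
  have hsub : closedBall (0 : EuclideanSpace ℝ (Fin n)) m ⊆
      ⋃ k : s, closedBall (k : EuclideanSpace ℝ (Fin n)) 1 := by
    intro x hx
    obtain ⟨k, hk, hxk⟩ := hcover hx
    exact mem_iUnion.2 ⟨⟨k, hk⟩, by simpa [edist_dist] using hxk⟩
  calc ∫⁻ x in closedBall (0 : EuclideanSpace ℝ (Fin n)) m, tubeDensity p v 1 x
      ≤ ∑' k : s, ∫⁻ x in closedBall (k : EuclideanSpace ℝ (Fin n)) 1, tubeDensity p v 1 x :=
        (lintegral_mono_set hsub).trans (lintegral_iUnion_le _ _)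
    _ = ∑ k ∈ s, ∫⁻ x in closedBall k 1, tubeDensity p v 1 x :=
        s.tsum_subtype fun k ↦ ∫⁻ x in closedBall k 1, tubeDensity p v 1 x
    _ ≤ ∑ k ∈ s, volume (closedBall (0 : EuclideanSpace ℝ (Fin n)) 1) * tubeDensity p v 2 k :=
        Finset.sum_le_sum fun k _ ↦ setLIntegral_closedBall_tubeDensity_le (by omega) k
    _ ≤ _ := by
        rw [← Finset.mul_sum]
        gcongr
        exact sum_tubeDensity_le hn hv hθ hdet hs fun k hk ↦ by simpa using hsm hk

lemma toReal_tubeDensity (r : ℝ) (x : EuclideanSpace ℝ (Fin n)) :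
    (tubeDensity p v r x).toReal =
      (∏ j, ∑ a, (cylinder (p j a) (v j a) r).indicator (fun _ ↦ (1 : ℝ)) x) ^
        ((1 : ℝ) / (n - 1)) := by
  rw [tubeDensity, tubeMultiplicity, ← ENNReal.toReal_rpow, ENNReal.toReal_prod]
  congr! 2 with j
  rw [ENNReal.toReal_sum fun _ _ ↦
    ne_top_of_le_ne_top ENNReal.one_ne_top (indicator_le_self _ _ x)]
  congr! 1 with a
  by_cases hx : x ∈ cylinder (p j a) (v j a) r <;> simp [hx]

lemma kakeyaBound_ne_top (hn : 1 ≤ n) (hθ : 0 < θ) : kakeyaBound ι θ ≠ ⊤ :=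
  ENNReal.mul_ne_top measure_closedBall_lt_top.ne <|
    ENNReal.rpow_ne_top_of_nonneg (by simpa using hn) <|
      ENNReal.mul_ne_top (ENNReal.mul_ne_top kakeyaConst_ne_top (by simpa using hθ))
        (ENNReal.prod_ne_top fun _ _ ↦ ENNReal.natCast_ne_top _)

lemma toReal_kakeyaBound (hθ : 0 < θ) :
    (kakeyaBound ι θ).toReal =
      volume.real (closedBall (0 : EuclideanSpace ℝ (Fin n)) 1) *
        (kakeyaConst n).toReal ^ ((1 : ℝ) / (n - 1)) *
        θ ^ (-(1 : ℝ) / (n - 1)) * ∏ j, (Fintype.card (ι j) : ℝ) ^ ((1 : ℝ) / (n - 1)) := by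
  rw [kakeyaBound, ENNReal.toReal_mul, ← ENNReal.toReal_rpow, ENNReal.toReal_mul,
    ENNReal.toReal_mul, ENNReal.toReal_prod, ENNReal.toReal_inv, ENNReal.toReal_ofReal hθ.le,
    Real.mul_rpow (by positivity) (by positivity), Real.mul_rpow (by positivity) (by positivity),
    Real.inv_rpow hθ.le, neg_div, Real.rpow_neg hθ.le, ← Real.finsetProd_rpow _ _ (by simp)]
  simp only [ENNReal.toReal_natCast, measureReal_def]
  ring

theorem integrable_toReal_tubeDensity (hn : 2 ≤ n) (hv : ∀ j a, ‖v j a‖ = 1) (hθ : 0 < θ)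
    (hdet : ∀ a : ∀ j, ι j, θ ≤ |Matrix.det (Matrix.of fun i j ↦ v j (a j) i)|) :
    Integrable fun x ↦ (tubeDensity p v 1 x).toReal :=
  integrable_toReal_of_lintegral_ne_top measurable_tubeDensity.aemeasurable <|
    ne_top_of_le_ne_top (kakeyaBound_ne_top (by omega) hθ)
      (lintegral_tubeDensity_le hn hv hθ hdet)

theorem integral_toReal_tubeDensity_le (hn : 2 ≤ n) (hv : ∀ j a, ‖v j a‖ = 1) (hθ : 0 < θ)
    (hdet : ∀ a : ∀ j, ι j, θ ≤ |Matrix.det (Matrix.of fun i j ↦ v j (a j) i)|) :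
    ∫ x, (tubeDensity p v 1 x).toReal ≤
      volume.real (closedBall (0 : EuclideanSpace ℝ (Fin n)) 1) *
        (kakeyaConst n).toReal ^ ((1 : ℝ) / (n - 1)) *
        θ ^ (-(1 : ℝ) / (n - 1)) * ∏ j, (Fintype.card (ι j) : ℝ) ^ ((1 : ℝ) / (n - 1)) := by
  rw [integral_toReal measurable_tubeDensity.aemeasurable
    (.of_forall fun _ ↦ (tubeDensity_ne_top (by omega)).lt_top), ← toReal_kakeyaBound hθ]
  exact ENNReal.toReal_mono (kakeyaBound_ne_top (by omega) hθ)
    (lintegral_tubeDensity_le hn hv hθ hdet)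

end Kakeya

end MultilinearKakeya

open MultilinearKakeya in
theorem multilinear_kakeya_general (n : ℕ) (hn : 2 ≤ n) :
    ∃ C : ℝ, 0 < C ∧
      ∀ {ι : Fin n → Type*} [∀ j, Fintype (ι j)] (p v : ∀ j, ι j → EuclideanSpace ℝ (Fin n))
        (θ : ℝ), 0 < θ → (∀ j a, ‖v j a‖ = 1) →
        (∀ a : ∀ j, ι j, θ ≤ |Matrix.det (Matrix.of fun i j ↦ v j (a j) i)|) →
        Integrable (fun x ↦ (∏ j, ∑ a, (cylinder (p j a) (v j a) 1).indicator (fun _ ↦ (1 : ℝ)) x) ^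
          ((1 : ℝ) / (n - 1))) ∧
        ∫ x, (∏ j, ∑ a, (cylinder (p j a) (v j a) 1).indicator (fun _ ↦ (1 : ℝ)) x) ^
            ((1 : ℝ) / (n - 1)) ≤
          C * θ ^ (-(1 : ℝ) / (n - 1)) * ∏ j, (Fintype.card (ι j) : ℝ) ^ ((1 : ℝ) / (n - 1)) := by
  have hball := Metric.measure_closedBall_pos volume (0 : EuclideanSpace ℝ (Fin n)) one_pos
  have hK := ENNReal.toReal_pos (kakeyaConst_ne_zero (n := n) (by omega)) kakeyaConst_ne_top
  refine ⟨_, mul_pos (ENNReal.toReal_pos hball.ne' measure_closedBall_lt_top.ne)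
    (Real.rpow_pos_of_pos hK ((1 : ℝ) / (n - 1))), fun p v θ hθ hv hdet ↦ ?_⟩
  simp only [← toReal_tubeDensity]
  exact ⟨integrable_toReal_tubeDensity hn hv hθ hdet,
    integral_toReal_tubeDensity_le hn hv hθ hdet⟩

/-- **Multilinear Kakeya (endpoint case, Guth).** For each `j` a family of unit cylinders
`T_{j,a}` with unit core directions `v j a`, quantitatively transverse in the sense that every
determinant of core directions, one from each family, is at least `θ` in absolute value.  Then
`∫ (∏_j ∑_a χ_{T_{j,a}})^{1/(n-1)} ≤ C(n) θ^{-1/(n-1)} ∏_j A(j)^{1/(n-1)}`. -/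
theorem multilinear_kakeya (n : ℕ) (hn : 2 ≤ n) :
    ∃ C : ℝ, 0 < C ∧
      ∀ (A : Fin n → ℕ) (p v : ∀ j : Fin n, Fin (A j) → EuclideanSpace ℝ (Fin n)) (θ : ℝ),
        0 < θ →
        (∀ j a, ‖v j a‖ = 1) →
        (∀ a : ∀ j : Fin n, Fin (A j),
          θ ≤ |Matrix.det (Matrix.of fun i j : Fin n => v j (a j) i)|) →
        ∫ x : EuclideanSpace ℝ (Fin n),
            (∏ j : Fin n, ∑ a : Fin (A j),
              Set.indicator (cylinder (p j a) (v j a) 1) (fun _ => (1:ℝ)) x)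
            ^ ((1:ℝ) / ((n:ℝ) - 1))
          ≤ C * θ ^ (-(1:ℝ) / ((n:ℝ) - 1)) * ∏ j : Fin n, (A j : ℝ) ^ ((1:ℝ) / ((n:ℝ) - 1)) := by
  obtain ⟨C, hC, h⟩ := multilinear_kakeya_general n hn
  exact ⟨C, hC, fun A p v θ hθ hv hdet ↦ by simpa using (h p v θ hθ hv hdet).2⟩
end

section
/- Let n ≥ 2 and let A ≥ 1 be an integer. Suppose we have a finite collection of unit cylinders T_{j,a} ⊆ ℝ^n, where 1 ≤ j ≤ n and 1 ≤ a ≤ A, such that for each j and a the core direction v_{j,a} of T_{j,a} satisfies ‖v_{j,a} − e_j‖ ≤ (100 n)^{-1}, where e_j is the j-th standard basis vector (i.e. each T_{j,a} runs nearly parallel to the x_j-axis). Let I := ⋂_{j=1}^n [ ⋃_{a=1}^A T_{j,a} ] be the set of points belonging to at least one cylinder in each direction. Then the Lebesgue measure of I satisfies Vol(I) ≤ C(n) A^{n/(n-1)}, where C(n) is a constant depending only on n. -/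
open MeasureTheory
open scoped ENNReal

/-!
The zero set of a polynomial of degree `≲ N ^ (1 / n)` can bisect all `N` unit cubes meeting the
set in question, by the polynomial ham sandwich theorem; this rests on the Borsuk–Ulam theorem,
which comes from a combinatorial lemma of Tucker–Fan type on iterated barycentric subdivisions of
the boundary of a cross-polytope. Two independent random points of a bisected cube lie on opposite
sides of the zero set with probability `1 / 2`. Each such cube meets a cylinder in every coordinate
direction, and the displacement between the two points splits into displacements along the axes of
these cylinders, so that the zero set crosses the cube substantially along one of the axes. A line
meets the zero set at most `≲ N ^ (1 / n)` times, hence each of the `n * A` cylinders accounts for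
`≲ N ^ (1 / n)` of the cubes, that is `N ≲ A * N ^ (1 / n)`.
-/

/-! ### Mod-2 chains and the Tucker–Fan lemma -/

/-- Mod-2 chains with vertices in `E`, used to prove the Borsuk–Ulam theorem. A simplex is encoded
as the list of its vertices: repetitions are allowed, different orderings of the same vertices are
different simplices, and the empty list is the simplex of dimension `-1`. -/
abbrev ListChain (E : Type*) := List E →₀ ZMod 2

namespace ListChain

open Finsupp (single)

variable {E F : Type*}

lemma hom_ext {M : Type*} [AddCommMonoid M] [Module (ZMod 2) M] {f g : ListChain E →ₗ[ZMod 2] M}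
    (h : ∀ l, f (single l 1) = g (single l 1)) : f = g :=
  Finsupp.lhom_ext' fun l => LinearMap.ext_ring (h l)

/-- The cone operator: adds the vertex `v` in front of every simplex. -/
noncomputable def cone (v : E) : ListChain E →ₗ[ZMod 2] ListChain E :=
  Finsupp.lmapDomain _ _ (List.cons v)

@[simp] lemma cone_single (v : E) (l : List E) : cone v (single l 1) = single (v :: l) 1 := by
  simp [cone]

/-- The boundary of a simplex: the sum of the simplices obtained by deleting one vertex. -/
noncomputable def boundaryList : List E → ListChain E
  | [] => 0
  | v :: l => single l 1 + cone v (boundaryList l)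

/-- The boundary operator of the (augmented) complex of mod-2 chains. -/
noncomputable def boundary : ListChain E →ₗ[ZMod 2] ListChain E :=
  Finsupp.linearCombination (ZMod 2) boundaryList

@[simp] lemma boundary_single (l : List E) : boundary (single l 1) = boundaryList l := by
  simp [boundary]

lemma boundary_cone (v : E) (c : ListChain E) :
    boundary (cone v c) = c + cone v (boundary c) := by
  have h : boundary ∘ₗ cone v = LinearMap.id + cone v ∘ₗ boundary :=
    hom_ext fun l => by simp [boundaryList]
  exact LinearMap.congr_fun h c

lemma boundary_boundaryList (l : List E) : boundary (boundaryList l) = 0 := by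
  induction l with
  | nil => simp [boundaryList]
  | cons v l ih => simp [boundaryList, boundary_cone, ih, ZModModule.add_self]

/-- The chain map induced by a map of vertices. -/
noncomputable def map (g : E → F) : ListChain E →ₗ[ZMod 2] ListChain F :=
  Finsupp.lmapDomain _ _ (List.map g)

@[simp] lemma map_single (g : E → F) (l : List E) :
    map g (single l 1) = single (l.map g) 1 := by
  simp [map]

lemma map_cone (g : E → F) (v : E) (c : ListChain E) :
    map g (cone v c) = cone (g v) (map g c) := by
  have h : map g ∘ₗ cone v = cone (g v) ∘ₗ map g := hom_ext fun l => by simp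
  exact LinearMap.congr_fun h c

lemma map_boundaryList (g : E → F) (l : List E) :
    map g (boundaryList l) = boundaryList (l.map g) := by
  induction l with
  | nil => simp [boundaryList]
  | cons v l ih => simp [boundaryList, map_cone, ih]

lemma map_boundary (g : E → F) (c : ListChain E) : map g (boundary c) = boundary (map g c) := by
  have h : map g ∘ₗ boundary = boundary ∘ₗ map g := hom_ext fun l => by simp [map_boundaryList]
  exact LinearMap.congr_fun h c

lemma map_map_of_involutive {g : E → E} (hg : g.Involutive) (c : ListChain E) :
    map g (map g c) = c := by
  have h : map g ∘ₗ map g = LinearMap.id := hom_ext fun l => by simp [hg.comp_self]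
  exact LinearMap.congr_fun h c

/-- The pairing of a mod-2 cochain, given by its values on simplices, with chains. -/
noncomputable def pairing (φ : List E → ZMod 2) : ListChain E →ₗ[ZMod 2] ZMod 2 :=
  Finsupp.linearCombination (ZMod 2) φ

@[simp] lemma pairing_single (φ : List E → ZMod 2) (l : List E) :
    pairing φ (single l 1) = φ l := by
  simp [pairing]

lemma pairing_cone (φ : List E → ZMod 2) (v : E) (c : ListChain E) :
    pairing φ (cone v c) = pairing (fun l => φ (v :: l)) c := by
  have h : pairing φ ∘ₗ cone v = pairing (fun l => φ (v :: l)) := hom_ext fun l => by simp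
  exact LinearMap.congr_fun h c

lemma pairing_map (φ : List F → ZMod 2) (g : E → F) (c : ListChain E) :
    pairing φ (map g c) = pairing (fun l => φ (l.map g)) c := by
  have h : pairing φ ∘ₗ map g = pairing (fun l => φ (l.map g)) := hom_ext fun l => by simp
  exact LinearMap.congr_fun h c

lemma pairing_boundaryList_perm {φ : List E → ZMod 2} (hφ : ∀ ⦃l l'⦄, l.Perm l' → φ l = φ l')
    {l l' : List E} (h : l.Perm l') :
    pairing φ (boundaryList l) = pairing φ (boundaryList l') := by
  induction h generalizing φ with
  | nil => rfl
  | cons x h ih =>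
    simp only [boundaryList, map_add, pairing_single, pairing_cone, hφ h]
    rw [ih fun _ _ h' => hφ (h'.cons x)]
  | swap x y l =>
    have hxy : (fun t => φ (y :: x :: t)) = fun t => φ (x :: y :: t) :=
      funext fun t => hφ (.swap x y t)
    simp only [boundaryList, map_add, pairing_single, pairing_cone, cone_single, hxy]
    abel
  | trans _ _ ih₁ ih₂ => exact (ih₁ hφ).trans (ih₂ hφ)

/-- The chains all of whose simplices belong to `S`. -/
abbrev supportedOn (S : Set (List E)) : Submodule (ZMod 2) (ListChain E) :=
  Finsupp.supported (ZMod 2) (ZMod 2) S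

lemma single_mem_supportedOn {S : Set (List E)} {l : List E} (h : l ∈ S) :
    single l 1 ∈ supportedOn S :=
  Finsupp.single_mem_supported _ _ h

lemma supportedOn_mono {S T : Set (List E)} (h : S ⊆ T) {c : ListChain E}
    (hc : c ∈ supportedOn S) : c ∈ supportedOn T :=
  Finsupp.supported_mono h hc

lemma mapsTo_supportedOn {S : Set (List E)} {M : Type*} [AddCommMonoid M] [Module (ZMod 2) M]
    {p : Submodule (ZMod 2) M} {f : ListChain E →ₗ[ZMod 2] M}
    (h : ∀ l ∈ S, f (single l 1) ∈ p) {c : ListChain E} (hc : c ∈ supportedOn S) : f c ∈ p := by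
  have hle : supportedOn S ≤ p.comap f := by
    rw [supportedOn, Finsupp.supported_eq_span_single, Submodule.span_le]
    rintro _ ⟨l, hl, rfl⟩
    exact h l hl
  exact hle hc

lemma eqOn_supportedOn {S : Set (List E)} {M : Type*} [AddCommGroup M] [Module (ZMod 2) M]
    {f g : ListChain E →ₗ[ZMod 2] M} (h : ∀ l ∈ S, f (single l 1) = g (single l 1))
    {c : ListChain E} (hc : c ∈ supportedOn S) : f c = g c :=
  mapsTo_supportedOn (p := LinearMap.eqLocus f g) (f := LinearMap.id) h hc

lemma cone_mem_supportedOn {S T : Set (List E)} {v : E} (h : ∀ l ∈ S, v :: l ∈ T)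
    {c : ListChain E} (hc : c ∈ supportedOn S) : cone v c ∈ supportedOn T :=
  mapsTo_supportedOn (fun l hl => by simpa using single_mem_supportedOn (h l hl)) hc

lemma boundaryList_mem_supportedOn (l : List E) :
    boundaryList l ∈ supportedOn {l' | l'.Sublist l ∧ l'.length + 1 = l.length} := by
  induction l with
  | nil => exact Submodule.zero_mem _
  | cons v l ih =>
    refine Submodule.add_mem _ (single_mem_supportedOn ⟨List.sublist_cons_self v l, rfl⟩) ?_
    refine cone_mem_supportedOn (fun l' hl' => ?_) ih
    exact ⟨hl'.1.cons_cons v, by simp [hl'.2]⟩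

/-- The indicator of the lists of signs `s, !s, s, …` that alternate starting with `s`. -/
def alternatingFrom : Bool → List Bool → ZMod 2
  | _, [] => 1
  | s, x :: l => if x = s then alternatingFrom (!s) l else 0

lemma alternatingFrom_map_not (s : Bool) (l : List Bool) :
    alternatingFrom s (l.map not) = alternatingFrom (!s) l := by
  induction l generalizing s with
  | nil => rfl
  | cons x l ih => cases x <;> cases s <;> simp [alternatingFrom, ih]

lemma isChain_ne_of_alternatingFrom_ne_zero {s : Bool} {l : List Bool}
    (h : alternatingFrom s l ≠ 0) : l.IsChain (· ≠ ·) := by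
  induction l generalizing s with
  | nil => exact .nil
  | cons x l ih =>
    obtain ⟨rfl, hl⟩ : x = s ∧ alternatingFrom (!s) l ≠ 0 := by simpa [alternatingFrom] using h
    cases l with
    | nil => exact .singleton _
    | cons y l =>
      obtain ⟨rfl, -⟩ : y = !x ∧ _ := by simpa [alternatingFrom] using hl
      exact .cons_cons (by simp) (ih hl)

lemma pairing_alternatingFrom_boundaryList (s : Bool) (l : List Bool) :
    pairing (alternatingFrom s) (boundaryList l) =
      alternatingFrom s l + alternatingFrom (!s) l := by
  induction l generalizing s with
  | nil => simpa [boundaryList, alternatingFrom] using (ZModModule.add_self (1 : ZMod 2)).symm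
  | cons x l ih =>
    by_cases hx : x = s
    · have hcone : (fun t => alternatingFrom s (x :: t)) = alternatingFrom (!s) := by
        simp [alternatingFrom, hx]
      simp only [boundaryList, map_add, pairing_single, pairing_cone, hcone, ih, Bool.not_not]
      rw [add_left_comm, ZModModule.add_self]
      simp [alternatingFrom, hx]
    · have hcone : pairing (fun t => alternatingFrom s (x :: t)) = 0 :=
        hom_ext fun t => by simp [alternatingFrom, hx]
      simp only [boundaryList, map_add, pairing_single, pairing_cone, hcone, LinearMap.zero_apply]
      simp [alternatingFrom, Bool.eq_not.mpr hx]

end ListChain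

/-- The labels `±a`, `a : α`, of Tucker's lemma, with `true` as the sign `+`. They are ordered
lexicographically, so that sorting a list of labels sorts it by index. -/
abbrev SignedLabel (α : Type*) := α ×ₗ Bool

namespace SignedLabel

open ListChain

variable {α : Type*}

/-- The index `a` of the label `±a`. -/
def index (x : SignedLabel α) : α := (ofLex x).1

/-- The sign of a label. -/
def sign (x : SignedLabel α) : Bool := (ofLex x).2

/-- The label with the same index and opposite sign. -/
def flip (x : SignedLabel α) : SignedLabel α := toLex (x.index, !x.sign)

lemma sign_comp_flip : sign ∘ flip = not ∘ sign (α := α) := rfl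

lemma eq_or_eq_flip_of_index_eq {x y : SignedLabel α} (h : x.index = y.index) :
    x = y ∨ x = y.flip := by
  rcases Bool.eq_or_eq_not x.sign y.sign with hs | hs
  · exact Or.inl (congrArg toLex (Prod.ext h hs))
  · exact Or.inr (congrArg toLex (Prod.ext h hs))

/-- A list of labels is free of complementary pairs if it never contains both `a` and `-a`. -/
def ComplementaryFree (L : List (SignedLabel α)) : Prop := ∀ x ∈ L, x.flip ∉ L

lemma ComplementaryFree.eq_of_index_eq {L : List (SignedLabel α)} (hL : ComplementaryFree L)
    {x y : SignedLabel α} (hx : x ∈ L) (hy : y ∈ L) (h : x.index = y.index) : x = y :=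
  (eq_or_eq_flip_of_index_eq h).resolve_right fun hxy => hL y hy (hxy ▸ hx)

variable [LinearOrder α]

/-- The cochain counting the simplices whose labels, sorted by index, are alternately positive and
negative, starting with a positive one. -/
def alternation (L : List (SignedLabel α)) : ZMod 2 :=
  alternatingFrom true (((L : Multiset (SignedLabel α)).sort (· ≤ ·)).map sign)

lemma sort_perm (L : List (SignedLabel α)) :
    ((L : Multiset (SignedLabel α)).sort (· ≤ ·)).Perm L :=
  Multiset.coe_eq_coe.mp (Multiset.sort_eq _ _)

lemma sort_of_pairwise_le {L : List (SignedLabel α)} (hL : L.Pairwise (· ≤ ·)) :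
    (L : Multiset (SignedLabel α)).sort (· ≤ ·) = L :=
  (sort_perm L).eq_of_pairwise' (Multiset.pairwise_sort _ _) hL

lemma alternation_perm ⦃L L' : List (SignedLabel α)⦄ (h : L.Perm L') :
    alternation L = alternation L' := by
  rw [alternation, alternation, Multiset.coe_eq_coe.mpr h]

lemma alternation_of_pairwise_le {L : List (SignedLabel α)} (hL : L.Pairwise (· ≤ ·)) :
    alternation L = alternatingFrom true (L.map sign) := by
  rw [alternation, sort_of_pairwise_le hL]

lemma pairwise_le_map_flip {L : List (SignedLabel α)} (hL : ComplementaryFree L)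
    (hs : L.Pairwise (· ≤ ·)) : (L.map flip).Pairwise (· ≤ ·) := by
  refine List.pairwise_map.mpr (hs.imp_of_mem fun {x y} hx hy hxy => ?_)
  rcases (Prod.Lex.le_iff.mp hxy) with h | ⟨h, -⟩
  · exact Prod.Lex.le_iff.mpr (Or.inl h)
  · rw [hL.eq_of_index_eq hx hy h]

/-- Deleting one vertex from a sorted list of labels keeps it sorted, so that the claim reduces to
lists of signs. -/
lemma pairing_alternation_boundaryList {L : List (SignedLabel α)} (hL : ComplementaryFree L) :
    pairing alternation (boundaryList L) = alternation L + alternation (L.map flip) := by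
  wlog hs : L.Pairwise (· ≤ ·) generalizing L
  · have hp := sort_perm L
    rw [← pairing_boundaryList_perm alternation_perm hp, ← alternation_perm hp,
      ← alternation_perm (hp.map flip)]
    refine this (fun x hx hx' => hL x (hp.subset hx) (hp.subset hx')) ?_
    exact Multiset.pairwise_sort _ _
  have hsigns : pairing alternation (boundaryList L) =
      pairing (alternatingFrom true) (boundaryList (L.map sign)) := by
    rw [← map_boundaryList, pairing_map]
    refine eqOn_supportedOn (fun l hl => ?_) (boundaryList_mem_supportedOn L)
    simpa using alternation_of_pairwise_le (hs.sublist hl.1)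
  rw [hsigns, pairing_alternatingFrom_boundaryList, alternation_of_pairwise_le hs,
    alternation_of_pairwise_le (pairwise_le_map_flip hL hs), List.map_map, sign_comp_flip,
    ← List.map_map, alternatingFrom_map_not]

lemma length_le_card_of_alternation_ne_zero [Fintype α] {L : List (SignedLabel α)}
    (hL : ComplementaryFree L) (h : alternation L ≠ 0) : L.length ≤ Fintype.card α := by
  wlog hs : L.Pairwise (· ≤ ·) generalizing L
  · have hp := sort_perm L
    rw [← hp.length_eq]
    refine this (fun x hx hx' => hL x (hp.subset hx) (hp.subset hx')) ?_ ?_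
    · rwa [alternation_perm hp]
    · exact Multiset.pairwise_sort _ _
  have hne : L.IsChain (· ≠ ·) := by
    rw [alternation_of_pairwise_le hs] at h
    exact ((List.isChain_map _).mp (isChain_ne_of_alternatingFrom_ne_zero h)).imp
      fun _ _ hxy => ne_of_apply_ne sign hxy
  have hlt : L.IsChain (· < ·) :=
    List.isChain_iff_forall_rel_of_append_cons_cons.mpr fun _ _ _ _ hL =>
      (List.isChain_iff_forall_rel_of_append_cons_cons.mp hs.isChain hL).lt_of_ne
        (List.isChain_iff_forall_rel_of_append_cons_cons.mp hne hL)
  have hnodup : (L.map index).Nodup :=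
    (List.isChain_iff_pairwise.mp hlt).nodup.map_on fun x hx y hy => hL.eq_of_index_eq hx hy
  simpa using hnodup.length_le_card

end SignedLabel

/-! ### Barycentric subdivision -/

section Barycenter

variable {E : Type*} [NormedAddCommGroup E]

lemma norm_sum_sub_nsmul_le {v : E} {D : ℝ} {l : List E} (h : ∀ x ∈ l, dist x v ≤ D) :
    ‖l.sum - l.length • v‖ ≤ l.length * D := by
  induction l with
  | nil => simp
  | cons x l ih =>
    obtain ⟨hx, hl⟩ := List.forall_mem_cons.mp h
    calc ‖(x :: l).sum - (x :: l).length • v‖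
        = ‖(x - v) + (l.sum - l.length • v)‖ := by
          rw [List.sum_cons, List.length_cons, succ_nsmul]
          congr 1
          abel
      _ ≤ D + l.length * D := norm_add_le_of_le (dist_eq_norm x v ▸ hx) (ih hl)
      _ = (x :: l).length * D := by push_cast [List.length_cons]; ring

variable [NormedSpace ℝ E]

/-- The barycenter of the vertices of a simplex; it is `0` for the empty simplex. -/
noncomputable def barycenter (l : List E) : E := (l.length : ℝ)⁻¹ • l.sum

lemma barycenter_map_neg (l : List E) : barycenter (l.map Neg.neg) = -barycenter l := by
  rw [barycenter, barycenter, List.length_map, ← smul_neg, List.sum_neg]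

lemma barycenter_mem {K : Set E} (hK : Convex ℝ K) {l : List E} (hl : l ≠ [])
    (h : ∀ x ∈ l, x ∈ K) : barycenter l ∈ K := by
  have hlen : (l.length : ℝ) ≠ 0 := by simpa using hl
  rw [barycenter, ← Fin.sum_univ_getElem, Finset.smul_sum]
  refine hK.sum_mem (fun _ _ => by positivity) ?_ fun i _ => h _ (l.getElem_mem i.isLt)
  simp [hlen]

/-- Since `v` itself does not contribute, only `length - 1` of the vertices are at distance up to
`D` from `v`; this is the source of the contraction under subdivision. -/
lemma dist_barycenter_le {v : E} {D : ℝ} {l : List E} (hv : v ∈ l) (h : ∀ x ∈ l, dist x v ≤ D) :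
    dist (barycenter l) v ≤ (l.length - 1) / l.length * D := by
  classical
  have hperm := List.perm_cons_erase hv
  have hlen : (l.length : ℝ) = (l.erase v).length + 1 := by exact_mod_cast hperm.length_eq
  have hbary : barycenter l - v =
      (l.length : ℝ)⁻¹ • ((l.erase v).sum - (l.erase v).length • v) := by
    rw [barycenter, hperm.sum_eq, List.sum_cons, hlen, ← Nat.cast_smul_eq_nsmul ℝ]
    match_scalars <;> field_simp
    ring
  calc dist (barycenter l) v
      = (l.length : ℝ)⁻¹ * ‖(l.erase v).sum - (l.erase v).length • v‖ := by
        rw [dist_eq_norm, hbary, norm_smul, norm_inv, Real.norm_natCast]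
    _ ≤ (l.length : ℝ)⁻¹ * ((l.erase v).length * D) := by
        gcongr
        exact norm_sum_sub_nsmul_le fun x hx => h x (List.mem_of_mem_erase hx)
    _ = (l.length - 1) / l.length * D := by rw [hlen]; ring

end Barycenter

namespace ListChain

open Finsupp (single)

variable {E : Type*} [NormedAddCommGroup E] [NormedSpace ℝ E]

/-- The barycentric subdivision of chains of simplices with `k` vertices. -/
noncomputable def subdivision : ℕ → ListChain E →ₗ[ZMod 2] ListChain E
  | 0 => LinearMap.id
  | k + 1 => Finsupp.linearCombination (ZMod 2) fun l =>
      cone (barycenter l) (subdivision k (boundaryList l))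

lemma subdivision_succ_single (k : ℕ) (l : List E) :
    subdivision (k + 1) (single l 1) = cone (barycenter l) (subdivision k (boundaryList l)) := by
  simp [subdivision]

lemma boundary_subdivision_succ (k : ℕ) (c : ListChain E) :
    boundary (subdivision (k + 1) c) = subdivision k (boundary c) := by
  suffices h : boundary ∘ₗ subdivision (k + 1) = subdivision k ∘ₗ boundary (E := E) from
    LinearMap.congr_fun h c
  refine hom_ext fun l => ?_
  have hcycle : boundary (subdivision k (boundaryList l)) = 0 := by
    cases k with
    | zero => exact boundary_boundaryList l
    | succ k => rw [boundary_subdivision_succ k, boundary_boundaryList, map_zero]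
  simp [subdivision_succ_single, boundary_cone, hcycle]

lemma map_neg_subdivision (k : ℕ) (c : ListChain E) :
    map Neg.neg (subdivision k c) = subdivision k (map Neg.neg c) := by
  induction k generalizing c with
  | zero => rfl
  | succ k ih =>
    have h : map Neg.neg ∘ₗ subdivision (k + 1) = subdivision (k + 1) ∘ₗ map (E := E) Neg.neg :=
      hom_ext fun l => by
        simp [subdivision_succ_single, map_cone, barycenter_map_neg, ih, map_boundaryList]
    exact LinearMap.congr_fun h c

lemma boundary_subdivision_pow (k m : ℕ) (c : ListChain E) :
    boundary ((subdivision (k + 1) ^ m) c) = (subdivision k ^ m) (boundary c) := by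
  have h : subdivision k ∘ₗ boundary = boundary ∘ₗ subdivision (E := E) (k + 1) :=
    LinearMap.ext fun c => (boundary_subdivision_succ k c).symm
  exact (LinearMap.congr_fun (Module.End.commute_pow_left_of_commute h m) c).symm

lemma map_neg_subdivision_pow (k m : ℕ) (c : ListChain E) :
    map Neg.neg ((subdivision k ^ m) c) = (subdivision k ^ m) (map Neg.neg c) := by
  have h : subdivision k ∘ₗ map Neg.neg = map Neg.neg ∘ₗ subdivision (E := E) k :=
    LinearMap.ext fun c => (map_neg_subdivision k c).symm
  exact (LinearMap.congr_fun (Module.End.commute_pow_left_of_commute h m) c).symm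

/-- The simplices with `k` vertices, all in a common member of `𝒦` and at mutual distances at most
`D`. -/
def fineSimplices (𝒦 : Set (Set E)) (k : ℕ) (D : ℝ) : Set (List E) :=
  {l | l.length = k ∧ (∃ K ∈ 𝒦, ∀ x ∈ l, x ∈ K) ∧ ∀ x ∈ l, ∀ y ∈ l, dist x y ≤ D}

lemma barycenter_cons_mem_fineSimplices {𝒦 : Set (Set E)} (h𝒦 : ∀ K ∈ 𝒦, Convex ℝ K) {k n : ℕ}
    (hk : k ≤ n) {D : ℝ} {l l' : List E} (hl : l ∈ fineSimplices 𝒦 (k + 1) D)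
    (hl' : l' ∈ fineSimplices {convexHull ℝ {x | x ∈ l}} k (n / (n + 1) * D)) :
    barycenter l :: l' ∈ fineSimplices 𝒦 (k + 1) (n / (n + 1) * D) := by
  obtain ⟨hlen, ⟨K, hK, hlK⟩, hdist⟩ := hl
  obtain ⟨hlen', ⟨_, rfl, hhull⟩, hdist'⟩ := hl'
  have hne : l ≠ [] := List.ne_nil_of_length_eq_add_one hlen
  have hD : 0 ≤ D := by
    obtain ⟨v, hv⟩ := List.exists_mem_of_ne_nil l hne
    simpa using hdist v hv v hv
  have hratio : ((l.length : ℝ) - 1) / l.length ≤ n / (n + 1) := by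
    rw [hlen, div_le_div_iff₀ (by positivity) (by positivity)]
    have : (k : ℝ) ≤ n := mod_cast hk
    push_cast
    linarith
  have hball : ∀ y ∈ l', dist y (barycenter l) ≤ n / (n + 1) * D := fun y hy =>
    convexHull_min (t := Metric.closedBall (barycenter l) (n / (n + 1) * D))
      (fun v hv => Metric.mem_closedBall'.mpr
        ((dist_barycenter_le hv fun x hx => hdist x hx v hv).trans (by gcongr)))
      (convex_closedBall _ _) (hhull y hy)
  refine ⟨by simp [hlen'], ⟨K, hK, List.forall_mem_cons.mpr ⟨barycenter_mem (h𝒦 K hK) hne hlK,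
    fun x hx => convexHull_min hlK (h𝒦 K hK) (hhull x hx)⟩⟩, ?_⟩
  simp only [List.forall_mem_cons, dist_self]
  exact ⟨⟨by positivity, fun y hy => dist_comm y (barycenter l) ▸ hball y hy⟩,
    fun x hx => ⟨hball x hx, hdist' x hx⟩⟩

lemma subdivision_mem_fineSimplices {𝒦 : Set (Set E)} (h𝒦 : ∀ K ∈ 𝒦, Convex ℝ K) {k n : ℕ}
    (hk : k ≤ n + 1) {D : ℝ} {c : ListChain E} (hc : c ∈ supportedOn (fineSimplices 𝒦 k D)) :
    subdivision k c ∈ supportedOn (fineSimplices 𝒦 k (n / (n + 1) * D)) := by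
  refine mapsTo_supportedOn (fun l hl => ?_) hc
  clear hc
  induction k generalizing 𝒦 l with
  | zero =>
    obtain ⟨hlen, hK, -⟩ := hl
    obtain rfl := List.length_eq_zero_iff.mp hlen
    exact single_mem_supportedOn ⟨rfl, hK, by simp⟩
  | succ k ih =>
    rw [subdivision_succ_single]
    refine cone_mem_supportedOn
      (fun l' hl' => barycenter_cons_mem_fineSimplices h𝒦 (Nat.le_of_succ_le_succ hk) hl hl') ?_
    refine mapsTo_supportedOn (fun l' hl' => ?_) (boundaryList_mem_supportedOn l)
    refine ih (by simpa using convex_convexHull ℝ _) (Nat.le_of_succ_le hk)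
      l' ⟨by linarith [hl.1, hl'.2], ⟨_, rfl, fun x hx => ?_⟩, ?_⟩
    · exact subset_convexHull ℝ _ (hl'.1.subset hx)
    · exact fun x hx y hy => hl.2.2 x (hl'.1.subset hx) y (hl'.1.subset hy)

lemma subdivision_pow_mem_fineSimplices {𝒦 : Set (Set E)} (h𝒦 : ∀ K ∈ 𝒦, Convex ℝ K) {k n : ℕ}
    (hk : k ≤ n + 1) {D : ℝ} {c : ListChain E} (hc : c ∈ supportedOn (fineSimplices 𝒦 k D))
    (m : ℕ) :
    (subdivision k ^ m) c ∈ supportedOn (fineSimplices 𝒦 k ((n / (n + 1)) ^ m * D)) := by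
  induction m with
  | zero => simpa using hc
  | succ m ih =>
    rw [pow_succ' (subdivision k), pow_succ', mul_assoc]
    exact subdivision_mem_fineSimplices h𝒦 hk ih

end ListChain

/-! ### The Borsuk–Ulam theorem -/

namespace ListChain

open Finsupp (single)
open SignedLabel

section CrossPolytope

variable {E : Type*} [AddCommGroup E]

/-- The boundary of the cross-polytope with vertices `±v`, `v ∈ L`, as a mod-2 chain. -/
noncomputable def crossPolytope : List E → ListChain E
  | [] => single [] 1
  | v :: L => cone v (crossPolytope L) + map Neg.neg (cone v (crossPolytope L))

/-- The facets of the cross-polytope with vertices `±v`, `v ∈ L`: one sign is chosen for each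
member of `L`. -/
def facets (L : List E) : Set (List E) := {l | List.Forall₂ (fun x v => x = v ∨ x = -v) l L}

lemma facets_finite (L : List E) : (facets L).Finite := by
  induction L with
  | nil => exact (Set.finite_singleton []).subset fun l hl => List.forall₂_nil_right_iff.mp hl
  | cons v L ih =>
    refine ((Set.toFinite {v, -v}).image2 List.cons ih).subset ?_
    rintro _ (_ | ⟨hx, hl⟩)
    exact Set.mem_image2_of_mem hx hl

lemma map_neg_mem_facets {l L : List E} (h : l ∈ facets L) : l.map Neg.neg ∈ facets L :=
  List.forall₂_map_left_iff.mpr (h.imp fun x v hx => by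
    rcases hx with rfl | rfl <;> simp)

lemma map_neg_crossPolytope (L : List E) : map Neg.neg (crossPolytope L) = crossPolytope L := by
  cases L with
  | nil => simp [crossPolytope]
  | cons v L => rw [crossPolytope, map_add, map_map_of_involutive neg_involutive, add_comm]

lemma boundary_crossPolytope (L : List E) : boundary (crossPolytope L) = 0 := by
  induction L with
  | nil => simp [crossPolytope, boundaryList]
  | cons v L ih =>
    rw [crossPolytope, map_add, ← map_boundary, boundary_cone, ih, map_zero, add_zero,
      map_neg_crossPolytope, ZModModule.add_self]

lemma boundary_cone_crossPolytope (v : E) (L : List E) :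
    boundary (cone v (crossPolytope L)) = crossPolytope L := by
  rw [boundary_cone, boundary_crossPolytope, map_zero, add_zero]

lemma crossPolytope_mem_supportedOn (L : List E) : crossPolytope L ∈ supportedOn (facets L) := by
  induction L with
  | nil => exact single_mem_supportedOn .nil
  | cons v L ih =>
    have h := cone_mem_supportedOn (T := facets (v :: L)) (fun l hl => .cons (Or.inl rfl) hl) ih
    refine Submodule.add_mem _ h (mapsTo_supportedOn (fun l hl => ?_) h)
    rw [map_single]
    exact single_mem_supportedOn (map_neg_mem_facets hl)

end CrossPolytope

section Labelling

variable {E α : Type*} [AddCommGroup E] [LinearOrder α] {X : Set E} {lab : E → SignedLabel α}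

/-- The simplices with `k` vertices, all in `X`, whose labels contain no complementary pair. -/
def complementaryFreeSimplices (X : Set E) (lab : E → SignedLabel α) (k : ℕ) : Set (List E) :=
  {l | l.length = k ∧ (∀ x ∈ l, x ∈ X) ∧ ComplementaryFree (l.map lab)}

lemma pairing_alternation_boundary (hodd : ∀ x ∈ X, lab (-x) = (lab x).flip) {k : ℕ}
    {c : ListChain E} (hc : c ∈ supportedOn (complementaryFreeSimplices X lab k)) :
    pairing (fun l => alternation (l.map lab)) (boundary c) =
      pairing (fun l => alternation (l.map lab)) (c + map Neg.neg c) := by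
  refine eqOn_supportedOn (f := pairing _ ∘ₗ boundary)
    (g := pairing _ ∘ₗ (LinearMap.id + map Neg.neg)) (fun l hl => ?_) hc
  have hneg : (l.map Neg.neg).map lab = (l.map lab).map flip := by
    rw [List.map_map, List.map_map]
    exact List.map_congr_left fun x hx => hodd x (hl.2.1 x hx)
  simp only [LinearMap.comp_apply, LinearMap.add_apply, LinearMap.id_apply, map_add, map_single,
    boundary_single, pairing_single, hneg]
  rw [← pairing_map, map_boundaryList, pairing_alternation_boundaryList hl.2.2]

end Labelling

section Tucker

variable {E α : Type*} [NormedAddCommGroup E] [NormedSpace ℝ E] {X : Set E}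
  {lab : E → SignedLabel α}

/-- The boundary of the cross-polytope with vertices `±v`, `v ∈ L`, as a point set. -/
def crossPolytopeSphere (L : List E) : Set E := ⋃ l ∈ facets L, convexHull ℝ {x | x ∈ l}

lemma isCompact_crossPolytopeSphere (L : List E) : IsCompact (crossPolytopeSphere L) :=
  (facets_finite L).isCompact_biUnion fun l _ => l.finite_toSet.isCompact_convexHull (𝕜 := ℝ)

lemma crossPolytopeSphere_subset_cons (v : E) (L : List E) :
    crossPolytopeSphere L ⊆ crossPolytopeSphere (v :: L) := by
  refine Set.iUnion₂_subset fun l hl x hx => ?_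
  have hvl : v :: l ∈ facets (v :: L) := .cons (Or.inl rfl) hl
  exact Set.mem_biUnion hvl (convexHull_mono (fun _ => List.mem_cons_of_mem v) hx)

lemma facets_subset_fineSimplices {L : List E} {D : ℝ}
    (hD : ∀ x ∈ crossPolytopeSphere L, ∀ y ∈ crossPolytopeSphere L, dist x y ≤ D) :
    facets L ⊆ fineSimplices ((fun l => convexHull ℝ {x | x ∈ l}) '' facets L) L.length D := by
  intro l hl
  have hsub : ∀ x ∈ l, x ∈ crossPolytopeSphere L := fun x hx =>
    Set.mem_biUnion hl (subset_convexHull ℝ _ hx)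
  exact ⟨List.Forall₂.length_eq hl, ⟨_, ⟨l, hl, rfl⟩, fun x hx => subset_convexHull ℝ _ hx⟩,
    fun x hx y hy => hD x (hsub x hx) y (hsub y hy)⟩

lemma subdivision_pow_mem_complementaryFreeSimplices {L : List E}
    (hL : crossPolytopeSphere L ⊆ X) {n m : ℕ} (hn : L.length ≤ n + 1) {D : ℝ}
    (hD : ∀ x ∈ X, ∀ y ∈ X, dist x y ≤ D)
    (hfine : ∀ x ∈ X, ∀ y ∈ X, dist x y ≤ (n / (n + 1)) ^ m * D → lab x ≠ (lab y).flip)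
    {c : ListChain E} (hc : c ∈ supportedOn (facets L)) :
    (subdivision L.length ^ m) c ∈
      supportedOn (complementaryFreeSimplices X lab L.length) := by
  have hc' := supportedOn_mono (facets_subset_fineSimplices fun x hx y hy =>
    hD x (hL hx) y (hL hy)) hc
  refine supportedOn_mono ?_ (subdivision_pow_mem_fineSimplices ?_ hn hc' m)
  · rintro l ⟨hlen, ⟨_, ⟨l', hl', rfl⟩, hl⟩, hdist⟩
    have hlX : ∀ x ∈ l, x ∈ X := fun x hx => hL (Set.mem_biUnion hl' (hl x hx))
    refine ⟨hlen, hlX, List.forall_mem_map.mpr fun y hy hy' => ?_⟩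
    obtain ⟨x, hx, hxy⟩ := List.mem_map.mp hy'
    exact hfine x (hlX x hx) y (hlX y hy) (hdist x hx y hy) hxy
  · rintro _ ⟨l, -, rfl⟩
    exact convex_convexHull ℝ _

variable [LinearOrder α]

/-- The subdivided sphere is `c + (-c)`, where `c` is its half containing `v`, and the boundary
of `c` is the subdivided sphere of one dimension less. -/
lemma pairing_alternation_subdivision_crossPolytope {L : List E}
    (hL : crossPolytopeSphere L ⊆ X) {n m : ℕ} (hn : L.length ≤ n + 1) {D : ℝ}
    (hD : ∀ x ∈ X, ∀ y ∈ X, dist x y ≤ D)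
    (hodd : ∀ x ∈ X, lab (-x) = (lab x).flip)
    (hfine : ∀ x ∈ X, ∀ y ∈ X, dist x y ≤ (n / (n + 1)) ^ m * D → lab x ≠ (lab y).flip) :
    pairing (fun l => alternation (l.map lab))
      ((subdivision L.length ^ m) (crossPolytope L)) = 1 := by
  induction L with
  | nil =>
    have hid : subdivision (E := E) ([] : List E).length ^ m = 1 := one_pow m
    rw [hid, Module.End.one_apply, crossPolytope, pairing_single]
    simp [alternation, alternatingFrom]
  | cons v L ih =>
    have hhalf : cone v (crossPolytope L) ∈ supportedOn (facets (v :: L)) :=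
      cone_mem_supportedOn (fun l hl => .cons (Or.inl rfl) hl) (crossPolytope_mem_supportedOn L)
    rw [crossPolytope, map_add, ← map_neg_subdivision_pow, ← pairing_alternation_boundary hodd
      (subdivision_pow_mem_complementaryFreeSimplices (X := X) hL hn hD hfine hhalf),
      List.length_cons, boundary_subdivision_pow, boundary_cone_crossPolytope]
    exact ih ((crossPolytopeSphere_subset_cons v L).trans hL) (Nat.le_of_succ_le hn)

/-- A form of the Tucker–Fan lemma. -/
theorem length_le_card_of_odd_labelling [Fintype α] {L : List E} {δ : ℝ} (hδ : 0 < δ)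
    (hodd : ∀ x ∈ crossPolytopeSphere L, lab (-x) = (lab x).flip)
    (hfine : ∀ x ∈ crossPolytopeSphere L, ∀ y ∈ crossPolytopeSphere L,
      dist x y < δ → lab x ≠ (lab y).flip) :
    L.length ≤ Fintype.card α := by
  by_contra! hcard
  obtain ⟨D, hD⟩ := Metric.isBounded_iff.mp (isCompact_crossPolytopeSphere L).isBounded
  obtain ⟨m, hm⟩ : ∃ m : ℕ, (L.length / (L.length + 1) : ℝ) ^ m * D < δ := by
    have hlim := (tendsto_pow_atTop_nhds_zero_of_lt_one (r := (L.length / (L.length + 1) : ℝ))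
      (by positivity) ((div_lt_one (by positivity)).mpr (lt_add_one _))).mul_const D
    rw [zero_mul] at hlim
    exact (hlim.eventually_lt_const hδ).exists
  have hD' : ∀ x ∈ crossPolytopeSphere L, ∀ y ∈ crossPolytopeSphere L, dist x y ≤ D :=
    fun x hx y hy => hD hx hy
  have hfine' := fun x hx y hy hxy => hfine x hx y hy (lt_of_le_of_lt hxy hm)
  have hmem := subdivision_pow_mem_complementaryFreeSimplices subset_rfl (Nat.le_succ _) hD' hfine'
    (crossPolytope_mem_supportedOn L)
  have hzero : pairing (fun l => alternation (l.map lab))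
      ((subdivision L.length ^ m) (crossPolytope L)) = 0 := by
    refine eqOn_supportedOn (g := 0) (fun l hl => ?_) hmem
    rw [pairing_single, LinearMap.zero_apply]
    by_contra hne
    have hle := length_le_card_of_alternation_ne_zero hl.2.2 hne
    rw [List.length_map, hl.1] at hle
    exact hle.not_gt hcard
  rw [pairing_alternation_subdivision_crossPolytope subset_rfl (Nat.le_succ _) hD' hodd hfine']
    at hzero
  exact one_ne_zero hzero

end Tucker

end ListChain

section BorsukUlam

open SignedLabel ListChain

variable {ι : Type*}

/-- The label of a vector: the index and the sign of a coordinate of maximal absolute value. -/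
noncomputable def dominantLabel [Finite ι] [Nonempty ι] (y : ι → ℝ) : SignedLabel ι :=
  let i := Classical.choose (Finite.exists_max fun i => |y i|)
  toLex (i, decide (0 < y i))

section

variable [Finite ι] [Nonempty ι]

lemma abs_le_abs_dominantLabel_index (y : ι → ℝ) (i : ι) : |y i| ≤ |y (dominantLabel y).index| :=
  Classical.choose_spec (Finite.exists_max fun i => |y i|) i

lemma dominantLabel_sign (y : ι → ℝ) :
    (dominantLabel y).sign = decide (0 < y (dominantLabel y).index) := rfl

lemma dominantLabel_index_neg (y : ι → ℝ) :
    (dominantLabel (-y)).index = (dominantLabel y).index := by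
  simp [dominantLabel, index]

lemma dominantLabel_neg {y : ι → ℝ} (hy : y ≠ 0) : dominantLabel (-y) = (dominantLabel y).flip := by
  have hi : y (dominantLabel y).index ≠ 0 := fun h =>
    hy (funext fun i => abs_nonpos_iff.mp (by simpa [h] using abs_le_abs_dominantLabel_index y i))
  refine congrArg toLex (Prod.ext (dominantLabel_index_neg y) ?_)
  change (dominantLabel (-y)).sign = !(dominantLabel y).sign
  rw [dominantLabel_sign, dominantLabel_sign, dominantLabel_index_neg, ← decide_not,
    decide_eq_decide, Pi.neg_apply, neg_pos, not_lt]
  exact hi.le_iff_lt.symm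

end

lemma norm_le_dist_of_dominantLabel_eq_flip [Fintype ι] [Nonempty ι] {x y : ι → ℝ}
    (h : dominantLabel x = (dominantLabel y).flip) : ‖x‖ ≤ dist x y := by
  have hindex : (dominantLabel y).index = (dominantLabel x).index := (congrArg index h).symm
  have hsign : (dominantLabel x).sign = !(dominantLabel y).sign := congrArg sign h
  rw [dominantLabel_sign, dominantLabel_sign, hindex, ← decide_not, decide_eq_decide] at hsign
  set i := (dominantLabel x).index
  have hopp : |x i| ≤ |x i - y i| := by grind
  calc ‖x‖ ≤ |x i| := (pi_norm_le_iff_of_nonneg (abs_nonneg _)).mpr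
        (abs_le_abs_dominantLabel_index x)
    _ ≤ dist x y := hopp.trans (dist_le_pi_dist x y i)

variable {E : Type*} [NormedAddCommGroup E] [NormedSpace ℝ E]

lemma zero_notMem_crossPolytopeSphere {n : ℕ} (b : Module.Basis (Fin n) ℝ E) :
    (0 : E) ∉ crossPolytopeSphere (List.ofFn b) := by
  intro h0
  obtain ⟨l, hl, h0⟩ := Set.mem_iUnion₂.mp h0
  obtain ⟨hlen, hl⟩ := List.forall₂_iff_get.mp hl
  rw [List.length_ofFn] at hlen
  have hsign : ∀ i : Fin n, ∃ ε : ℝ, ε * ε = 1 ∧ l[i] = ε • b i := fun i => by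
    rcases hl i (by simp [hlen]) (by simp) with h | h
    · exact ⟨1, by simp, by simpa using h⟩
    · exact ⟨-1, by simp, by simpa using h⟩
  choose ε hε hlε using hsign
  have hhull : convexHull ℝ {x | x ∈ l} ⊆ {x | b.constr ℝ ε x = 1} := by
    refine convexHull_min (fun x hx => ?_) (convex_hyperplane (b.constr ℝ ε).isLinear 1)
    obtain ⟨i, hi, rfl⟩ := List.getElem_of_mem hx
    exact (congrArg (b.constr ℝ ε) (hlε ⟨i, hlen ▸ hi⟩)).trans (by simp [hε])
  simpa using hhull h0

/-- The **Borsuk–Ulam theorem**, for odd maps on the complement of the origin. -/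
theorem exists_eq_zero_of_odd [Fintype ι] {f : E → ι → ℝ}
    (hdim : Fintype.card ι < Module.finrank ℝ E) (hf : ContinuousOn f {0}ᶜ)
    (hodd : ∀ x, f (-x) = -f x) : ∃ x ≠ 0, f x = 0 := by
  have hpos : 0 < Module.finrank ℝ E := (Nat.zero_le _).trans_lt hdim
  have := Module.nontrivial_of_finrank_pos hpos
  have := Module.finite_of_finrank_pos hpos
  let : LinearOrder ι := LinearOrder.lift' (Fintype.equivFin ι) (Fintype.equivFin ι).injective
  by_contra! hne
  cases isEmpty_or_nonempty ι with
  | inl =>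
    obtain ⟨x, hx⟩ := exists_ne (0 : E)
    exact hne x hx (Subsingleton.elim _ _)
  | inr =>
    set L := List.ofFn (Module.finBasis ℝ E)
    have hK := isCompact_crossPolytopeSphere L
    have hK0 : ∀ x ∈ crossPolytopeSphere L, x ≠ 0 := fun x hx h =>
      zero_notMem_crossPolytopeSphere _ (h ▸ hx)
    have hfK := hf.mono hK0
    obtain ⟨η, hη, hfη⟩ := hK.exists_forall_le' hfK.norm fun x hx =>
      norm_pos_iff.mpr (hne x (hK0 x hx))
    obtain ⟨δ, hδ, hfδ⟩ := Metric.uniformContinuousOn_iff.mp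
      (hK.uniformContinuousOn_of_continuous hfK) η hη
    have hcard := length_le_card_of_odd_labelling (lab := fun x => dominantLabel (f x)) hδ
      (fun x hx => (congrArg dominantLabel (hodd x)).trans (dominantLabel_neg (hne x (hK0 x hx))))
      (fun x hx y hy hxy h => (hfδ x hx y hy hxy).not_ge
        ((hfη x hx).trans (norm_le_dist_of_dominantLabel_eq_flip h)))
    rw [List.length_ofFn] at hcard
    exact hcard.not_gt hdim

end BorsukUlam

/-! ### The polynomial ham sandwich theorem -/

section HamSandwich

open Filter

lemma measurable_realSign : Measurable Real.sign :=
  Measurable.ite measurableSet_Iio measurable_const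
    (Measurable.ite measurableSet_Ioi measurable_const measurable_const)

lemma continuousAt_realSign {x : ℝ} (hx : x ≠ 0) : ContinuousAt Real.sign x := by
  rcases hx.lt_or_gt with h | h
  · refine (continuousAt_const (y := (-1 : ℝ))).congr ?_
    filter_upwards [Iio_mem_nhds h] with y hy using (Real.sign_of_neg hy).symm
  · refine (continuousAt_const (y := (1 : ℝ))).congr ?_
    filter_upwards [Ioi_mem_nhds h] with y hy using (Real.sign_of_pos hy).symm

lemma norm_realSign_le_one (x : ℝ) : ‖Real.sign x‖ ≤ 1 := by
  rcases Real.sign_apply_eq x with h | h | h <;> simp [h]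

variable {X : Type*} [MeasurableSpace X] {μ : Measure X}

/-- The zero set of `f` bisects `Q`: `f` is positive and negative on subsets of `Q` of equal
measure. -/
def Bisects (μ : Measure X) (f : X → ℝ) (Q : Set X) : Prop :=
  μ (Q ∩ {x | 0 < f x}) = μ (Q ∩ {x | f x < 0})

lemma setIntegral_realSign {f : X → ℝ} (hf : Measurable f) {Q : Set X} (hQ : μ Q ≠ ∞) :
    ∫ x in Q, Real.sign (f x) ∂μ = μ.real (Q ∩ {x | 0 < f x}) - μ.real (Q ∩ {x | f x < 0}) := by
  have : IsFiniteMeasure (μ.restrict Q) := ⟨by simpa using hQ.lt_top⟩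
  have hpos : MeasurableSet {x | 0 < f x} := measurableSet_lt measurable_const hf
  have hneg : MeasurableSet {x | f x < 0} := measurableSet_lt hf measurable_const
  have hsign : ∀ x, Real.sign (f x) =
      {x | 0 < f x}.indicator 1 x - {x | f x < 0}.indicator 1 x := fun x => by
    rcases lt_trichotomy (f x) 0 with h | h | h <;>
      simp [h, h.not_gt, Real.sign_of_neg, Real.sign_of_pos]
  simp_rw [hsign]
  rw [integral_sub ((integrable_const 1).indicator hpos) ((integrable_const 1).indicator hneg),
    integral_indicator_one hpos, integral_indicator_one hneg, measureReal_restrict_apply hpos,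
    measureReal_restrict_apply hneg, Set.inter_comm, Set.inter_comm {x | f x < 0}]

lemma bisects_of_setIntegral_realSign_eq_zero {f : X → ℝ} (hf : Measurable f) {Q : Set X}
    (hQ : μ Q ≠ ∞) (h : ∫ x in Q, Real.sign (f x) ∂μ = 0) : Bisects μ f Q := by
  rw [setIntegral_realSign hf hQ, sub_eq_zero] at h
  exact (ENNReal.toReal_eq_toReal_iff' (measure_ne_top_of_subset Set.inter_subset_left hQ)
    (measure_ne_top_of_subset Set.inter_subset_left hQ)).mp h

/-- The **Stone–Tukey** ham sandwich theorem. -/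
theorem exists_ne_zero_forall_bisects {V : Type*} [NormedAddCommGroup V] [NormedSpace ℝ V]
    {ι : Type*} [Fintype ι] (Φ : V →ₗ[ℝ] X → ℝ) (hmeas : ∀ v, Measurable (Φ v))
    (hae : ∀ v ≠ 0, ∀ᵐ x ∂μ, Φ v x ≠ 0) (hdim : Fintype.card ι < Module.finrank ℝ V)
    {Q : ι → Set X} (hQ : ∀ i, μ (Q i) ≠ ∞) : ∃ v ≠ 0, ∀ i, Bisects μ (Φ v) (Q i) := by
  have := Module.finite_of_finrank_pos ((Nat.zero_le _).trans_lt hdim)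
  let f : V → ι → ℝ := fun v i => ∫ x in Q i, Real.sign (Φ v x) ∂μ
  have hodd : ∀ v, f (-v) = -f v := fun v => by
    ext i
    simp [f, Real.sign_neg, integral_neg]
  have hcont : ContinuousOn f {0}ᶜ := fun v hv => by
    refine (continuousAt_pi.mpr fun i => ?_).continuousWithinAt
    have : IsFiniteMeasure (μ.restrict (Q i)) := ⟨by simpa using (hQ i).lt_top⟩
    refine continuousAt_of_dominated (bound := fun _ => 1) (.of_forall fun v =>
      (measurable_realSign.comp (hmeas v)).aestronglyMeasurable)
      (.of_forall fun v => ae_of_all _ fun x => norm_realSign_le_one _) (integrable_const _) ?_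
    filter_upwards [ae_restrict_of_ae (hae v hv)] with x hx
    exact (continuousAt_realSign hx).comp (f := fun v => Φ v x)
      (LinearMap.proj x ∘ₗ Φ).continuous_of_finiteDimensional.continuousAt
  obtain ⟨v, hv, hfv⟩ := exists_eq_zero_of_odd hdim hcont hodd
  exact ⟨v, hv, fun i =>
    bisects_of_setIntegral_realSign_eq_zero (hmeas v) (hQ i) (congrFun hfv i)⟩

end HamSandwich

section Polynomial

open MvPolynomial

lemma ae_eval_map_ne_zero {n : ℕ} {p : Polynomial (MvPolynomial (Fin n) ℝ)} {y : Fin n → ℝ}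
    (hy : eval y p.leadingCoeff ≠ 0) : ∀ᵐ t : ℝ, (p.map (eval y)).eval t ≠ 0 :=
  have hmap : p.map (eval y) ≠ 0 := fun h => hy <| by
    simpa using congrArg (Polynomial.coeff · p.natDegree) h
  (Polynomial.finite_setOfPred_isRoot hmap).countable.ae_notMem volume

lemma ae_eval_ne_zero {n : ℕ} {P : MvPolynomial (Fin n) ℝ} (hP : P ≠ 0) :
    ∀ᵐ x : Fin n → ℝ, eval x P ≠ 0 := by
  induction n with
  | zero =>
    refine ae_of_all _ fun x hx => hP (MvPolynomial.funext fun y => ?_)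
    rw [Subsingleton.elim y x, hx, map_zero]
  | succ n ih =>
    have hmeas : MeasurableSet {z : ℝ × (Fin n → ℝ) | eval (Fin.cons z.1 z.2) P ≠ 0} :=
      (measurableSet_eq_fun ((continuous_eval P).comp (by fun_prop)).measurable
        measurable_const).compl
    have hprod : ∀ᵐ z : ℝ × (Fin n → ℝ), eval (Fin.cons z.1 z.2) P ≠ 0 := by
      rw [Measure.volume_eq_prod, Measure.ae_prod_iff_ae_ae hmeas,
        Measure.ae_ae_comm (p := fun t y => eval (Fin.cons t y) P ≠ 0) hmeas]
      have hlead : (finSuccEquiv ℝ n P).leadingCoeff ≠ 0 := by simpa using hP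
      filter_upwards [ih hlead] with y hy
      simpa only [eval_eq_eval_mv_eval'] using ae_eval_map_ne_zero hy
    filter_upwards [(volume_preserving_piFinSuccAbove (fun _ : Fin (n + 1) => ℝ)
      0).quasiMeasurePreserving.ae hprod] with x hx
    convert hx
    exact (Fin.cons_self_tail x).symm

/-- The polynomial in `n` variables with given coefficients at the monomials of degree at most `d`
in each variable. Bounding the degrees separately makes the space of polynomials have dimension
exactly `(d + 1) ^ n`. -/
noncomputable def ofCoeffs (n d : ℕ) :
    ((Fin n → Fin (d + 1)) → ℝ) →ₗ[ℝ] MvPolynomial (Fin n) ℝ :=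
  Fintype.linearCombination ℝ fun m =>
    monomial (Finsupp.equivFunOnFinite.symm fun i => (m i : ℕ)) 1

lemma ofCoeffs_injective (n d : ℕ) : Function.Injective (ofCoeffs n d) := by
  have hexp : Function.Injective fun m : Fin n → Fin (d + 1) =>
      Finsupp.equivFunOnFinite.symm fun i => (m i : ℕ) :=
    Finsupp.equivFunOnFinite.symm.injective.comp (Fin.val_injective.comp_left)
  have hli := (basisMonomials (Fin n) ℝ).linearIndependent.comp _ hexp
  rw [coe_basisMonomials] at hli
  exact hli.fintypeLinearCombination_injective

lemma totalDegree_ofCoeffs_le (n d : ℕ) (c : (Fin n → Fin (d + 1)) → ℝ) :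
    (ofCoeffs n d c).totalDegree ≤ n * d := by
  rw [ofCoeffs, Fintype.linearCombination_apply]
  refine totalDegree_finsetSum_le fun m _ => (totalDegree_smul_le _ _).trans ?_
  refine (totalDegree_monomial_le _ _).trans ?_
  rw [Finsupp.sum_fintype _ _ fun _ => rfl]
  calc ∑ i, (m i : ℕ) ≤ ∑ _i : Fin n, d := Finset.sum_le_sum fun i _ => Fin.is_le (m i)
    _ = n * d := by simp

theorem exists_polynomial_forall_bisects {n d : ℕ} {ι : Type*} [Fintype ι]
    (hcard : Fintype.card ι < (d + 1) ^ n) {Q : ι → Set (EuclideanSpace ℝ (Fin n))}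
    (hQ : ∀ i, volume (Q i) ≠ ∞) :
    ∃ P : MvPolynomial (Fin n) ℝ, P ≠ 0 ∧ P.totalDegree ≤ n * d ∧
      ∀ i, Bisects volume (fun x => eval x.ofLp P) (Q i) := by
  let Φ : ((Fin n → Fin (d + 1)) → ℝ) →ₗ[ℝ] EuclideanSpace ℝ (Fin n) → ℝ :=
    LinearMap.pi fun x => (aeval x.ofLp).toLinearMap ∘ₗ ofCoeffs n d
  have hmeas : ∀ c, Measurable (Φ c) := fun c =>
    ((continuous_eval _).comp (PiLp.continuous_ofLp 2 _)).measurable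
  have hne : ∀ c ≠ 0, ofCoeffs n d c ≠ 0 := fun c =>
    (map_ne_zero_iff _ (ofCoeffs_injective n d)).mpr
  have hae : ∀ c ≠ 0, ∀ᵐ x, Φ c x ≠ 0 := fun c hc =>
    (PiLp.volume_preserving_ofLp (Fin n)).quasiMeasurePreserving.ae (ae_eval_ne_zero (hne c hc))
  obtain ⟨c, hc, hbisect⟩ :=
    exists_ne_zero_forall_bisects Φ hmeas hae (by simpa using hcard) hQ
  exact ⟨ofCoeffs n d c, hne c hc, totalDegree_ofCoeffs_le n d c, hbisect⟩

/-- The restriction of a polynomial to the line `s ↦ z + s • v`. -/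
noncomputable def restrictLine {σ R : Type*} [CommRing R] (P : MvPolynomial σ R) (z v : σ → R) :
    Polynomial R :=
  aeval (fun i => Polynomial.C (z i) + Polynomial.C (v i) * Polynomial.X) P

lemma eval_restrictLine {σ R : Type*} [CommRing R] (P : MvPolynomial σ R) (z v : σ → R) (s : R) :
    (restrictLine P z v).eval s = eval (z + s • v) P := by
  rw [restrictLine, ← Polynomial.coe_aeval_eq_eval, ← AlgHom.comp_apply, comp_aeval,
    ← coe_aeval_eq_eval]
  have hline : (fun i => z i + v i * s) = z + s • v := funext fun i => by simp [mul_comm]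
  simp [← hline]

lemma natDegree_restrictLine_le {σ R : Type*} [CommRing R] (P : MvPolynomial σ R) (z v : σ → R) :
    (restrictLine P z v).natDegree ≤ P.totalDegree := by
  simpa [restrictLine] using aeval_natDegree_le P le_rfl
    (fun i => Polynomial.C (z i) + Polynomial.C (v i) * Polynomial.X) (n := 1)
    fun i => by compute_degree

end Polynomial

/-! ### Bisected sets are crossed along a coordinate direction -/

section Shift

variable {X : Type*} [MeasurableSpace X]

lemma Bisects.measure_le {μ : Measure X} {f : X → ℝ} {Q : Set X} (h : Bisects μ f Q)
    (hne : ∀ᵐ x ∂μ, f x ≠ 0) {a : ℝ} (ha : a ≠ 0) :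
    μ Q ≤ 2 * μ (Q ∩ {y | Real.sign (f y) ≠ Real.sign a}) := by
  set N := {y | Real.sign (f y) ≠ Real.sign a}
  have hpos_or_neg : {y | 0 < f y} ⊆ N ∨ {y | f y < 0} ⊆ N := by
    rcases ha.lt_or_gt with ha | ha
    · exact .inl fun y (hy : 0 < f y) => by norm_num [N, Real.sign_of_pos hy, Real.sign_of_neg ha]
    · exact .inr fun y (hy : f y < 0) => by norm_num [N, Real.sign_of_neg hy, Real.sign_of_pos ha]
  have hpos : μ (Q ∩ {y | 0 < f y}) ≤ μ (Q ∩ N) := by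
    rcases hpos_or_neg with hN | hN
    · exact measure_mono (Set.inter_subset_inter_right Q hN)
    · exact h.trans_le (measure_mono (Set.inter_subset_inter_right Q hN))
  calc μ Q ≤ μ (Q ∩ {y | 0 < f y} ∪ Q ∩ {y | f y < 0}) := by
        refine measure_mono_ae ?_
        filter_upwards [hne] with x hx hxQ
        exact hx.lt_or_gt.symm.imp (⟨hxQ, ·⟩) (⟨hxQ, ·⟩)
    _ ≤ μ (Q ∩ {y | 0 < f y}) + μ (Q ∩ {y | f y < 0}) := measure_union_le _ _
    _ = 2 * μ (Q ∩ {y | 0 < f y}) := by rw [← h, two_mul]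
    _ ≤ 2 * μ (Q ∩ N) := by gcongr

variable {E : Type*} [NormedAddCommGroup E] [MeasurableSpace E] [BorelSpace E] {μ : Measure E}
  {f : E → ℝ} {Q : Set E} {r : ℝ}

lemma Bisects.measure_le_shift [μ.IsAddLeftInvariant] (h : Bisects μ f Q)
    (hne : ∀ᵐ x ∂μ, f x ≠ 0) (hdiam : ∀ x ∈ Q, ∀ y ∈ Q, dist x y ≤ r) {x : E} (hx : x ∈ Q)
    (hfx : f x ≠ 0) :
    μ Q ≤ 2 * μ ({u | Real.sign (f (x + u)) ≠ Real.sign (f x)} ∩ Metric.closedBall 0 r) := by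
  refine (h.measure_le hne hfx).trans ?_
  rw [← measure_preimage_add μ x]
  gcongr
  rintro u ⟨hu, hsign⟩
  exact ⟨hsign, by simpa [dist_eq_norm] using hdiam _ hu _ hx⟩

-- The shift is found by averaging over all `u` in the ball.
lemma Bisects.exists_shift [NormedSpace ℝ E] [FiniteDimensional ℝ E] [μ.IsAddHaarMeasure]
    (h : Bisects μ f Q) (hf : Measurable f) (hne : ∀ᵐ x ∂μ, f x ≠ 0) (hQ : MeasurableSet Q)
    (hr : 0 < r) (hdiam : ∀ x ∈ Q, ∀ y ∈ Q, dist x y ≤ r) :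
    ∃ u, ‖u‖ ≤ r ∧ μ Q ^ 2 ≤ 2 * μ (Metric.closedBall (0 : E) r) *
      μ (Q ∩ {x | Real.sign (f (x + u)) ≠ Real.sign (f x)}) := by
  set B := Metric.closedBall (0 : E) r
  have hB : MeasurableSet B := Metric.isClosed_closedBall.measurableSet
  have hB0 : μ B ≠ 0 := (Metric.measure_closedBall_pos μ 0 hr).ne'
  have hB' : μ B ≠ ∞ := measure_closedBall_lt_top.ne
  have hQ' : μ Q ≠ ∞ :=
    (Metric.isBounded_iff.mpr ⟨r, fun x hx y hy => hdiam x hx y hy⟩).measure_lt_top.ne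
  set D := {z : E × E | Real.sign (f (z.1 + z.2)) ≠ Real.sign (f z.1)}
  have hs := measurable_realSign.comp hf
  have hD : MeasurableSet D := (measurableSet_eq_fun
    (hs.comp measurable_add) (hs.comp measurable_fst)).compl
  have hfiber : ∀ u, μ.restrict Q ((·, u) ⁻¹' D) =
      μ (Q ∩ {x | Real.sign (f (x + u)) ≠ Real.sign (f x)}) := fun u => by
    rw [Measure.restrict_apply' hQ, Set.inter_comm]
    rfl
  have hlower : μ Q ^ 2 ≤ 2 * (μ.restrict Q).prod (μ.restrict B) D := by
    rw [Measure.prod_apply hD, ← lintegral_const_mul _ (measurable_measure_prodMk_left hD)]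
    calc μ Q ^ 2 = ∫⁻ _ in Q, μ Q ∂μ := by rw [setLIntegral_const, sq]
      _ ≤ _ := lintegral_mono_ae ?_
    filter_upwards [ae_restrict_of_ae hne, ae_restrict_mem hQ] with x hfx hx
    rw [Measure.restrict_apply' hB]
    exact h.measure_le_shift hne hdiam hx hfx
  have hfinite : ∫⁻ u in B, μ.restrict Q ((·, u) ⁻¹' D) ∂μ ≠ ∞ := by
    refine ((setLIntegral_mono' (g := fun _ => μ Q) hB fun u _ => ?_).trans_lt ?_).ne
    · exact (measure_mono (Set.subset_univ _)).trans_eq (Measure.restrict_apply_univ Q)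
    · rw [setLIntegral_const]; exact ENNReal.mul_lt_top hQ'.lt_top hB'.lt_top
  obtain ⟨u, hu, hle⟩ := exists_setLAverage_le hB0 hB.nullMeasurableSet hfinite
  refine ⟨u, by simpa [B] using hu, hlower.trans ?_⟩
  rw [setLAverage_eq, ENNReal.div_le_iff hB0 hB', hfiber] at hle
  rw [Measure.prod_apply_symm hD, mul_assoc, mul_comm (μ B)]
  gcongr

end Shift

section Telescope

variable {E β ι : Type*} [AddCommMonoid E] [MeasurableSpace E]

lemma measure_ne_add_sum_le (μ : Measure E) (Q : Set E) (g : E → β) (w : ι → E)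
    {c : ℝ≥0∞}
    (hc : ∀ j T, μ (Q ∩ {x | g (x + ∑ i ∈ T, w i + w j) ≠ g (x + ∑ i ∈ T, w i)}) ≤ c)
    (s : Finset ι) : μ (Q ∩ {x | g (x + ∑ i ∈ s, w i) ≠ g x}) ≤ s.card * c := by
  classical
  induction s using Finset.induction with
  | empty => simp
  | insert j s hj ih =>
    have hsub : Q ∩ {x | g (x + ∑ i ∈ insert j s, w i) ≠ g x} ⊆
        Q ∩ {x | g (x + ∑ i ∈ s, w i) ≠ g x} ∪
          Q ∩ {x | g (x + ∑ i ∈ s, w i + w j) ≠ g (x + ∑ i ∈ s, w i)} := by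
      rintro x ⟨hx, hne⟩
      rw [Set.mem_ofPred_eq, Finset.sum_insert hj, add_comm (w j), ← add_assoc] at hne
      by_cases h : g (x + ∑ i ∈ s, w i) = g x
      · exact .inr ⟨hx, fun h' => hne (h'.trans h)⟩
      · exact .inl ⟨hx, h⟩
    calc _ ≤ _ := (measure_mono hsub).trans (measure_union_le _ _)
      _ ≤ s.card * c + c := add_le_add ih (hc j s)
      _ = (insert j s).card * c := by
        rw [Finset.card_insert_of_notMem hj, Nat.cast_succ, add_one_mul]

lemma exists_measure_ne_add_sum_le [Fintype ι] [Nonempty ι] (μ : Measure E) (Q : Set E)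
    (g : E → β) (w : ι → E) : ∃ j T, μ (Q ∩ {x | g (x + ∑ i, w i) ≠ g x}) ≤
      Fintype.card ι * μ (Q ∩ {x | g (x + ∑ i ∈ T, w i + w j) ≠ g (x + ∑ i ∈ T, w i)}) := by
  classical
  obtain ⟨⟨j, T⟩, hmax⟩ := Finite.exists_max fun z : ι × Finset ι =>
    μ (Q ∩ {x | g (x + ∑ i ∈ z.2, w i + w z.1) ≠ g (x + ∑ i ∈ z.2, w i)})
  exact ⟨j, T, measure_ne_add_sum_le μ Q g w (fun i U => hmax (i, U)) Finset.univ⟩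

end Telescope

section NearBasis

variable {ι : Type*} [Fintype ι]

lemma norm_le_sum_norm_apply (x : EuclideanSpace ℝ ι) : ‖x‖ ≤ ∑ i, ‖x i‖ := by
  classical
  calc ‖x‖ = ‖∑ i, x i • EuclideanSpace.basisFun ι ℝ i‖ := by
        conv_lhs => rw [← (EuclideanSpace.basisFun ι ℝ).sum_repr x]
        simp
    _ ≤ ∑ i, ‖x i • EuclideanSpace.basisFun ι ℝ i‖ := norm_sum_le _ _
    _ = ∑ i, ‖x i‖ := by simp [norm_smul]

variable [DecidableEq ι] {v : ι → EuclideanSpace ℝ ι} {δ : ℝ}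

lemma norm_sum_smul_sub_le (hv : ∀ j, ‖v j - EuclideanSpace.single j 1‖ ≤ δ)
    (t : EuclideanSpace ℝ ι) : ‖∑ j, t j • v j - t‖ ≤ Fintype.card ι * δ * ‖t‖ := by
  have ht : t = ∑ j, t j • EuclideanSpace.single j (1 : ℝ) := by
    simpa using ((EuclideanSpace.basisFun ι ℝ).sum_repr t).symm
  calc ‖∑ j, t j • v j - t‖ = ‖∑ j, t j • (v j - EuclideanSpace.single j 1)‖ := by
        conv_lhs => rw [ht]
        simp [smul_sub, Finset.sum_sub_distrib, ← ht]
    _ ≤ ∑ j, ‖t j • (v j - EuclideanSpace.single j 1)‖ := norm_sum_le _ _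
    _ ≤ ∑ _j : ι, ‖t‖ * δ := Finset.sum_le_sum fun j _ => by
        rw [norm_smul]
        exact mul_le_mul (PiLp.norm_apply_le t j) (hv j) (norm_nonneg _) (norm_nonneg _)
    _ = Fintype.card ι * δ * ‖t‖ := by
        rw [Finset.sum_const, Finset.card_univ, nsmul_eq_mul]; ring

lemma norm_le_two_mul_norm_sum_smul (hv : ∀ j, ‖v j - EuclideanSpace.single j 1‖ ≤ δ)
    (hδ : Fintype.card ι * δ ≤ 1 / 2) (t : EuclideanSpace ℝ ι) :
    ‖t‖ ≤ 2 * ‖∑ j, t j • v j‖ := by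
  have hclose : ‖∑ j, t j • v j - t‖ ≤ 1 / 2 * ‖t‖ := (norm_sum_smul_sub_le hv t).trans (by gcongr)
  have htri := norm_sub_norm_le t (∑ j, t j • v j)
  rw [norm_sub_rev] at htri
  linarith

lemma exists_eq_sum_smul_of_near_basis (hv : ∀ j, ‖v j - EuclideanSpace.single j 1‖ ≤ δ)
    (hδ : Fintype.card ι * δ ≤ 1 / 2) (u : EuclideanSpace ℝ ι) :
    ∃ t : EuclideanSpace ℝ ι, u = ∑ j, t j • v j ∧ ‖t‖ ≤ 2 * ‖u‖ := by
  let T : EuclideanSpace ℝ ι →ₗ[ℝ] EuclideanSpace ℝ ι :=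
    Fintype.linearCombination ℝ v ∘ₗ (WithLp.linearEquiv 2 ℝ (ι → ℝ)).toLinearMap
  have hT : ∀ t, T t = ∑ j, t j • v j := fun t => Fintype.linearCombination_apply ℝ v _
  have hinj : Function.Injective T := (injective_iff_map_eq_zero T).mpr fun t ht => by
    have := norm_le_two_mul_norm_sum_smul hv hδ t
    rw [← hT, ht] at this
    simpa using this
  obtain ⟨t, rfl⟩ := LinearMap.injective_iff_surjective.mp hinj u
  exact ⟨t, hT t, hT t ▸ norm_le_two_mul_norm_sum_smul hv hδ t⟩

end NearBasis

section Crossing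

variable {ι : Type*} [Fintype ι]

/-- The zero set of `f` crosses `Q` substantially in direction `v`: after translation by a vector
of length at most `R`, a displacement by at most `R` along `v` changes the sign of `f` on a part of
`Q` whose measure is at least `volume Q ^ 2 / κ`. -/
def IsCrossedAlong (f : EuclideanSpace ℝ ι → ℝ) (Q : Set (EuclideanSpace ℝ ι))
    (v : EuclideanSpace ℝ ι) (R : ℝ) (κ : ℝ≥0∞) : Prop :=
  ∃ (t : ℝ) (w : EuclideanSpace ℝ ι), |t| ≤ R ∧ ‖w‖ ≤ R ∧ volume Q ^ 2 ≤
    κ * volume (Q ∩ {x | Real.sign (f (x + w + t • v)) ≠ Real.sign (f (x + w))})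

lemma Bisects.exists_isCrossedAlong [DecidableEq ι] [Nonempty ι] {f : EuclideanSpace ℝ ι → ℝ}
    {Q : Set (EuclideanSpace ℝ ι)} (h : Bisects volume f Q) (hf : Measurable f)
    (hne : ∀ᵐ x, f x ≠ 0) (hQ : MeasurableSet Q) {r : ℝ} (hr : 0 < r)
    (hdiam : ∀ x ∈ Q, ∀ y ∈ Q, dist x y ≤ r) {v : ι → EuclideanSpace ℝ ι} {δ : ℝ}
    (hnorm : ∀ j, ‖v j‖ = 1) (hv : ∀ j, ‖v j - EuclideanSpace.single j 1‖ ≤ δ)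
    (hδ : Fintype.card ι * δ ≤ 1 / 2) :
    ∃ j, IsCrossedAlong f Q (v j) (Fintype.card ι * (2 * r))
      (2 * volume (Metric.closedBall (0 : EuclideanSpace ℝ ι) r) * Fintype.card ι) := by
  obtain ⟨u, hu, hshift⟩ := h.exists_shift hf hne hQ hr hdiam
  obtain ⟨t, rfl, ht⟩ := exists_eq_sum_smul_of_near_basis hv hδ u
  have hcoord : ∀ j, ‖t j‖ ≤ 2 * r := fun j => (PiLp.norm_apply_le t j).trans (by linarith)
  obtain ⟨j, T, hjT⟩ :=
    exists_measure_ne_add_sum_le volume Q (fun x => Real.sign (f x)) fun i => t i • v i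
  refine ⟨j, t j, ∑ i ∈ T, t i • v i, ?_, ?_, hshift.trans ?_⟩
  · have hcard : (1 : ℝ) ≤ Fintype.card ι := by exact_mod_cast Fintype.card_pos
    exact (hcoord j).trans (le_mul_of_one_le_left (by positivity) hcard)
  · calc ‖∑ i ∈ T, t i • v i‖ ≤ ∑ i ∈ T, ‖t i • v i‖ := norm_sum_le _ _
      _ ≤ ∑ i, ‖t i • v i‖ := Finset.sum_le_univ_sum_of_nonneg fun i => norm_nonneg _
      _ ≤ ∑ _i : ι, 2 * r := Finset.sum_le_sum fun i _ => by
        rw [norm_smul, hnorm, mul_one]; exact hcoord i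
      _ = Fintype.card ι * (2 * r) := by simp
  · rw [mul_assoc _ (Fintype.card ι : ℝ≥0∞)]
    gcongr

end Crossing

/-! ### Unit cubes -/

section UnitCube

variable {ι : Type*}

/-- The half-open unit cube with lowest corner at the lattice point `k`. -/
def unitCube (k : ι → ℤ) : Set (EuclideanSpace ℝ ι) :=
  WithLp.ofLp ⁻¹' Set.univ.pi fun i => Set.Ico (k i : ℝ) (k i + 1)

lemma mem_unitCube {k : ι → ℤ} {x : EuclideanSpace ℝ ι} : x ∈ unitCube k ↔ ∀ i, ⌊x i⌋ = k i := by
  simp [unitCube, Int.floor_eq_iff]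

lemma measurableSet_unitCube [Countable ι] {k : ι → ℤ} : MeasurableSet (unitCube k) :=
  WithLp.measurable_ofLp 2 _ (.univ_pi fun _ => measurableSet_Ico)

variable [Fintype ι] {k : ι → ℤ}

lemma volume_unitCube : volume (unitCube k) = 1 := by
  rw [unitCube, (PiLp.volume_preserving_ofLp ι).measure_preimage
    (MeasurableSet.univ_pi fun _ => measurableSet_Ico).nullMeasurableSet, Real.volume_pi_Ico]
  simp

lemma dist_le_card_of_mem_unitCube {x y : EuclideanSpace ℝ ι} (hx : x ∈ unitCube k)
    (hy : y ∈ unitCube k) : dist x y ≤ Fintype.card ι := by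
  rw [dist_eq_norm]
  calc ‖x - y‖ ≤ ∑ i, ‖(x - y) i‖ := norm_le_sum_norm_apply _
    _ ≤ ∑ _i : ι, (1 : ℝ) := Finset.sum_le_sum fun i _ =>
      (Int.abs_sub_lt_one_of_floor_eq_floor
        ((mem_unitCube.mp hx i).trans (mem_unitCube.mp hy i).symm)).le
    _ = Fintype.card ι := by simp

lemma card_le_of_unitCube_inter_closedBall_nonempty {S : Finset (ι → ℤ)}
    (x : EuclideanSpace ℝ ι) (r : ℕ)
    (hS : ∀ k ∈ S, (unitCube k ∩ Metric.closedBall x r).Nonempty) :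
    S.card ≤ (2 * r + 3) ^ Fintype.card ι := by
  classical
  have hsub : S ⊆ Fintype.piFinset fun i => Finset.Icc (⌊x i⌋ - r - 1) (⌊x i⌋ + r + 1) := by
    intro k hk
    obtain ⟨y, hy, hyx⟩ := hS k hk
    rw [mem_closedBall_iff_norm] at hyx
    rw [Fintype.mem_piFinset]
    intro i
    have habs : |y i - x i| ≤ r := (PiLp.norm_apply_le (y - x) i).trans hyx
    obtain ⟨hlo, hhi⟩ := abs_le.mp habs
    rw [← mem_unitCube.mp hy i, Finset.mem_Icc, Int.le_floor, ← Int.lt_add_one_iff,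
      Int.floor_lt]
    push_cast
    constructor <;> linarith [Int.floor_le (x i), Int.lt_floor_add_one (x i)]
  calc S.card ≤ _ := Finset.card_le_card hsub
    _ = ∏ i : ι, (2 * r + 3) := by
      rw [Fintype.card_piFinset]
      refine Finset.prod_congr rfl fun i _ => ?_
      rw [Int.card_Icc]
      omega
    _ = (2 * r + 3) ^ Fintype.card ι := by simp

lemma volume_le_of_forall_card_le {I : Set (EuclideanSpace ℝ ι)} {B : ℝ≥0∞}
    (h : ∀ S : Finset (ι → ℤ), (∀ k ∈ S, (unitCube k ∩ I).Nonempty) → (S.card : ℝ≥0∞) ≤ B) :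
    volume I ≤ B := by
  have hcover : I ⊆ ⋃ k : {k : ι → ℤ // (unitCube k ∩ I).Nonempty}, unitCube k.1 := fun x hx =>
    have hmem : x ∈ unitCube fun i => ⌊x i⌋ := mem_unitCube.mpr fun _ => rfl
    Set.mem_iUnion.mpr ⟨⟨_, x, hmem, hx⟩, hmem⟩
  refine (measure_mono hcover).trans ((measure_iUnion_le _).trans ?_)
  rw [ENNReal.tsum_eq_iSup_sum]
  refine iSup_le fun T => ?_
  have hT := h (T.map (.subtype _)) fun k hk => by
    obtain ⟨a, -, rfl⟩ := Finset.mem_map.mp hk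
    exact a.2
  simpa [volume_unitCube] using hT

end UnitCube

/-! ### Counting the cubes crossed along a line -/

section Counting

open MvPolynomial

lemma exists_dist_lt_of_mem_cylinder {n : ℕ} {p v q : EuclideanSpace ℝ (Fin n)} {r r' : ℝ}
    (hq : q ∈ cylinder p v r) (hr : r < r') : ∃ s : ℝ, dist q (p + s • v) < r' := by
  have hline : {y | ∃ t : ℝ, y = p + t • v}.Nonempty := ⟨_, 0, rfl⟩
  obtain ⟨_, ⟨s, rfl⟩, hs⟩ := (Metric.infDist_lt_iff hline).mp (lt_of_le_of_lt hq hr)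
  exact ⟨s, hs⟩

lemma exists_eq_zero_of_sign_ne {f : ℝ → ℝ} (hf : Continuous f) {s t : ℝ}
    (h : Real.sign (f t) ≠ Real.sign (f s)) : ∃ τ ∈ Set.uIcc s t, f τ = 0 := by
  suffices h0 : (0 : ℝ) ∈ Set.uIcc (f s) (f t) from intermediate_value_uIcc hf.continuousOn h0
  rcases lt_trichotomy (f s) 0 with hs | hs | hs <;>
    rcases lt_trichotomy (f t) 0 with ht | ht | ht <;>
    simp_all [Set.mem_uIcc, Real.sign_of_neg, Real.sign_of_pos, le_of_lt]

lemma sum_measure_le_of_ae_card_le {X κ : Type*} [MeasurableSpace X] {μ : Measure X}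
    {S : Finset κ} {T : κ → Set X} {B : Set X} (hT : ∀ k ∈ S, MeasurableSet (T k))
    (hB : ∀ k ∈ S, T k ⊆ B) {M : ℕ}
    (hM : ∀ᵐ x ∂μ, ∀ S' ⊆ S, (∀ k ∈ S', x ∈ T k) → S'.card ≤ M) :
    ∑ k ∈ S, μ (T k) ≤ M * μ B := by
  classical
  calc ∑ k ∈ S, μ (T k) = ∑ k ∈ S, ∫⁻ x in B, (T k).indicator 1 x ∂μ := by
        refine Finset.sum_congr rfl fun k hk => ?_
        rw [lintegral_indicator_one (hT k hk), Measure.restrict_apply (hT k hk),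
          Set.inter_eq_left.mpr (hB k hk)]
    _ = ∫⁻ x in B, ∑ k ∈ S, (T k).indicator 1 x ∂μ :=
      (lintegral_finsetSum' _ fun k hk => (measurable_one.indicator (hT k hk)).aemeasurable).symm
    _ ≤ ∫⁻ _ in B, M ∂μ := by
      refine lintegral_mono_ae ?_
      filter_upwards [ae_restrict_of_ae hM] with x hx
      simpa [Set.indicator_apply] using
        hx {k ∈ S | x ∈ T k} (Finset.filter_subset _ S) fun k hk => (Finset.mem_filter.mp hk).2
    _ = M * μ B := setLIntegral_const B _

variable {n : ℕ} {P : MvPolynomial (Fin n) ℝ} {p v : EuclideanSpace ℝ (Fin n)} {R : ℝ} {κ : ℝ≥0∞}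

lemma exists_root_restrictLine_of_sign_ne {y : EuclideanSpace ℝ (Fin n)} {s t : ℝ}
    (h : Real.sign (eval (y + s • v + t • v).ofLp P) ≠ Real.sign (eval (y + s • v).ofLp P)) :
    ∃ τ, (restrictLine P y v).IsRoot τ ∧ |τ - s| ≤ |t| := by
  have hline : ∀ τ : ℝ, (restrictLine P y v).eval τ = eval (y + τ • v).ofLp P := fun τ =>
    eval_restrictLine P y v τ
  rw [add_assoc, ← add_smul, ← hline, ← hline] at h
  obtain ⟨τ, hτ, hroot⟩ := exists_eq_zero_of_sign_ne (restrictLine P y v).continuous h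
  exact ⟨τ, hroot, by simpa using Set.abs_sub_left_of_mem_uIcc hτ⟩

lemma IsCrossedAlong.exists_translate {k : Fin n → ℤ}
    (h : IsCrossedAlong (fun x => eval x.ofLp P) (unitCube k) v R κ) (hv : ‖v‖ = 1) {s r : ℝ}
    (hs : (unitCube k ∩ Metric.closedBall (p + s • v) r).Nonempty) :
    ∃ T ⊆ Metric.closedBall p (n + r + R), MeasurableSet T ∧ 1 ≤ κ * volume T ∧
      ∀ y ∈ T, ∃ τ, (restrictLine P y v).IsRoot τ ∧
        (unitCube k ∩ Metric.closedBall (p + τ • v) (R + r)).Nonempty := by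
  obtain ⟨t, w, ht, hw, hcross⟩ := h
  obtain ⟨z, hzk, hz⟩ := hs
  set g := fun x : EuclideanSpace ℝ (Fin n) => Real.sign (eval x.ofLp P)
  have hg : Measurable g := measurable_realSign.comp
    ((continuous_eval P).comp (PiLp.continuous_ofLp 2 _)).measurable
  set U := unitCube k ∩ {x | g (x + w + t • v) ≠ g (x + w)}
  have hU : MeasurableSet U := measurableSet_unitCube.inter
    (measurableSet_eq_fun (hg.comp (by fun_prop)) (hg.comp (by fun_prop))).compl
  refine ⟨(· + (s • v - w)) ⁻¹' U, ?_, measurable_add_const _ hU, ?_, ?_⟩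
  · rintro y ⟨hyk, -⟩
    have hyz := dist_le_card_of_mem_unitCube hyk hzk
    rw [Fintype.card_fin, dist_eq_norm] at hyz
    rw [mem_closedBall_iff_norm] at hz ⊢
    calc ‖y - p‖ = ‖(y + (s • v - w) - z) + (z - (p + s • v)) + w‖ := by congr 1; abel
      _ ≤ _ := norm_add₃_le
      _ ≤ n + r + R := by gcongr
  · rw [measure_preimage_add_right]
    simpa [volume_unitCube] using hcross
  · rintro y ⟨-, hsign⟩
    have hshift : y + (s • v - w) + w = y + s • v := by abel
    rw [Set.mem_ofPred_eq, hshift] at hsign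
    obtain ⟨τ, hroot, hτ⟩ := exists_root_restrictLine_of_sign_ne hsign
    refine ⟨τ, hroot, z, hzk, ?_⟩
    rw [mem_closedBall_iff_norm] at hz ⊢
    calc ‖z - (p + τ • v)‖ = ‖(s - τ) • v + (z - (p + s • v))‖ := by
          congr 1; rw [sub_smul]; abel
      _ ≤ ‖(s - τ) • v‖ + ‖z - (p + s • v)‖ := norm_add_le _ _
      _ ≤ R + r := by
        rw [norm_smul, hv, mul_one, Real.norm_eq_abs, abs_sub_comm]
        exact add_le_add (hτ.trans ht) hz

lemma card_le_of_root_near {q : Polynomial ℝ} (hq : q ≠ 0) {S : Finset (Fin n → ℤ)} {r : ℕ}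
    (hS : ∀ k ∈ S, ∃ τ, q.IsRoot τ ∧
      (unitCube k ∩ Metric.closedBall (p + τ • v) r).Nonempty) :
    S.card ≤ q.natDegree * (2 * r + 3) ^ n := by
  classical
  have hsub : S ⊆ q.roots.toFinset.biUnion fun τ =>
      {k ∈ S | (unitCube k ∩ Metric.closedBall (p + τ • v) r).Nonempty} := fun k hk => by
    obtain ⟨τ, hroot, hτ⟩ := hS k hk
    simp only [Finset.mem_biUnion, Multiset.mem_toFinset, Polynomial.mem_roots hq,
      Finset.mem_filter]
    exact ⟨τ, hroot, hk, hτ⟩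
  calc S.card ≤ _ := Finset.card_le_card hsub
    _ ≤ q.roots.toFinset.card * (2 * r + 3) ^ n :=
      Finset.card_biUnion_le_card_mul _ _ _ fun τ _ => by
        simpa using card_le_of_unitCube_inter_closedBall_nonempty (p + τ • v) r
          fun k hk => (Finset.mem_filter.mp hk).2
    _ ≤ q.natDegree * (2 * r + 3) ^ n := by
      gcongr
      exact (Multiset.toFinset_card_le _).trans q.card_roots'

/-- A bound, per unit of degree, for the number of unit cubes at distance at most `r` from a given
line that the zero set of a polynomial crosses along that line, with parameters `R` and `κ`. -/
noncomputable def crossingConst (n R r : ℕ) (κ : ℝ≥0∞) : ℝ≥0∞ :=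
  κ * (2 * (R + r) + 3) ^ n *
    volume (Metric.closedBall (0 : EuclideanSpace ℝ (Fin n)) (n + r + R))

lemma crossingConst_ne_top (n R r : ℕ) (hκ : κ ≠ ∞) : crossingConst n R r κ ≠ ∞ :=
  ENNReal.mul_ne_top (ENNReal.mul_ne_top hκ (by finiteness)) measure_closedBall_lt_top.ne

lemma card_le_of_forall_isCrossedAlong (hP : P ≠ 0) (hv : ‖v‖ = 1) {R r : ℕ}
    {S : Finset (Fin n → ℤ)}
    (hS : ∀ k ∈ S, ∃ s : ℝ, (unitCube k ∩ Metric.closedBall (p + s • v) r).Nonempty)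
    (hcross : ∀ k ∈ S, IsCrossedAlong (fun x => eval x.ofLp P) (unitCube k) v R κ) :
    (S.card : ℝ≥0∞) ≤ crossingConst n R r κ * P.totalDegree := by
  classical
  choose! s hs using hS
  choose! T hTball hTmeas hTvol hTroot using fun k hk =>
    (hcross k hk).exists_translate hv (hs k hk)
  have hM : ∀ᵐ y : EuclideanSpace ℝ (Fin n), ∀ S' ⊆ S, (∀ k ∈ S', y ∈ T k) →
      S'.card ≤ P.totalDegree * (2 * (R + r) + 3) ^ n := by
    filter_upwards [(PiLp.volume_preserving_ofLp (Fin n)).quasiMeasurePreserving.ae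
      (ae_eval_ne_zero hP)] with y hy S' hS' hyT
    have hne : restrictLine P y v ≠ 0 := fun h0 => hy <| by
      simpa [h0] using (eval_restrictLine P y v 0).symm
    refine (card_le_of_root_near (p := p) (v := v) hne fun k hk => ?_).trans
      (Nat.mul_le_mul_right _ (natDegree_restrictLine_le P y v))
    simpa using hTroot k (hS' hk) y (hyT k hk)
  calc (S.card : ℝ≥0∞) = ∑ k ∈ S, 1 := by simp
    _ ≤ ∑ k ∈ S, κ * volume (T k) := Finset.sum_le_sum hTvol
    _ = κ * ∑ k ∈ S, volume (T k) := by rw [Finset.mul_sum]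
    _ ≤ κ * ((P.totalDegree * (2 * (R + r) + 3) ^ n : ℕ) *
        volume (Metric.closedBall p (n + r + R))) := by
      gcongr
      exact sum_measure_le_of_ae_card_le hTmeas hTball hM
    _ = _ := by
      rw [Measure.addHaar_closedBall_center, crossingConst]
      push_cast
      ring

end Counting

section Kakeya

open MvPolynomial
open scoped NNReal

lemma card_le_card_mul_of_forall_exists_isCrossedAlong {n : ℕ} {β : Type*} [Fintype β]
    {P : MvPolynomial (Fin n) ℝ} (hP : P ≠ 0) {p v : β → EuclideanSpace ℝ (Fin n)}
    (hnorm : ∀ b, ‖v b‖ = 1) {R r : ℕ} {κ : ℝ≥0∞} {S : Finset (Fin n → ℤ)}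
    (hS : ∀ k ∈ S, ∃ b, (∃ s : ℝ, (unitCube k ∩ Metric.closedBall (p b + s • v b) r).Nonempty) ∧
      IsCrossedAlong (fun x => eval x.ofLp P) (unitCube k) (v b) R κ) :
    (S.card : ℝ≥0∞) ≤ Fintype.card β * (crossingConst n R r κ * P.totalDegree) := by
  classical
  let crossedBy : β → Finset (Fin n → ℤ) := fun b =>
    {k ∈ S | (∃ s : ℝ, (unitCube k ∩ Metric.closedBall (p b + s • v b) r).Nonempty) ∧
      IsCrossedAlong (fun x => eval x.ofLp P) (unitCube k) (v b) R κ}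
  have hcover : S ⊆ Finset.univ.biUnion crossedBy := fun k hk => by
    obtain ⟨b, hb⟩ := hS k hk
    exact Finset.mem_biUnion.mpr ⟨b, Finset.mem_univ b, Finset.mem_filter.mpr ⟨hk, hb⟩⟩
  calc (S.card : ℝ≥0∞) ≤ ∑ b, ((crossedBy b).card : ℝ≥0∞) := by
        exact_mod_cast (Finset.card_le_card hcover).trans Finset.card_biUnion_le
    _ ≤ ∑ _b : β, _ := Finset.sum_le_sum fun b _ =>
      card_le_of_forall_isCrossedAlong hP (hnorm b) (fun k hk => (Finset.mem_filter.mp hk).2.1)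
        fun k hk => (Finset.mem_filter.mp hk).2.2
    _ = _ := by rw [Finset.sum_const, Finset.card_univ, nsmul_eq_mul]

lemma exists_polynomial_forall_exists_isCrossedAlong {n d : ℕ} [NeZero n]
    {S : Finset (Fin n → ℤ)} (hd : S.card < (d + 1) ^ n) {δ : ℝ} (hδ : n * δ ≤ 1 / 2) :
    ∃ P : MvPolynomial (Fin n) ℝ, P ≠ 0 ∧ P.totalDegree ≤ n * d ∧
      ∀ k ∈ S, ∀ v : Fin n → EuclideanSpace ℝ (Fin n), (∀ j, ‖v j‖ = 1) →
        (∀ j, ‖v j - EuclideanSpace.single j 1‖ ≤ δ) →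
        ∃ j, IsCrossedAlong (fun x => eval x.ofLp P) (unitCube k) (v j) (n * (2 * n))
          (2 * volume (Metric.closedBall (0 : EuclideanSpace ℝ (Fin n)) n) * n) := by
  obtain ⟨P, hP, hdeg, hbisect⟩ := exists_polynomial_forall_bisects (n := n) (ι := S)
    (by simpa using hd) (Q := fun k => unitCube k.1) fun k => by simp [volume_unitCube]
  refine ⟨P, hP, hdeg, fun k hk v hnorm hv => ?_⟩
  have hmeas : Measurable fun x : EuclideanSpace ℝ (Fin n) => eval x.ofLp P :=
    ((continuous_eval P).comp (PiLp.continuous_ofLp 2 _)).measurable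
  have hne : ∀ᵐ x : EuclideanSpace ℝ (Fin n), eval x.ofLp P ≠ 0 :=
    (PiLp.volume_preserving_ofLp (Fin n)).quasiMeasurePreserving.ae (ae_eval_ne_zero hP)
  simpa using (hbisect ⟨k, hk⟩).exists_isCrossedAlong hmeas hne measurableSet_unitCube
    (by simpa using NeZero.pos n) (fun x hx y hy => dist_le_card_of_mem_unitCube hx hy) hnorm hv
    (by simpa using hδ)

lemma exists_forall_card_le_mul (n : ℕ) [NeZero n] {δ : ℝ} (hδ : n * δ ≤ 1 / 2) :
    ∃ K : ℝ≥0, ∀ (A : ℕ) (p v : Fin n → Fin A → EuclideanSpace ℝ (Fin n)),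
      (∀ j a, ‖v j a‖ = 1) → (∀ j a, ‖v j a - EuclideanSpace.single j 1‖ ≤ δ) →
      ∀ S : Finset (Fin n → ℤ),
        (∀ k ∈ S, (unitCube k ∩ ⋂ j, ⋃ a, cylinder (p j a) (v j a) 1).Nonempty) →
        ∀ d : ℕ, S.card < (d + 1) ^ n → (S.card : ℝ) ≤ K * A * d := by
  set κ := 2 * volume (Metric.closedBall (0 : EuclideanSpace ℝ (Fin n)) n) * n
  set R := n * (2 * n)
  have hκ : κ ≠ ∞ :=
    ENNReal.mul_ne_top (ENNReal.mul_ne_top (by simp) measure_closedBall_lt_top.ne) (by simp)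
  set K := (crossingConst n R 2 κ).toNNReal
  have hK : K = crossingConst n R 2 κ := ENNReal.coe_toNNReal (crossingConst_ne_top n R 2 hκ)
  refine ⟨n * n * K, fun A p v hnorm hv S hS d hd => ?_⟩
  obtain ⟨P, hP, hdeg, hcross⟩ := exists_polynomial_forall_exists_isCrossedAlong hd hδ
  have hcrossed : ∀ k ∈ S, ∃ b : Fin n × Fin A,
      (∃ s : ℝ, (unitCube k ∩
        Metric.closedBall (p b.1 b.2 + s • v b.1 b.2) (2 : ℕ)).Nonempty) ∧
      IsCrossedAlong (fun x => eval x.ofLp P) (unitCube k) (v b.1 b.2) R κ := by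
    intro k hk
    obtain ⟨q, hqk, hq⟩ := hS k hk
    choose a ha using fun j => Set.mem_iUnion.mp (Set.mem_iInter.mp hq j)
    obtain ⟨j, hj⟩ := hcross k hk (fun j => v j (a j)) (fun j => hnorm j _) fun j => hv j _
    obtain ⟨s, hs⟩ := exists_dist_lt_of_mem_cylinder (ha j) one_lt_two
    exact ⟨(j, a j), ⟨s, q, hqk, by simpa using hs.le⟩, by simpa [R] using hj⟩
  have hcard := card_le_card_mul_of_forall_exists_isCrossedAlong hP
    (p := fun b : Fin n × Fin A => p b.1 b.2) (fun b => hnorm b.1 b.2) hcrossed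
  have hcard : S.card ≤ (n * A : ℝ) * (K * P.totalDegree) := by
    simp only [Fintype.card_prod, Fintype.card_fin] at hcard
    rw [← hK] at hcard
    exact_mod_cast hcard
  calc (S.card : ℝ) ≤ n * A * (K * P.totalDegree) := hcard
    _ ≤ n * A * (K * (n * d : ℕ)) := by gcongr
    _ = (n * n * K : ℝ≥0) * A * d := by push_cast; ring

lemma le_rpow_of_forall_lt_pow {n N : ℕ} (hn : 2 ≤ n) {c : ℝ} (hc : 0 ≤ c)
    (h : ∀ d : ℕ, N < (d + 1) ^ n → (N : ℝ) ≤ c * d) :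
    (N : ℝ) ≤ c ^ ((n : ℝ) / (n - 1)) := by
  obtain ⟨m, rfl⟩ := Nat.exists_eq_add_of_le' (Nat.one_le_of_lt hn)
  have hm : (m : ℝ) ≠ 0 := by exact_mod_cast (Nat.lt_of_succ_lt_succ hn).ne'
  set r : ℝ := (N : ℝ) ^ ((m + 1 : ℕ) : ℝ)⁻¹
  have hr : 0 ≤ r := by positivity
  have hrN : r ^ (m + 1) = N := Real.rpow_inv_natCast_pow N.cast_nonneg m.succ_ne_zero
  rcases hr.eq_or_lt with hr0 | hr0
  · rw [← hrN, ← hr0, zero_pow m.succ_ne_zero]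
    positivity
  have hN : N < (⌊r⌋₊ + 1) ^ (m + 1) := by
    have := pow_lt_pow_left₀ (Nat.lt_floor_add_one r) hr m.succ_ne_zero
    rw [hrN] at this
    exact_mod_cast this
  have hrc : r ^ m ≤ c := by
    refine le_of_mul_le_mul_right ?_ hr0
    rw [← pow_succ, hrN]
    exact (h _ hN).trans (by gcongr; exact Nat.floor_le hr)
  calc (N : ℝ) = (r ^ m) ^ (((m + 1 : ℕ) : ℝ) / ((m + 1 : ℕ) - 1)) := by
        rw [← Real.rpow_natCast r m, ← Real.rpow_mul hr, Nat.cast_succ, add_sub_cancel_right,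
          mul_div_cancel₀ _ hm, ← Nat.cast_succ, Real.rpow_natCast, hrN]
    _ ≤ c ^ (((m + 1 : ℕ) : ℝ) / ((m + 1 : ℕ) - 1)) := by
      gcongr
      rw [Nat.cast_succ, add_sub_cancel_right]
      positivity

end Kakeya

/-- **Theorem 1 (Guth).** Unit cylinders `T_{j,a}` (`1 ≤ j ≤ n`, `1 ≤ a ≤ A`), each with unit core
direction `v j a` within `(100 n)⁻¹` of the coordinate vector `e_j`.  Then the set `I` of points
lying in at least one cylinder from each family has volume at most `C(n) A^{n/(n-1)}`. -/
theorem kakeya_axes (n : ℕ) (hn : 2 ≤ n) :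
    ∃ C : ℝ, 0 < C ∧
      ∀ (A : ℕ), 1 ≤ A →
      ∀ (p v : Fin n → Fin A → EuclideanSpace ℝ (Fin n)),
        (∀ j a, ‖v j a‖ = 1) →
        (∀ j a, ‖v j a - EuclideanSpace.single j (1:ℝ)‖ ≤ (100 * (n:ℝ))⁻¹) →
        volume (⋂ j : Fin n, ⋃ a : Fin A, cylinder (p j a) (v j a) 1)
          ≤ ENNReal.ofReal (C * (A : ℝ) ^ ((n:ℝ) / ((n:ℝ) - 1))) := by
  have : NeZero n := ⟨by lia⟩
  have hδ : (n : ℝ) * (100 * (n : ℝ))⁻¹ ≤ 1 / 2 := by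
    field_simp
    norm_num
  obtain ⟨K, hK⟩ := exists_forall_card_le_mul n hδ
  refine ⟨(K + 1) ^ ((n : ℝ) / (n - 1)), by positivity, fun A _ p v hnorm hv => ?_⟩
  refine volume_le_of_forall_card_le fun S hS => ?_
  rw [← ENNReal.ofReal_natCast, ← Real.mul_rpow (by positivity) A.cast_nonneg]
  refine ENNReal.ofReal_le_ofReal (le_rpow_of_forall_lt_pow hn (by positivity) fun d hd => ?_)
  calc (S.card : ℝ) ≤ K * A * d := hK A p v hnorm hv S hS d hd
    _ ≤ (K + 1) * A * d := by gcongr; exact le_add_of_nonneg_right zero_le_one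
end
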